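/- Suppose T is Σ1-ill and m ≥ 1. Then there exists a Σ1 provability predicate PR_T(x) of T such that: (1) for any modal formula A and any arithmetical interpretation f based on PR_T(x), if N⁺A_{m,0} ⊢ A then T ⊢ f(A); and (2) there exists an arithmetical interpretation f based on PR_T(x) such that for every modal formula A, N⁺A_{m,0} ⊢ A if and only if T ⊢ f(A). -/

import Mathlib

/-!
A *pattern* is a finite set `g` of numbers, to be read as the guess that `PR(n)` is false exactly
for `n ∈ g`. It decides some formulas by strong Kleene evaluation, and it refutes a theorem if it
makes a theorem false. A *trigger* is a pattern with a witness that it refutes a theorem, such that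
no element of the pattern is the code of a formula with a proof below the trigger, and such that it
differs from all smaller patterns that violate some `A → □ᵐA`. Fix a false `Σ₁` sentence `σ` that
`T` proves. Using the fixed point theorem, let `PR(x)` say that

* `x` has a proof that comes before all triggers and all witnesses of `σ`, or
* a witness of `σ` comes before all triggers, or
* the first trigger comes no later than all witnesses of `σ`, and `x` is not in its pattern.

There is no standard trigger: in a model of `T` the first trigger would be standard, so it would
precede the witnesses of `σ`, which are nonstandard, and `PR` would behave as its pattern guesses,
which makes a theorem of `T` false. Since `σ` is false too, `PR` defines provability in `ℕ`.

In a model of `T` there is a witness of `σ`. If it precedes all triggers, everything is provable.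
Otherwise the first trigger is nonstandard, so its pattern differs from all standard patterns that
violate `A → □ᵐA`, which yields `A → □ᵐA` for all standard `A`.

For the exactness, a modal formula that is not provable is false under some propositional valuation
of the variables and the boxed formulas under which all theorems of the logic are true. The set of
its variables and boxed subformulas that are false under this valuation yields a pattern. If the
interpretation of the formula were provable, this pattern would give a standard trigger.
-/

namespace PLN

/-! ### Modal formulas and the logics N⁺A_{m,n} -/

/-- Formulas of modal propositional logic. -/
inductive MFml : Type
  | var : ℕ → MFml
  | bot : MFml
  | neg : MFml → MFml
  | and : MFml → MFml → MFml
  | or : MFml → MFml → MFml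
  | imp : MFml → MFml → MFml
  | box : MFml → MFml
  deriving DecidableEq

/-- `boxIter n A` is `□ⁿ A`, where `□⁰ A = A` and `□^(k+1) A = □ (□ᵏ A)`. -/
def boxIter : ℕ → MFml → MFml
  | 0, A => A
  | k + 1, A => .box (boxIter k A)

/-- Evaluation of a modal formula under a valuation of its "propositional atoms"
(propositional variables, and boxed formulas); used to define propositional tautologies
in the modal language. -/
def MFml.evalTC (v : MFml → Prop) : MFml → Prop
  | .bot => False
  | .neg A => ¬ A.evalTC v
  | .and A B => A.evalTC v ∧ B.evalTC v
  | .or A B => A.evalTC v ∨ B.evalTC v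
  | .imp A B => A.evalTC v → B.evalTC v
  | A => v A

/-- Propositional tautologies in the modal language. -/
def MTaut (A : MFml) : Prop := ∀ v, A.evalTC v

/-- Provability in the logic `N⁺A_{m,n}`: the pure logic of necessitation `N`
(propositional tautologies, modus ponens, necessitation) together with the axiom scheme
`□ⁿA → □ᵐA` and the rule `Ros□` (from `¬□A` infer `¬□□A`). -/
inductive NAProves (m n : ℕ) : MFml → Prop
  | taut {A} : MTaut A → NAProves m n A
  | acc (A) : NAProves m n (.imp (boxIter n A) (boxIter m A))
  | mp {A B} : NAProves m n (.imp A B) → NAProves m n A → NAProves m n B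
  | nec {A} : NAProves m n A → NAProves m n (.box A)
  | ros {A} : NAProves m n (.neg (.box A)) → NAProves m n (.neg (.box (.box A)))

/-- `IsSub B A` : `B` is a subformula of `A`. -/
inductive IsSub : MFml → MFml → Prop
  | refl (A) : IsSub A A
  | neg {B A} : IsSub B A → IsSub B (.neg A)
  | andL {B A C} : IsSub B A → IsSub B (.and A C)
  | andR {B A C} : IsSub B C → IsSub B (.and A C)
  | orL {B A C} : IsSub B A → IsSub B (.or A C)
  | orR {B A C} : IsSub B C → IsSub B (.or A C)
  | impL {B A C} : IsSub B A → IsSub B (.imp A C)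
  | impR {B A C} : IsSub B C → IsSub B (.imp A C)
  | box {B A} : IsSub B A → IsSub B (.box A)

/-! ### N-frames and N-models -/

/-- An N-model on a set `W` of worlds: an N-frame (a binary relation `≺_B` on `W`
for each modal formula `B`) together with a valuation of propositional variables. -/
structure NModel (W : Type) where
  rel : MFml → W → W → Prop
  val : W → ℕ → Prop

/-- The forcing relation of an N-model:
`x ⊩ □B` iff every `y` with `x ≺_B y` satisfies `y ⊩ B`. -/
def NModel.Forces {W : Type} (M : NModel W) : W → MFml → Prop
  | x, .var p => M.val x p
  | _, .bot => False
  | x, .neg A => ¬ NModel.Forces M x A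
  | x, .and A B => NModel.Forces M x A ∧ NModel.Forces M x B
  | x, .or A B => NModel.Forces M x A ∨ NModel.Forces M x B
  | x, .imp A B => NModel.Forces M x A → NModel.Forces M x B
  | x, .box A => ∀ y, M.rel A x y → NModel.Forces M y A

/-- The relations `≺_B^k` : `x ≺_B^0 y` iff `x = y`, and
`x ≺_B^(k+1) y` iff `∃ w, x ≺_{□ᵏB} w` and `w ≺_B^k y`. -/
def NModel.relIter {W : Type} (M : NModel W) (B : MFml) : ℕ → W → W → Prop
  | 0, x, y => x = y
  | k + 1, x, y => ∃ w, M.rel (boxIter k B) x w ∧ NModel.relIter M B k w y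

/-- `(m,n)`-accessibility of (the frame of) an N-model. -/
def NModel.Accessible {W : Type} (M : NModel W) (m n : ℕ) : Prop :=
  ∀ (B : MFml) (x y : W), NModel.relIter M B m x y → NModel.relIter M B n x y

/-! ### The language of first-order arithmetic -/

/-- Terms of the language of arithmetic, with de Bruijn variables. -/
inductive ATerm : Type
  | var : ℕ → ATerm
  | zero : ATerm
  | succ : ATerm → ATerm
  | add : ATerm → ATerm → ATerm
  | mul : ATerm → ATerm → ATerm
  deriving DecidableEq

/-- Formulas of the language of arithmetic (with `≤` primitive), de Bruijn variables. -/
inductive AFml : Type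
  | eq : ATerm → ATerm → AFml
  | le : ATerm → ATerm → AFml
  | neg : AFml → AFml
  | and : AFml → AFml → AFml
  | or : AFml → AFml → AFml
  | imp : AFml → AFml → AFml
  | all : AFml → AFml
  | ex : AFml → AFml
  deriving DecidableEq

/-- Lift (shift up by one) the variables `≥ c` of a term. -/
def ATerm.lift (c : ℕ) : ATerm → ATerm
  | .var n => .var (if n < c then n else n + 1)
  | .zero => .zero
  | .succ t => .succ (t.lift c)
  | .add t s => .add (t.lift c) (s.lift c)
  | .mul t s => .mul (t.lift c) (s.lift c)

/-- Simultaneous substitution in terms. -/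
def ATerm.substAll (σ : ℕ → ATerm) : ATerm → ATerm
  | .var n => σ n
  | .zero => .zero
  | .succ t => .succ (t.substAll σ)
  | .add t s => .add (t.substAll σ) (s.substAll σ)
  | .mul t s => .mul (t.substAll σ) (s.substAll σ)

/-- Pushing a substitution under a binder. -/
def liftSub (σ : ℕ → ATerm) : ℕ → ATerm
  | 0 => .var 0
  | n + 1 => (σ n).lift 0

/-- Lift (shift up by one) the free variables `≥ c` of a formula. -/
def AFml.lift (c : ℕ) : AFml → AFml
  | .eq t s => .eq (t.lift c) (s.lift c)
  | .le t s => .le (t.lift c) (s.lift c)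
  | .neg φ => .neg (φ.lift c)
  | .and φ ψ => .and (φ.lift c) (ψ.lift c)
  | .or φ ψ => .or (φ.lift c) (ψ.lift c)
  | .imp φ ψ => .imp (φ.lift c) (ψ.lift c)
  | .all φ => .all (φ.lift (c + 1))
  | .ex φ => .ex (φ.lift (c + 1))

/-- Simultaneous (capture-avoiding) substitution in formulas. -/
def AFml.substAll (σ : ℕ → ATerm) : AFml → AFml
  | .eq t s => .eq (t.substAll σ) (s.substAll σ)
  | .le t s => .le (t.substAll σ) (s.substAll σ)
  | .neg φ => .neg (φ.substAll σ)
  | .and φ ψ => .and (φ.substAll σ) (ψ.substAll σ)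
  | .or φ ψ => .or (φ.substAll σ) (ψ.substAll σ)
  | .imp φ ψ => .imp (φ.substAll σ) (ψ.substAll σ)
  | .all φ => .all (φ.substAll (liftSub σ))
  | .ex φ => .ex (φ.substAll (liftSub σ))

def subst0Env (t : ATerm) : ℕ → ATerm
  | 0 => t
  | n + 1 => .var n

def subst2Env (t s : ATerm) : ℕ → ATerm
  | 0 => t
  | 1 => s
  | n + 2 => .var n

/-- Substitute the term `t` for the free variable `0` (decrementing other variables). -/
def AFml.subst0 (φ : AFml) (t : ATerm) : AFml := φ.substAll (subst0Env t)

/-- Substitute the terms `t`, `s` for the free variables `0`, `1` simultaneously. -/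
def AFml.subst2 (φ : AFml) (t s : ATerm) : AFml := φ.substAll (subst2Env t s)

/-- Substitute `S(var 0)` for `var 0`, leaving all other free variables unchanged. -/
def succSubst (φ : AFml) : AFml :=
  φ.substAll fun n => if n = 0 then .succ (.var 0) else .var n

/-- All variables of a term are `< c`. -/
def ATerm.FreeLt (c : ℕ) : ATerm → Prop
  | .var n => n < c
  | .zero => True
  | .succ t => t.FreeLt c
  | .add t s => t.FreeLt c ∧ s.FreeLt c
  | .mul t s => t.FreeLt c ∧ s.FreeLt c

/-- All free variables of a formula are `< c`; `FreeLt 0 φ` says that `φ` is a sentence. -/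
def AFml.FreeLt (c : ℕ) : AFml → Prop
  | .eq t s => t.FreeLt c ∧ s.FreeLt c
  | .le t s => t.FreeLt c ∧ s.FreeLt c
  | .neg φ => φ.FreeLt c
  | .and φ ψ => φ.FreeLt c ∧ ψ.FreeLt c
  | .or φ ψ => φ.FreeLt c ∧ ψ.FreeLt c
  | .imp φ ψ => φ.FreeLt c ∧ ψ.FreeLt c
  | .all φ => φ.FreeLt (c + 1)
  | .ex φ => φ.FreeLt (c + 1)

/-- The numeral `n̄`. -/
def numeral : ℕ → ATerm
  | 0 => .zero
  | n + 1 => .succ (numeral n)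

/-- A Gödel numbering of terms. -/
def ATerm.code : ATerm → ℕ
  | .var n => Nat.pair 0 n
  | .zero => Nat.pair 1 0
  | .succ t => Nat.pair 2 t.code
  | .add t s => Nat.pair 3 (Nat.pair t.code s.code)
  | .mul t s => Nat.pair 4 (Nat.pair t.code s.code)

/-- A Gödel numbering of formulas. -/
def AFml.code : AFml → ℕ
  | .eq t s => Nat.pair 0 (Nat.pair t.code s.code)
  | .le t s => Nat.pair 1 (Nat.pair t.code s.code)
  | .neg φ => Nat.pair 2 φ.code
  | .and φ ψ => Nat.pair 3 (Nat.pair φ.code ψ.code)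
  | .or φ ψ => Nat.pair 4 (Nat.pair φ.code ψ.code)
  | .imp φ ψ => Nat.pair 5 (Nat.pair φ.code ψ.code)
  | .all φ => Nat.pair 6 φ.code
  | .ex φ => Nat.pair 7 φ.code

/-- `⌜φ⌝`, the numeral of the Gödel number of `φ`. -/
def gnum (φ : AFml) : ATerm := numeral φ.code

/-- For a formula `P(x)` (with free variable `var 0`), `P.appNum φ` is `P(⌜φ⌝)`. -/
def AFml.appNum (P φ : AFml) : AFml := P.subst0 (gnum φ)

/-- Iterated application of a predicate: `iterPred P k φ = P(⌜P(⌜⋯P(⌜φ⌝)⋯⌝)⌝)` (`k` times). -/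
def iterPred (P : AFml) : ℕ → AFml → AFml
  | 0, φ => φ
  | k + 1, φ => P.appNum (iterPred P k φ)

/-! ### Satisfaction in the standard model -/

def ATerm.val (ρ : ℕ → ℕ) : ATerm → ℕ
  | .var n => ρ n
  | .zero => 0
  | .succ t => t.val ρ + 1
  | .add t s => t.val ρ + s.val ρ
  | .mul t s => t.val ρ * s.val ρ

def consEnv (a : ℕ) (ρ : ℕ → ℕ) : ℕ → ℕ
  | 0 => a
  | n + 1 => ρ n

/-- Satisfaction in the standard model `ℕ` under an environment `ρ`. -/
def AFml.Sat (ρ : ℕ → ℕ) : AFml → Prop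
  | .eq t s => t.val ρ = s.val ρ
  | .le t s => t.val ρ ≤ s.val ρ
  | .neg φ => ¬ φ.Sat ρ
  | .and φ ψ => φ.Sat ρ ∧ ψ.Sat ρ
  | .or φ ψ => φ.Sat ρ ∨ ψ.Sat ρ
  | .imp φ ψ => φ.Sat ρ → ψ.Sat ρ
  | .all φ => ∀ a, φ.Sat (consEnv a ρ)
  | .ex φ => ∃ a, φ.Sat (consEnv a ρ)

/-- `ℕ ⊨ φ`. -/
def TrueN (φ : AFml) : Prop := φ.Sat fun _ => 0

/-! ### The arithmetical hierarchy: Δ₀, Σ₁, Π₁ -/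

/-- `Δ₀` formulas: every quantifier is bounded. -/
inductive IsDelta0 : AFml → Prop
  | eq (t s : ATerm) : IsDelta0 (.eq t s)
  | le (t s : ATerm) : IsDelta0 (.le t s)
  | neg {φ} : IsDelta0 φ → IsDelta0 (.neg φ)
  | and {φ ψ} : IsDelta0 φ → IsDelta0 ψ → IsDelta0 (.and φ ψ)
  | or {φ ψ} : IsDelta0 φ → IsDelta0 ψ → IsDelta0 (.or φ ψ)
  | imp {φ ψ} : IsDelta0 φ → IsDelta0 ψ → IsDelta0 (.imp φ ψ)
  | ball {φ : AFml} (t : ATerm) : IsDelta0 φ → IsDelta0 (.all (.imp (.le (.var 0) (ATerm.lift 0 t)) φ))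
  | bex {φ : AFml} (t : ATerm) : IsDelta0 φ → IsDelta0 (.ex (.and (.le (.var 0) (ATerm.lift 0 t)) φ))

mutual
  /-- `Σ₁` formulas. -/
  inductive IsSigma1 : AFml → Prop
    | delta0 {φ} : IsDelta0 φ → IsSigma1 φ
    | and {φ ψ} : IsSigma1 φ → IsSigma1 ψ → IsSigma1 (.and φ ψ)
    | or {φ ψ} : IsSigma1 φ → IsSigma1 ψ → IsSigma1 (.or φ ψ)
    | ex {φ} : IsSigma1 φ → IsSigma1 (.ex φ)
    | negPi {φ} : IsPi1 φ → IsSigma1 (.neg φ)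
    | impPiSigma {φ ψ} : IsPi1 φ → IsSigma1 ψ → IsSigma1 (.imp φ ψ)
  /-- `Π₁` formulas. -/
  inductive IsPi1 : AFml → Prop
    | delta0 {φ} : IsDelta0 φ → IsPi1 φ
    | and {φ ψ} : IsPi1 φ → IsPi1 ψ → IsPi1 (.and φ ψ)
    | or {φ ψ} : IsPi1 φ → IsPi1 ψ → IsPi1 (.or φ ψ)
    | all {φ} : IsPi1 φ → IsPi1 (.all φ)
    | negSigma {φ} : IsSigma1 φ → IsPi1 (.neg φ)
    | impSigmaPi {φ ψ} : IsSigma1 φ → IsPi1 ψ → IsPi1 (.imp φ ψ)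
end

/-! ### A Hilbert-style proof system for first-order arithmetic -/

/-- Evaluation of an arithmetical formula under a valuation of its "propositionally atomic"
subformulas (atomic or quantified formulas); used for propositional tautologies and
tautological consequence. -/
def AFml.evalProp (v : AFml → Prop) : AFml → Prop
  | .neg φ => ¬ φ.evalProp v
  | .and φ ψ => φ.evalProp v ∧ ψ.evalProp v
  | .or φ ψ => φ.evalProp v ∨ ψ.evalProp v
  | .imp φ ψ => φ.evalProp v → ψ.evalProp v
  | φ => v φ

/-- Propositional tautologies in the language of arithmetic. -/
def ATaut (φ : AFml) : Prop := ∀ v, φ.evalProp v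

/-- `φ` is a tautological consequence of the set `X` of formulas. -/
def TC (X : Set AFml) (φ : AFml) : Prop :=
  ∀ v : AFml → Prop, (∀ ψ ∈ X, ψ.evalProp v) → φ.evalProp v

def iffF (φ ψ : AFml) : AFml := .and (.imp φ ψ) (.imp ψ φ)

/-- Hilbert-style provability from the set of axioms `Γ` in classical first-order
logic with equality. -/
inductive Proves (Γ : Set AFml) : AFml → Prop
  | ax {φ} : φ ∈ Γ → Proves Γ φ
  | taut {φ} : ATaut φ → Proves Γ φ
  | mp {φ ψ} : Proves Γ (.imp φ ψ) → Proves Γ φ → Proves Γ ψ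
  | allE (φ : AFml) (t : ATerm) : Proves Γ (.imp (.all φ) (φ.subst0 t))
  | exI (φ : AFml) (t : ATerm) : Proves Γ (.imp (φ.subst0 t) (.ex φ))
  | allImp (φ ψ : AFml) : Proves Γ (.imp (.all (.imp φ ψ)) (.imp (.all φ) (.all ψ)))
  | vacAll (φ : AFml) : Proves Γ (.imp φ (.all (AFml.lift 0 φ)))
  | exDef (φ : AFml) : Proves Γ (iffF (.ex φ) (.neg (.all (.neg φ))))
  | gen {φ} : Proves Γ φ → Proves Γ (.all φ)
  | eqRefl (t : ATerm) : Proves Γ (.eq t t)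
  | eqSubst (φ : AFml) (t s : ATerm) : Proves Γ (.imp (.eq t s) (.imp (φ.subst0 t) (φ.subst0 s)))

/-! ### Peano arithmetic -/

/-- The axioms of Peano arithmetic. -/
inductive PAax : AFml → Prop
  | succNeZero : PAax (.all (.neg (.eq (.succ (.var 0)) .zero)))
  | succInj :
      PAax (.all (.all (.imp (.eq (.succ (.var 1)) (.succ (.var 0))) (.eq (.var 1) (.var 0)))))
  | addZero : PAax (.all (.eq (.add (.var 0) .zero) (.var 0)))
  | addSucc :
      PAax (.all (.all (.eq (.add (.var 1) (.succ (.var 0))) (.succ (.add (.var 1) (.var 0))))))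
  | mulZero : PAax (.all (.eq (.mul (.var 0) .zero) .zero))
  | mulSucc :
      PAax (.all (.all (.eq (.mul (.var 1) (.succ (.var 0)))
        (.add (.mul (.var 1) (.var 0)) (.var 1)))))
  | leDef :
      PAax (.all (.all (iffF (.le (.var 1) (.var 0))
        (.ex (.eq (.add (.var 0) (.var 2)) (.var 1))))))
  | ind (φ : AFml) :
      PAax (.imp (.and (φ.subst0 .zero) (.all (.imp φ (succSubst φ)))) (.all φ))

/-- Peano arithmetic, as a set of axioms. -/
def PA : Set AFml := {φ | PAax φ}

/-- The sentence `0 = 1`. -/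
def botFml : AFml := .eq .zero (.succ .zero)

/-- `t < s`, as the formula `S(t) ≤ s`. -/
def ltF (t s : ATerm) : AFml := .le (.succ t) s

/-- `Δ₁(PA)` formulas: `Σ₁` formulas which are `PA`-provably equivalent to a `Π₁` formula. -/
def IsDelta1PA (φ : AFml) : Prop :=
  IsSigma1 φ ∧ ∃ ψ, IsPi1 ψ ∧ Proves PA (iffF φ ψ)

/-! ### Theories, provability predicates, arithmetical interpretations -/

/-- `Tax` is primitive recursively axiomatized (via the Gödel numbering). -/
def PrAxiomatized (Tax : Set AFml) : Prop :=
  ∃ p : ℕ → Bool, Primrec p ∧ ∀ φ : AFml, φ ∈ Tax ↔ p φ.code = true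

/-- `Σ₁`-soundness: every `T`-provable `Σ₁` sentence is true in `ℕ`. -/
def Sigma1Sound (Tax : Set AFml) : Prop :=
  ∀ φ : AFml, IsSigma1 φ → φ.FreeLt 0 → Proves Tax φ → TrueN φ

/-- `P` is a provability predicate of `T`: a formula `P(x)` with at most the free
variable `x` such that for every formula `φ`, `T ⊢ φ` iff `PA ⊢ P(⌜φ⌝)`. -/
def IsProvPred (Tax : Set AFml) (P : AFml) : Prop :=
  P.FreeLt 1 ∧ ∀ φ : AFml, Proves Tax φ ↔ Proves PA (P.appNum φ)

/-- `f` is an arithmetical interpretation based on the predicate `P`. -/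
def IsInterp (P : AFml) (f : MFml → AFml) : Prop :=
  (∀ i, (f (.var i)).FreeLt 0) ∧
  f .bot = botFml ∧
  (∀ A, f (.neg A) = .neg (f A)) ∧
  (∀ A B, f (.and A B) = .and (f A) (f B)) ∧
  (∀ A B, f (.or A B) = .or (f A) (f B)) ∧
  (∀ A B, f (.imp A B) = .imp (f A) (f B)) ∧
  (∀ A, f (.box A) = P.appNum (f A))

/-- The provability logic of the predicate `P` (relative to the theory `Tax`). -/
def PL (Tax : Set AFml) (P : AFml) : Set MFml :=
  {A | ∀ f : MFml → AFml, IsInterp P f → Proves Tax (f A)}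

/-- The formulas with a `T`-proof of code `≤ s` (relative to a proof enumeration `prf`). -/
def PTset (prf : ℕ → Option AFml) (s : ℕ) : Set AFml :=
  {φ | ∃ y ≤ s, prf y = some φ}

/-! ### Semantics and substitution -/

/-- Structures for the language of arithmetic. -/
structure AStr where
  Carrier : Type
  zero : Carrier
  succ : Carrier → Carrier
  add : Carrier → Carrier → Carrier
  mul : Carrier → Carrier → Carrier
  le : Carrier → Carrier → Prop

instance : CoeSort AStr Type := ⟨AStr.Carrier⟩

/-- The environment `a, ρ 0, ρ 1, …`, used to interpret the scope of a de Bruijn binder. -/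
def scons {α : Type} (a : α) (ρ : ℕ → α) : ℕ → α
  | 0 => a
  | n + 1 => ρ n

section

variable {α : Type} (a : α) (ρ : ℕ → α)

@[simp] theorem scons_zero : scons a ρ 0 = a := rfl
@[simp] theorem scons_succ (n : ℕ) : scons a ρ (n + 1) = ρ n := rfl
@[simp] theorem scons_one : scons a ρ 1 = ρ 0 := rfl
@[simp] theorem scons_two : scons a ρ 2 = ρ 1 := rfl

end

theorem consEnv_eq_scons (a : ℕ) (ρ : ℕ → ℕ) : consEnv a ρ = scons a ρ := by
  funext n; cases n <;> rfl

/-- The value of a term in a structure. -/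
def ATerm.valIn (M : AStr) (ρ : ℕ → M) : ATerm → M
  | .var n => ρ n
  | .zero => M.zero
  | .succ t => M.succ (t.valIn M ρ)
  | .add t s => M.add (t.valIn M ρ) (s.valIn M ρ)
  | .mul t s => M.mul (t.valIn M ρ) (s.valIn M ρ)

/-- Satisfaction of a formula in a structure. -/
def AFml.SatIn (M : AStr) : (ℕ → M) → AFml → Prop
  | ρ, .eq t s => t.valIn M ρ = s.valIn M ρ
  | ρ, .le t s => M.le (t.valIn M ρ) (s.valIn M ρ)
  | ρ, .neg φ => ¬ AFml.SatIn M ρ φ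
  | ρ, .and φ ψ => AFml.SatIn M ρ φ ∧ AFml.SatIn M ρ ψ
  | ρ, .or φ ψ => AFml.SatIn M ρ φ ∨ AFml.SatIn M ρ ψ
  | ρ, .imp φ ψ => AFml.SatIn M ρ φ → AFml.SatIn M ρ ψ
  | ρ, .all φ => ∀ a, AFml.SatIn M (scons a ρ) φ
  | ρ, .ex φ => ∃ a, AFml.SatIn M (scons a ρ) φ

/-- The standard model of arithmetic. -/
abbrev stdStr : AStr := ⟨ℕ, 0, Nat.succ, Nat.add, Nat.mul, Nat.le⟩

theorem ATerm.valIn_stdStr (ρ : ℕ → ℕ) (t : ATerm) : t.valIn stdStr ρ = t.val ρ := by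
  induction t <;> simp only [valIn, val, *] <;> rfl

theorem AFml.satIn_stdStr (φ : AFml) (ρ : ℕ → ℕ) : φ.SatIn stdStr ρ ↔ φ.Sat ρ := by
  induction φ generalizing ρ with
  | eq t s => simp only [SatIn, Sat, ATerm.valIn_stdStr]
  | le t s => simp only [SatIn, Sat, ATerm.valIn_stdStr]; rfl
  | all φ ih => simp only [SatIn, Sat, consEnv_eq_scons, ih]
  | ex φ ih => simp only [SatIn, Sat, consEnv_eq_scons, ih]
  | _ => simp only [SatIn, Sat, *]

/-- The substitution whose effect is `lift c`. -/
def liftEnv (c n : ℕ) : ATerm := .var (if n < c then n else n + 1)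

theorem liftSub_liftEnv (c : ℕ) : liftSub (liftEnv c) = liftEnv (c + 1) := by
  funext n
  cases n with
  | zero => simp [liftSub, liftEnv]
  | succ n => by_cases h : n < c <;> simp [liftSub, liftEnv, ATerm.lift, h]

theorem ATerm.lift_eq_substAll (c : ℕ) (t : ATerm) : t.lift c = t.substAll (liftEnv c) := by
  induction t <;> simp only [lift, substAll, liftEnv, *]

theorem AFml.lift_eq_substAll (c : ℕ) (φ : AFml) : φ.lift c = φ.substAll (liftEnv c) := by
  induction φ generalizing c <;>
    simp only [lift, substAll, liftSub_liftEnv, ATerm.lift_eq_substAll, *]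

theorem ATerm.substAll_substAll (σ τ : ℕ → ATerm) (t : ATerm) :
    (t.substAll σ).substAll τ = t.substAll fun i => (σ i).substAll τ := by
  induction t <;> simp only [substAll, *]

theorem liftSub_comp (σ τ : ℕ → ATerm) :
    (fun i => (liftSub σ i).substAll (liftSub τ)) = liftSub fun i => (σ i).substAll τ := by
  funext n
  cases n with
  | zero => rfl
  | succ n =>
    simp only [liftSub, ATerm.lift_eq_substAll, ATerm.substAll_substAll]
    congr 1
    funext i
    simp [liftEnv, ATerm.substAll, liftSub, ATerm.lift_eq_substAll]

theorem AFml.substAll_substAll (φ : AFml) (σ τ : ℕ → ATerm) :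
    (φ.substAll σ).substAll τ = φ.substAll fun i => (σ i).substAll τ := by
  induction φ generalizing σ τ <;>
    simp only [substAll, ATerm.substAll_substAll, liftSub_comp, *]

theorem ATerm.substAll_congr {σ τ : ℕ → ATerm} {N : ℕ} (h : ∀ i < N, σ i = τ i) {t : ATerm}
    (ht : t.FreeLt N) : t.substAll σ = t.substAll τ := by
  induction t with
  | var n => exact h n ht
  | zero => rfl
  | succ t ih => simp only [substAll, ih ht]
  | add t s iht ihs => simp only [substAll, iht ht.1, ihs ht.2]
  | mul t s iht ihs => simp only [substAll, iht ht.1, ihs ht.2]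

theorem liftSub_congr {σ τ : ℕ → ATerm} {N : ℕ} (h : ∀ i < N, σ i = τ i) :
    ∀ i < N + 1, liftSub σ i = liftSub τ i
  | 0, _ => rfl
  | i + 1, hi => by simp only [liftSub, h i (Nat.lt_of_succ_lt_succ hi)]

theorem AFml.substAll_congr {φ : AFml} {σ τ : ℕ → ATerm} {N : ℕ} (h : ∀ i < N, σ i = τ i)
    (hφ : φ.FreeLt N) : φ.substAll σ = φ.substAll τ := by
  induction φ generalizing σ τ N with
  | eq t s => simp only [substAll, ATerm.substAll_congr h hφ.1, ATerm.substAll_congr h hφ.2]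
  | le t s => simp only [substAll, ATerm.substAll_congr h hφ.1, ATerm.substAll_congr h hφ.2]
  | neg φ ih => simp only [substAll, ih h hφ]
  | and φ ψ ihφ ihψ => simp only [substAll, ihφ h hφ.1, ihψ h hφ.2]
  | or φ ψ ihφ ihψ => simp only [substAll, ihφ h hφ.1, ihψ h hφ.2]
  | imp φ ψ ihφ ihψ => simp only [substAll, ihφ h hφ.1, ihψ h hφ.2]
  | all φ ih => simp only [substAll, ih (liftSub_congr h) hφ]
  | ex φ ih => simp only [substAll, ih (liftSub_congr h) hφ]

theorem ATerm.substAll_var (t : ATerm) : t.substAll .var = t := by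
  induction t <;> simp only [substAll, *]

theorem liftSub_var : liftSub .var = .var := by
  funext n; cases n <;> rfl

theorem AFml.substAll_var (φ : AFml) : φ.substAll .var = φ := by
  induction φ <;> simp only [substAll, ATerm.substAll_var, liftSub_var, *]

theorem ATerm.valIn_substAll (M : AStr) (ρ : ℕ → M) (σ : ℕ → ATerm) (t : ATerm) :
    (t.substAll σ).valIn M ρ = t.valIn M fun i => (σ i).valIn M ρ := by
  induction t <;> simp only [substAll, valIn, *]

theorem ATerm.valIn_lift_zero (M : AStr) (ρ : ℕ → M) (a : M) (t : ATerm) :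
    (t.lift 0).valIn M (scons a ρ) = t.valIn M ρ := by
  rw [lift_eq_substAll, valIn_substAll]
  rfl

theorem valIn_liftSub (M : AStr) (ρ : ℕ → M) (a : M) (σ : ℕ → ATerm) :
    (fun i => (liftSub σ i).valIn M (scons a ρ)) = scons a fun i => (σ i).valIn M ρ := by
  funext n
  cases n with
  | zero => rfl
  | succ n => simp only [liftSub, ATerm.valIn_lift_zero, scons]

theorem AFml.satIn_substAll (M : AStr) (φ : AFml) (ρ : ℕ → M) (σ : ℕ → ATerm) :
    (φ.substAll σ).SatIn M ρ ↔ φ.SatIn M fun i => (σ i).valIn M ρ := by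
  induction φ generalizing ρ σ <;>
    simp only [substAll, SatIn, ATerm.valIn_substAll, valIn_liftSub, *]

theorem AFml.satIn_subst0 (M : AStr) (φ : AFml) (ρ : ℕ → M) (t : ATerm) :
    (φ.subst0 t).SatIn M ρ ↔ φ.SatIn M (scons (t.valIn M ρ) ρ) := by
  have henv : (fun i => (subst0Env t i).valIn M ρ) = scons (t.valIn M ρ) ρ := by
    funext n; cases n <;> rfl
  rw [subst0, satIn_substAll, henv]

theorem AFml.satIn_lift_zero (M : AStr) (φ : AFml) (ρ : ℕ → M) (a : M) :
    (φ.lift 0).SatIn M (scons a ρ) ↔ φ.SatIn M ρ := by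
  rw [lift_eq_substAll, satIn_substAll]
  rfl

theorem satIn_succSubst (M : AStr) (φ : AFml) (ρ : ℕ → M) (a : M) :
    (succSubst φ).SatIn M (scons a ρ) ↔ φ.SatIn M (scons (M.succ a) ρ) := by
  have henv : (fun i => (if i = 0 then ATerm.succ (.var 0) else .var i : ATerm).valIn M (scons a ρ))
      = scons (M.succ a) ρ := by
    funext n; cases n <;> simp [ATerm.valIn]
  rw [succSubst, AFml.satIn_substAll, henv]

theorem ATerm.FreeLt.mono {t : ATerm} {N K : ℕ} (hNK : N ≤ K) (h : t.FreeLt N) : t.FreeLt K := by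
  induction t with
  | var n => exact lt_of_lt_of_le h hNK
  | zero => trivial
  | succ t ih => exact ih h
  | add t s iht ihs => exact ⟨iht h.1, ihs h.2⟩
  | mul t s iht ihs => exact ⟨iht h.1, ihs h.2⟩

theorem AFml.FreeLt.mono {φ : AFml} {N K : ℕ} (hNK : N ≤ K) (h : φ.FreeLt N) : φ.FreeLt K := by
  induction φ generalizing N K with
  | eq t s => exact ⟨h.1.mono hNK, h.2.mono hNK⟩
  | le t s => exact ⟨h.1.mono hNK, h.2.mono hNK⟩
  | neg φ ih => exact ih hNK h
  | and φ ψ ihφ ihψ => exact ⟨ihφ hNK h.1, ihψ hNK h.2⟩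
  | or φ ψ ihφ ihψ => exact ⟨ihφ hNK h.1, ihψ hNK h.2⟩
  | imp φ ψ ihφ ihψ => exact ⟨ihφ hNK h.1, ihψ hNK h.2⟩
  | all φ ih => exact ih (Nat.succ_le_succ hNK) h
  | ex φ ih => exact ih (Nat.succ_le_succ hNK) h

theorem exists_and_of_monotone {p q : ℕ → Prop} (hp : ∀ N K, N ≤ K → p N → p K)
    (hq : ∀ N K, N ≤ K → q N → q K) : (∃ N, p N) → (∃ N, q N) → ∃ N, p N ∧ q N
  | ⟨a, ha⟩, ⟨b, hb⟩ => ⟨max a b, hp _ _ (le_max_left a b) ha, hq _ _ (le_max_right a b) hb⟩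

theorem ATerm.exists_freeLt (t : ATerm) : ∃ N, t.FreeLt N := by
  induction t with
  | var n => exact ⟨n + 1, Nat.lt_succ_self n⟩
  | zero => exact ⟨0, trivial⟩
  | succ _ ih => exact ih
  | add t s iht ihs | mul t s iht ihs =>
    exact exists_and_of_monotone (fun _ _ => FreeLt.mono) (fun _ _ => FreeLt.mono) iht ihs

theorem AFml.exists_freeLt (φ : AFml) : ∃ N, φ.FreeLt N := by
  induction φ with
  | eq t s | le t s =>
    exact exists_and_of_monotone (fun _ _ => ATerm.FreeLt.mono) (fun _ _ => ATerm.FreeLt.mono)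
      t.exists_freeLt s.exists_freeLt
  | neg _ ih => exact ih
  | and φ ψ ihφ ihψ | or φ ψ ihφ ihψ | imp φ ψ ihφ ihψ =>
    exact exists_and_of_monotone (fun _ _ => FreeLt.mono) (fun _ _ => FreeLt.mono) ihφ ihψ
  | all φ ih | ex φ ih => exact let ⟨N, h⟩ := ih; ⟨N, FreeLt.mono (φ := φ) N.le_succ h⟩

theorem ATerm.FreeLt.substAll {N K : ℕ} {σ : ℕ → ATerm} (hσ : ∀ i < N, (σ i).FreeLt K) {t : ATerm}
    (h : t.FreeLt N) : (t.substAll σ).FreeLt K := by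
  induction t with
  | var n => exact hσ n h
  | zero => trivial
  | succ t ih => exact ih h
  | add t s iht ihs => exact ⟨iht h.1, ihs h.2⟩
  | mul t s iht ihs => exact ⟨iht h.1, ihs h.2⟩

theorem freeLt_liftSub {N K : ℕ} {σ : ℕ → ATerm} (hσ : ∀ i < N, (σ i).FreeLt K) :
    ∀ i < N + 1, (liftSub σ i).FreeLt (K + 1)
  | 0, _ => Nat.succ_pos K
  | i + 1, hi => by
    simp only [liftSub, ATerm.lift_eq_substAll]
    exact (hσ i (Nat.lt_of_succ_lt_succ hi)).substAll fun _ => Nat.succ_lt_succ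

theorem AFml.FreeLt.substAll {φ : AFml} {N K : ℕ} {σ : ℕ → ATerm}
    (hσ : ∀ i < N, (σ i).FreeLt K) (h : φ.FreeLt N) : (φ.substAll σ).FreeLt K := by
  induction φ generalizing N K σ with
  | eq t s => exact ⟨h.1.substAll hσ, h.2.substAll hσ⟩
  | le t s => exact ⟨h.1.substAll hσ, h.2.substAll hσ⟩
  | neg φ ih => exact ih hσ h
  | and φ ψ ihφ ihψ => exact ⟨ihφ hσ h.1, ihψ hσ h.2⟩
  | or φ ψ ihφ ihψ => exact ⟨ihφ hσ h.1, ihψ hσ h.2⟩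
  | imp φ ψ ihφ ihψ => exact ⟨ihφ hσ h.1, ihψ hσ h.2⟩
  | all φ ih => exact ih (freeLt_liftSub hσ) h
  | ex φ ih => exact ih (freeLt_liftSub hσ) h

theorem AFml.freeLt_substAll (φ : AFml) {K : ℕ} {σ : ℕ → ATerm} (hσ : ∀ i, (σ i).FreeLt K) :
    (φ.substAll σ).FreeLt K :=
  let ⟨_, hN⟩ := φ.exists_freeLt
  hN.substAll fun i _ => hσ i

theorem freeLt_numeral (K : ℕ) : ∀ n, (numeral n).FreeLt K
  | 0 => trivial
  | n + 1 => freeLt_numeral K n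

theorem AFml.FreeLt.subst0 {φ : AFml} {K : ℕ} {t : ATerm} (h : φ.FreeLt (K + 1))
    (ht : t.FreeLt K) : (φ.subst0 t).FreeLt K :=
  h.substAll fun i hi => match i with
    | 0 => ht
    | _ + 1 => Nat.lt_of_succ_lt_succ hi

theorem ATerm.code_injective : Function.Injective ATerm.code := by
  intro t
  induction t <;> intro s h <;> cases s <;> simp [code, Nat.pair_eq_pair] at h ⊢ <;> grind

theorem AFml.code_injective : Function.Injective AFml.code := by
  intro φ
  induction φ <;> intro ψ h <;> cases ψ <;>
    simp [code, Nat.pair_eq_pair, ATerm.code_injective.eq_iff] at h ⊢ <;> grind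

/-! ### Soundness -/

theorem AFml.evalProp_satIn (M : AStr) (ρ : ℕ → M) (φ : AFml) :
    φ.evalProp (fun ψ => ψ.SatIn M ρ) ↔ φ.SatIn M ρ := by
  induction φ <;> simp only [evalProp, SatIn, *]

/-- `M` is a model of (the universal closures of) the formulas in `Γ`. -/
def IsModel (M : AStr) (Γ : Set AFml) : Prop := ∀ φ ∈ Γ, ∀ ρ, φ.SatIn M ρ

theorem Proves.satIn {M : AStr} {Γ : Set AFml} (hM : IsModel M Γ) {φ : AFml} (h : Proves Γ φ) :
    ∀ ρ, φ.SatIn M ρ := by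
  induction h with
  | ax h => exact hM _ h
  | taut h => exact fun ρ => (AFml.evalProp_satIn M ρ _).1 (h _)
  | mp _ _ ih₁ ih₂ => exact fun ρ => ih₁ ρ (ih₂ ρ)
  | allE φ t => exact fun ρ h => (φ.satIn_subst0 M ρ t).2 (h _)
  | exI φ t => exact fun ρ h => ⟨_, (φ.satIn_subst0 M ρ t).1 h⟩
  | allImp φ ψ => exact fun ρ h₁ h₂ a => h₁ a (h₂ a)
  | vacAll φ => exact fun ρ h a => (φ.satIn_lift_zero M ρ a).2 h
  | exDef φ => exact fun ρ => ⟨fun ⟨a, ha⟩ h => h a ha, not_forall_not.1⟩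
  | gen _ ih => exact fun ρ a => ih _
  | eqRefl t => exact fun ρ => rfl
  | eqSubst φ t s =>
    intro ρ heq h
    rw [AFml.satIn_subst0] at h ⊢
    rwa [← (heq : t.valIn M ρ = s.valIn M ρ)]

/-! ### Completeness -/

theorem Proves.tauto {Γ : Set AFml} {φ : AFml}
    (h : ∀ v, φ.evalProp v := by intro v; simp only [AFml.evalProp]; tauto) : Proves Γ φ :=
  .taut h

theorem Proves.weaken {Γ : Set AFml} {φ ψ : AFml} (hφ : Proves Γ φ)
    (h : ∀ v, φ.evalProp v → ψ.evalProp v := by intro v; simp only [AFml.evalProp]; tauto) :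
    Proves Γ ψ :=
  .mp (.taut fun v => h v) hφ

theorem Proves.weaken₂ {Γ : Set AFml} {φ χ ψ : AFml} (hφ : Proves Γ φ) (hχ : Proves Γ χ)
    (h : ∀ v, φ.evalProp v → χ.evalProp v → ψ.evalProp v := by
      intro v; simp only [AFml.evalProp]; tauto) : Proves Γ ψ :=
  .mp (.mp (.taut fun v => h v) hφ) hχ

theorem ATerm.lift_zero_substAll (t s : ATerm) : (t.lift 0).substAll (subst0Env s) = t := by
  rw [lift_eq_substAll, substAll_substAll]
  exact t.substAll_var

theorem Proves.substAll_lt {Γ : Set AFml} {χ : AFml} (h : Proves Γ χ) (N : ℕ) (σ : ℕ → ATerm) :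
    Proves Γ (χ.substAll fun i => if i < N then σ i else .var (i - N)) := by
  induction N generalizing σ with
  | zero => simpa [AFml.substAll_var] using h
  | succ N ih =>
    have hinst := Proves.mp (.allE _ (σ N)) (.gen (ih fun i => (σ i).lift 0))
    rw [AFml.subst0, AFml.substAll_substAll] at hinst
    convert hinst using 2
    funext i
    rcases lt_trichotomy i N with hi | rfl | hi
    · simp [hi, hi.trans N.lt_succ_self, ATerm.lift_zero_substAll]
    · simp [ATerm.substAll, subst0Env]
    · obtain ⟨j, rfl⟩ := Nat.exists_eq_add_of_lt hi
      have hj : N + (j + 1) - (N + 1) = j := by omega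
      simp [add_assoc, ATerm.substAll, subst0Env, hj]

theorem Proves.substAll {Γ : Set AFml} {χ : AFml} (h : Proves Γ χ) (σ : ℕ → ATerm) :
    Proves Γ (χ.substAll σ) := by
  obtain ⟨N, hN⟩ := χ.exists_freeLt
  rw [← AFml.substAll_congr (σ := fun i => if i < N then σ i else .var (i - N))
    (fun i hi => if_pos hi) hN]
  exact h.substAll_lt N σ

theorem Proves.imp_all_of_fresh {Γ : Set AFml} {ψ φ : AFml} {v : ℕ} (hψ : ψ.FreeLt v)
    (hφ : φ.FreeLt (v + 1)) (h : Proves Γ (.imp ψ (φ.subst0 (.var v)))) :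
    Proves Γ (.imp ψ (.all φ)) := by
  let σ : ℕ → ATerm := fun i => if i = v then .var 0 else .var (i + 1)
  have hψσ : ψ.substAll σ = ψ.lift 0 := by
    rw [AFml.lift_eq_substAll]
    exact AFml.substAll_congr (fun i hi => by simp [σ, liftEnv, hi.ne]) hψ
  have hφσ : (φ.subst0 (.var v)).substAll σ = φ := by
    rw [AFml.subst0, AFml.substAll_substAll]
    refine (AFml.substAll_congr (fun i hi => ?_) hφ).trans φ.substAll_var
    cases i with
    | zero => simp [σ, subst0Env, ATerm.substAll]
    | succ i => simp [σ, subst0Env, ATerm.substAll, (Nat.lt_of_succ_lt_succ hi).ne]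
  have hgen := (h.substAll σ).gen
  rw [AFml.substAll, hψσ, hφσ] at hgen
  exact (Proves.vacAll ψ).weaken₂ (.mp (.allImp _ _) hgen)

/-- Consistency of a formula with `Γ`. -/
def Consistent (Γ : Set AFml) (ψ : AFml) : Prop := ¬ Proves Γ (.neg ψ)

/-- Relative to `Γ`, the formula `ψ` implies `χ`, or it implies `¬χ` and, in case `χ` is `∀φ`, the
negation of an instance of `φ`. -/
def HenkinDecides (Γ : Set AFml) (ψ χ : AFml) : Prop :=
  Proves Γ (.imp ψ χ) ∨ (Proves Γ (.imp ψ (.neg χ)) ∧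
    ∀ φ, χ = .all φ → ∃ t, Proves Γ (.imp ψ (.neg (φ.subst0 t))))

theorem Consistent.exists_neg_instance {Γ : Set AFml} {ψ φ : AFml} (h : Consistent Γ ψ)
    (hφ : ¬ Consistent Γ (.and ψ (.all φ))) :
    ∃ t, Consistent Γ (.and ψ (.neg (φ.subst0 t))) := by
  obtain ⟨v, hψv, hφv⟩ := exists_and_of_monotone (fun _ _ => AFml.FreeLt.mono)
    (fun _ _ => AFml.FreeLt.mono) ψ.exists_freeLt φ.exists_freeLt
  refine ⟨.var v, fun hinst => h ?_⟩
  have hall : Proves Γ (.imp ψ (.all φ)) :=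
    .imp_all_of_fresh hψv (hφv.mono v.le_succ) hinst.weaken
  exact (not_not.1 hφ).weaken₂ hall

theorem Consistent.exists_henkinDecides {Γ : Set AFml} {ψ : AFml} (h : Consistent Γ ψ)
    (χ : AFml) : ∃ ψ', Consistent Γ ψ' ∧ Proves Γ (.imp ψ' ψ) ∧ HenkinDecides Γ ψ' χ := by
  by_cases hχ : Consistent Γ (.and ψ χ)
  · exact ⟨_, hχ, .tauto, .inl .tauto⟩
  by_cases hall : ∃ φ, χ = .all φ
  · obtain ⟨φ, rfl⟩ := hall
    obtain ⟨t, ht⟩ := h.exists_neg_instance hχ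
    exact ⟨_, ht, .tauto, .inr ⟨(Proves.allE φ t).weaken, by rintro _ ⟨⟩; exact ⟨t, .tauto⟩⟩⟩
  · exact ⟨.and ψ (.neg χ), fun hn => h ((not_not.1 hχ).weaken₂ hn), .tauto,
      .inr ⟨.tauto, fun φ hφ => (hall ⟨φ, hφ⟩).elim⟩⟩

instance : Countable AFml := ⟨AFml.code, AFml.code_injective⟩
instance : Nonempty AFml := ⟨botFml⟩

theorem Consistent.exists_henkin_chain {Γ : Set AFml} {ψ : AFml} (h : Consistent Γ ψ) :
    ∃ s : ℕ → AFml, s 0 = ψ ∧ (∀ n, Consistent Γ (s n)) ∧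
      (∀ n, Proves Γ (.imp (s (n + 1)) (s n))) ∧ ∀ χ, ∃ n, HenkinDecides Γ (s n) χ := by
  obtain ⟨e, he⟩ := exists_surjective_nat AFml
  choose f hcon himp hdec using fun θ : {θ // Consistent Γ θ} => θ.2.exists_henkinDecides
  let s : ℕ → {θ // Consistent Γ θ} :=
    fun n => Nat.rec ⟨ψ, h⟩ (fun n θ => ⟨f θ (e n), hcon θ (e n)⟩) n
  refine ⟨fun n => (s n).1, rfl, fun n => (s n).2, fun n => himp (s n) (e n), fun χ => ?_⟩
  obtain ⟨n, rfl⟩ := he χ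
  exact ⟨n + 1, hdec (s n) (e n)⟩

/-- `U` is a complete Henkin theory extending `Γ`: it is deductively closed, decides every formula,
and refutes an instance of every universal formula it refutes. -/
structure IsHenkin (Γ U : Set AFml) : Prop where
  thm : ∀ {χ}, Proves Γ χ → χ ∈ U
  mp : ∀ {χ θ}, .imp χ θ ∈ U → χ ∈ U → θ ∈ U
  neg_iff : ∀ {χ}, .neg χ ∈ U ↔ χ ∉ U
  wit : ∀ {φ}, .all φ ∉ U → ∃ t, .neg (φ.subst0 t) ∈ U

theorem Consistent.exists_isHenkin {Γ : Set AFml} {ψ : AFml} (h : Consistent Γ ψ) :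
    ∃ U, IsHenkin Γ U ∧ ψ ∈ U := by
  obtain ⟨s, hs₀, hcon, hstep, hdec⟩ := h.exists_henkin_chain
  have hmono : ∀ {n k χ}, n ≤ k → Proves Γ (.imp (s n) χ) → Proves Γ (.imp (s k) χ) := by
    intro n k χ hnk hχ
    induction hnk with
    | refl => exact hχ
    | step _ ih => exact (hstep _).weaken₂ ih
  have hjoin : ∀ {χ θ ζ}, (∀ v, χ.evalProp v → θ.evalProp v → ζ.evalProp v) →
      (∃ n, Proves Γ (.imp (s n) χ)) → (∃ n, Proves Γ (.imp (s n) θ)) →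
      ∃ n, Proves Γ (.imp (s n) ζ) := by
    rintro χ θ ζ hζ ⟨n, hn⟩ ⟨k, hk⟩
    exact ⟨max n k, (hmono (le_max_left n k) hn).weaken₂ (hmono (le_max_right n k) hk)
      fun v hχ hθ hs => hζ v (hχ hs) (hθ hs)⟩
  refine ⟨{χ | ∃ n, Proves Γ (.imp (s n) χ)}, ⟨fun hχ => ⟨0, hχ.weaken⟩,
    hjoin fun v => id, ⟨fun hneg hpos => ?_, fun hn => ?_⟩, fun {φ} hn => ?_⟩, 0, hs₀ ▸ .tauto⟩
  · obtain ⟨n, hn⟩ := hjoin (ζ := .neg (s 0)) (fun v hneg hpos => (hneg hpos).elim) hneg hpos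
    exact hcon n ((hmono n.zero_le (.tauto : Proves Γ (.imp (s 0) (s 0)))).weaken₂ hn)
  · obtain ⟨n, hχ | ⟨hχ, -⟩⟩ := hdec _
    · exact (hn ⟨n, hχ⟩).elim
    · exact ⟨n, hχ⟩
  · obtain ⟨n, hφ | ⟨-, hφ⟩⟩ := hdec (.all φ)
    · exact (hn ⟨n, hφ⟩).elim
    · exact (hφ φ rfl).imp fun t ht => ⟨n, ht⟩

theorem AFml.substAll_liftSub_subst0 (φ : AFml) (τ : ℕ → ATerm) (t : ATerm) :
    (φ.substAll (liftSub τ)).subst0 t = φ.substAll (scons t τ) := by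
  rw [AFml.subst0, AFml.substAll_substAll]
  congr 1
  funext i
  cases i with
  | zero => rfl
  | succ i => simp [liftSub, ATerm.lift_zero_substAll]

namespace IsHenkin

variable {Γ U : Set AFml} (H : IsHenkin Γ U)
include H

theorem weaken {χ θ : AFml} (hχ : χ ∈ U)
    (h : ∀ v, χ.evalProp v → θ.evalProp v := by intro v; simp only [AFml.evalProp]; tauto) :
    θ ∈ U :=
  H.mp (H.thm (.taut h)) hχ

theorem imp_iff {χ θ : AFml} : .imp χ θ ∈ U ↔ (χ ∈ U → θ ∈ U) := by
  refine ⟨H.mp, fun h => ?_⟩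
  by_cases hχ : χ ∈ U
  · exact H.weaken (h hχ)
  · exact H.weaken (H.neg_iff.2 hχ)

theorem and_iff {χ θ : AFml} : .and χ θ ∈ U ↔ χ ∈ U ∧ θ ∈ U :=
  ⟨fun h => ⟨H.weaken h, H.weaken h⟩, fun h => H.mp (H.mp (H.thm .tauto) h.1) h.2⟩

theorem or_iff {χ θ : AFml} : .or χ θ ∈ U ↔ χ ∈ U ∨ θ ∈ U := by
  have hU : .or χ θ ∈ U ↔ .imp (.neg χ) θ ∈ U := ⟨fun h => H.weaken h, fun h => H.weaken h⟩
  rw [hU, H.imp_iff, H.neg_iff, or_iff_not_imp_left]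

theorem all_iff {φ : AFml} : .all φ ∈ U ↔ ∀ t, φ.subst0 t ∈ U := by
  refine ⟨fun h t => H.mp (H.thm (.allE φ t)) h, fun h => ?_⟩
  by_contra hall
  obtain ⟨t, ht⟩ := H.wit hall
  exact H.neg_iff.1 ht (h t)

theorem ex_iff {φ : AFml} : .ex φ ∈ U ↔ ∃ t, φ.subst0 t ∈ U := by
  have hdef := H.thm (.exDef φ)
  rw [iffF, H.and_iff, H.imp_iff, H.imp_iff, ← iff_def, H.neg_iff, H.all_iff] at hdef
  rw [hdef, not_forall]
  exact exists_congr fun t => not_iff_comm.1 H.neg_iff.symm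

theorem subst_mem (φ : AFml) {t s : ATerm} (h : .eq t s ∈ U) (hφ : φ.subst0 t ∈ U) :
    φ.subst0 s ∈ U :=
  H.mp (H.mp (H.thm (.eqSubst φ t s)) h) hφ

theorem refl_mem (t : ATerm) : .eq t t ∈ U := H.thm (.eqRefl t)

theorem symm_mem {t s : ATerm} (h : .eq t s ∈ U) : .eq s t ∈ U := by
  have := H.subst_mem (.eq (.var 0) (t.lift 0)) h
  simp only [AFml.subst0, AFml.substAll, ATerm.lift_zero_substAll] at this
  exact this (H.refl_mem t)

theorem trans_mem {t s r : ATerm} (hts : .eq t s ∈ U) (hsr : .eq s r ∈ U) : .eq t r ∈ U := by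
  have := H.subst_mem (.eq (t.lift 0) (.var 0)) hsr
  simp only [AFml.subst0, AFml.substAll, ATerm.lift_zero_substAll] at this
  exact this hts

theorem subst_eq_mem (r : ATerm) {t s : ATerm} (h : .eq t s ∈ U) :
    .eq (r.substAll (subst0Env t)) (r.substAll (subst0Env s)) ∈ U := by
  have := H.subst_mem (.eq ((r.substAll (subst0Env t)).lift 0) r) h
  simp only [AFml.subst0, AFml.substAll, ATerm.lift_zero_substAll] at this
  exact this (H.refl_mem _)

theorem succ_mem {t s : ATerm} (h : .eq t s ∈ U) : .eq t.succ s.succ ∈ U :=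
  H.subst_eq_mem (.succ (.var 0)) h

theorem add_mem {t s t' s' : ATerm} (h : .eq t s ∈ U) (h' : .eq t' s' ∈ U) :
    .eq (t.add t') (s.add s') ∈ U := by
  have hl := H.subst_eq_mem (.add (.var 0) (t'.lift 0)) h
  have hr := H.subst_eq_mem (.add (s.lift 0) (.var 0)) h'
  simp only [ATerm.substAll, ATerm.lift_zero_substAll] at hl hr
  exact H.trans_mem hl hr

theorem mul_mem {t s t' s' : ATerm} (h : .eq t s ∈ U) (h' : .eq t' s' ∈ U) :
    .eq (t.mul t') (s.mul s') ∈ U := by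
  have hl := H.subst_eq_mem (.mul (.var 0) (t'.lift 0)) h
  have hr := H.subst_eq_mem (.mul (s.lift 0) (.var 0)) h'
  simp only [ATerm.substAll, ATerm.lift_zero_substAll] at hl hr
  exact H.trans_mem hl hr

theorem le_mem {t s t' s' : ATerm} (h : .eq t s ∈ U) (h' : .eq t' s' ∈ U)
    (hle : .le t t' ∈ U) : .le s s' ∈ U := by
  have hl := H.subst_mem (.le (.var 0) (t'.lift 0)) h
  have hr := H.subst_mem (.le (s.lift 0) (.var 0)) h'
  simp only [AFml.subst0, AFml.substAll, ATerm.lift_zero_substAll] at hl hr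
  exact hr (hl hle)

omit H

/-- Terms modulo `U`-provable equality. -/
def setoid (H : IsHenkin Γ U) : Setoid ATerm :=
  ⟨fun t s => .eq t s ∈ U, H.refl_mem, H.symm_mem, H.trans_mem⟩

/-- The term model of a complete Henkin theory. -/
def termModel (H : IsHenkin Γ U) : AStr where
  Carrier := Quotient H.setoid
  zero := Quotient.mk H.setoid .zero
  succ := Quotient.map .succ fun _ _ h => H.succ_mem h
  add := Quotient.map₂ .add fun _ _ h _ _ h' => H.add_mem h h'
  mul := Quotient.map₂ .mul fun _ _ h _ _ h' => H.mul_mem h h'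
  le := Quotient.lift₂ (fun t s => .le t s ∈ U) fun _ _ _ _ h h' =>
    propext ⟨H.le_mem h h', H.le_mem (H.symm_mem h) (H.symm_mem h')⟩

/-- The element of the term model denoted by a term. -/
def cls (H : IsHenkin Γ U) (t : ATerm) : H.termModel := Quotient.mk H.setoid t

theorem cls_surjective (H : IsHenkin Γ U) : Function.Surjective H.cls :=
  Quotient.exists_rep (s := H.setoid)

theorem valIn_termModel (H : IsHenkin Γ U) (τ : ℕ → ATerm) (t : ATerm) :
    t.valIn H.termModel (fun i => H.cls (τ i)) = H.cls (t.substAll τ) := by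
  induction t <;> simp only [ATerm.valIn, *] <;> rfl

theorem scons_cls (H : IsHenkin Γ U) (τ : ℕ → ATerm) (t : ATerm) :
    scons (H.cls t) (fun i => H.cls (τ i)) = fun i => H.cls (scons t τ i) := by
  funext i; cases i <;> rfl

theorem satIn_termModel (H : IsHenkin Γ U) (φ : AFml) (τ : ℕ → ATerm) :
    φ.SatIn H.termModel (fun i => H.cls (τ i)) ↔ φ.substAll τ ∈ U := by
  induction φ generalizing τ with
  | eq t s =>
    simp only [AFml.SatIn, valIn_termModel, AFml.substAll]
    exact Quotient.eq (r := H.setoid)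
  | le t s =>
    simp only [AFml.SatIn, valIn_termModel, AFml.substAll]
    rfl
  | neg φ ih => simp only [AFml.SatIn, AFml.substAll, ih, H.neg_iff]
  | and φ ψ ihφ ihψ => simp only [AFml.SatIn, AFml.substAll, ihφ, ihψ, H.and_iff]
  | or φ ψ ihφ ihψ => simp only [AFml.SatIn, AFml.substAll, ihφ, ihψ, H.or_iff]
  | imp φ ψ ihφ ihψ => simp only [AFml.SatIn, AFml.substAll, ihφ, ihψ, H.imp_iff]
  | all φ ih =>
    simp only [AFml.SatIn, AFml.substAll, H.all_iff, AFml.substAll_liftSub_subst0,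
      H.cls_surjective.forall, scons_cls, ih]
  | ex φ ih =>
    simp only [AFml.SatIn, AFml.substAll, H.ex_iff, AFml.substAll_liftSub_subst0,
      H.cls_surjective.exists, scons_cls, ih]

theorem isModel_termModel (H : IsHenkin Γ U) : IsModel H.termModel Γ := by
  intro χ hχ ρ
  obtain ⟨τ, rfl⟩ : ∃ τ : ℕ → ATerm, (fun i => H.cls (τ i)) = ρ :=
    ⟨fun i => (H.cls_surjective (ρ i)).choose, funext fun i => (H.cls_surjective (ρ i)).choose_spec⟩
  exact (H.satIn_termModel χ τ).2 (H.thm ((Proves.ax hχ).substAll τ))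

end IsHenkin

theorem completeness {Γ : Set AFml} {φ : AFml} (h : ∀ M, IsModel M Γ → ∀ ρ, φ.SatIn M ρ) :
    Proves Γ φ := by
  by_contra hn
  have hcon : Consistent Γ (.neg φ) := fun h' => hn h'.weaken
  obtain ⟨U, H, hU⟩ := hcon.exists_isHenkin
  have hφ := h H.termModel H.isModel_termModel fun i => H.cls (.var i)
  rw [H.satIn_termModel, AFml.substAll_var] at hφ
  exact H.neg_iff.1 hU hφ

theorem exists_isModel_not_satIn {Γ : Set AFml} {φ : AFml} (h : ¬ Proves Γ φ) :
    ∃ M, IsModel M Γ ∧ ∃ ρ, ¬ φ.SatIn M ρ := by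
  by_contra! hn
  exact h (completeness hn)

/-! ### Models of Peano arithmetic -/

/-- The interpretation of the `n`-th numeral in a structure. -/
def AStr.std (M : AStr) : ℕ → M
  | 0 => M.zero
  | n + 1 => M.succ (M.std n)

theorem std_stdStr (n : ℕ) : stdStr.std n = n := by
  induction n with
  | zero => rfl
  | succ n ih => exact congrArg Nat.succ ih

theorem valIn_numeral (M : AStr) (ρ : ℕ → M) (n : ℕ) : (numeral n).valIn M ρ = M.std n := by
  induction n with
  | zero => rfl
  | succ n ih => simp only [numeral, ATerm.valIn, ih, AStr.std]

theorem scons_std (M : AStr) (a : ℕ) (ρ : ℕ → ℕ) :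
    scons (M.std a) (fun i => M.std (ρ i)) = fun i => M.std (scons a ρ i) := by
  funext i; cases i <;> rfl

/-- The renaming that makes room for a fresh variable `1`. -/
def skipOne : ℕ → ATerm := liftSub (liftEnv 0)

theorem satIn_skipOne (M : AStr) (φ : AFml) (a b : M) (ρ : ℕ → M) :
    (φ.substAll skipOne).SatIn M (scons a (scons b ρ)) ↔ φ.SatIn M (scons a ρ) := by
  rw [AFml.satIn_substAll, skipOne, valIn_liftSub]
  rfl

/-- The renaming that makes room for a fresh variable `2`. -/
def skipTwo : ℕ → ATerm := liftSub skipOne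

theorem satIn_skipTwo (M : AStr) (φ : AFml) (a a' b : M) (ρ : ℕ → M) :
    (φ.substAll skipTwo).SatIn M (scons a (scons a' (scons b ρ))) ↔
      φ.SatIn M (scons a (scons a' ρ)) := by
  rw [AFml.satIn_substAll, skipTwo, valIn_liftSub, skipOne, valIn_liftSub]
  rfl

/-- Models of `PA`. -/
def IsPA (M : AStr) : Prop := IsModel M PA

theorem isPA_stdStr : IsPA stdStr := by
  intro φ hφ ρ
  change ℕ → ℕ at ρ
  cases hφ with
  | ind φ =>
    rintro ⟨h0, hs⟩ a
    induction a using Nat.rec with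
    | zero => exact (AFml.satIn_subst0 stdStr φ ρ .zero).1 h0
    | succ n ih => exact (satIn_succSubst stdStr φ ρ n).1 (hs n ih)
  | _ =>
    refine (AFml.satIn_stdStr _ ρ).2 ?_
    simp only [iffF, AFml.Sat, ATerm.val, consEnv]
    grind [Nat.exists_eq_add_of_le']

namespace IsPA

variable {M : AStr}

theorem ind (hM : IsPA M) (φ : AFml) (ρ : ℕ → M) (h0 : φ.SatIn M (scons M.zero ρ))
    (hs : ∀ a, φ.SatIn M (scons a ρ) → φ.SatIn M (scons (M.succ a) ρ)) (a : M) :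
    φ.SatIn M (scons a ρ) :=
  hM _ (PAax.ind φ) ρ ⟨(AFml.satIn_subst0 M φ ρ .zero).2 h0,
    fun a ha => (satIn_succSubst M φ ρ a).2 (hs a ha)⟩ a

theorem succ_ne_zero (hM : IsPA M) (a : M) : M.succ a ≠ M.zero :=
  hM _ PAax.succNeZero (fun _ => M.zero) a

theorem succ_inj (hM : IsPA M) {a b : M} (h : M.succ a = M.succ b) : a = b :=
  hM _ PAax.succInj (fun _ => M.zero) a b h

theorem add_zero (hM : IsPA M) (a : M) : M.add a M.zero = a :=
  hM _ PAax.addZero (fun _ => M.zero) a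

theorem add_succ (hM : IsPA M) (a b : M) : M.add a (M.succ b) = M.succ (M.add a b) :=
  hM _ PAax.addSucc (fun _ => M.zero) a b

theorem mul_zero (hM : IsPA M) (a : M) : M.mul a M.zero = M.zero :=
  hM _ PAax.mulZero (fun _ => M.zero) a

theorem mul_succ (hM : IsPA M) (a b : M) : M.mul a (M.succ b) = M.add (M.mul a b) a :=
  hM _ PAax.mulSucc (fun _ => M.zero) a b

theorem le_iff (hM : IsPA M) (a b : M) : M.le a b ↔ ∃ c, M.add c a = b :=
  let h := hM _ PAax.leDef (fun _ => M.zero) a b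
  ⟨h.1, h.2⟩

theorem zero_add (hM : IsPA M) (a : M) : M.add M.zero a = a := by
  refine hM.ind (.eq (.add .zero (.var 0)) (.var 0)) (fun _ => M.zero) (hM.add_zero _)
    (fun a ha => ?_) a
  simp only [AFml.SatIn, ATerm.valIn, scons_zero] at ha ⊢
  rw [hM.add_succ, ha]

theorem succ_add (hM : IsPA M) (a b : M) : M.add (M.succ a) b = M.succ (M.add a b) := by
  refine hM.ind (.eq (.add (.succ (.var 1)) (.var 0)) (.succ (.add (.var 1) (.var 0))))
    (fun _ => a) ?_ (fun b hb => ?_) b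
  · simp only [AFml.SatIn, ATerm.valIn, scons_zero, scons_one, hM.add_zero]
  · simp only [AFml.SatIn, ATerm.valIn, scons_zero, scons_one] at hb ⊢
    rw [hM.add_succ, hM.add_succ, hb]

theorem eq_zero_or_eq_succ (hM : IsPA M) (a : M) : a = M.zero ∨ ∃ b, a = M.succ b :=
  hM.ind (.or (.eq (.var 0) .zero) (.ex (.eq (.var 1) (.succ (.var 0))))) (fun _ => M.zero)
    (Or.inl rfl) (fun b _ => Or.inr ⟨b, rfl⟩) a

theorem add_assoc (hM : IsPA M) (a b c : M) : M.add (M.add a b) c = M.add a (M.add b c) := by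
  refine hM.ind
    (.eq (.add (.add (.var 1) (.var 2)) (.var 0)) (.add (.var 1) (.add (.var 2) (.var 0))))
    (scons a fun _ => b) ?_ (fun c hc => ?_) c
  · simp only [AFml.SatIn, ATerm.valIn, scons_zero, scons_one, scons_two, hM.add_zero]
  · simp only [AFml.SatIn, ATerm.valIn, scons_zero, scons_one, scons_two] at hc ⊢
    rw [hM.add_succ, hM.add_succ, hM.add_succ, hc]

theorem add_right_cancel (hM : IsPA M) {a b c : M} : M.add a c = M.add b c → a = b := by
  refine hM.ind
    (.imp (.eq (.add (.var 1) (.var 0)) (.add (.var 2) (.var 0))) (.eq (.var 1) (.var 2)))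
    (scons a fun _ => b) ?_ (fun c hc => ?_) c
  · simp only [AFml.SatIn, ATerm.valIn, scons_zero, scons_one, scons_two, hM.add_zero]
    exact id
  · simp only [AFml.SatIn, ATerm.valIn, scons_zero, scons_one, scons_two] at hc ⊢
    rw [hM.add_succ, hM.add_succ]
    exact fun h => hc (hM.succ_inj h)

theorem eq_zero_of_add_eq_zero (hM : IsPA M) {a b : M} (h : M.add a b = M.zero) : b = M.zero := by
  rcases hM.eq_zero_or_eq_succ b with rfl | ⟨c, rfl⟩
  · rfl
  · rw [hM.add_succ] at h
    exact absurd h (hM.succ_ne_zero _)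

theorem le_refl (hM : IsPA M) (a : M) : M.le a a := (hM.le_iff a a).2 ⟨M.zero, hM.zero_add a⟩

theorem zero_le (hM : IsPA M) (a : M) : M.le M.zero a := (hM.le_iff _ a).2 ⟨a, hM.add_zero a⟩

theorem le_trans (hM : IsPA M) {a b c : M} (hab : M.le a b) (hbc : M.le b c) : M.le a c := by
  obtain ⟨x, rfl⟩ := (hM.le_iff a b).1 hab
  obtain ⟨y, rfl⟩ := (hM.le_iff _ c).1 hbc
  exact (hM.le_iff _ _).2 ⟨M.add y x, hM.add_assoc _ _ _⟩

theorem le_antisymm (hM : IsPA M) {a b : M} (hab : M.le a b) (hba : M.le b a) : a = b := by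
  obtain ⟨x, rfl⟩ := (hM.le_iff a b).1 hab
  obtain ⟨y, hy⟩ := (hM.le_iff _ a).1 hba
  rw [← hM.add_assoc] at hy
  have hyx : M.add y x = M.zero := hM.add_right_cancel (hy.trans (hM.zero_add a).symm)
  rw [hM.eq_zero_of_add_eq_zero hyx, hM.zero_add]

theorem le_succ_self (hM : IsPA M) (a : M) : M.le a (M.succ a) :=
  (hM.le_iff _ _).2 ⟨M.succ M.zero, by rw [hM.succ_add, hM.zero_add]⟩

theorem le_or_eq_of_le_succ (hM : IsPA M) {a b : M} (h : M.le a (M.succ b)) :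
    M.le a b ∨ a = M.succ b := by
  obtain ⟨x, hx⟩ := (hM.le_iff a _).1 h
  rcases hM.eq_zero_or_eq_succ x with rfl | ⟨y, rfl⟩
  · exact Or.inr (by rwa [hM.zero_add] at hx)
  · rw [hM.succ_add] at hx
    exact Or.inl ((hM.le_iff _ _).2 ⟨y, hM.succ_inj hx⟩)

theorem eq_zero_of_le_zero (hM : IsPA M) {a : M} (h : M.le a M.zero) : a = M.zero :=
  hM.le_antisymm h (hM.zero_le a)

theorem le_total (hM : IsPA M) (a b : M) : M.le a b ∨ M.le b a := by
  refine hM.ind (.or (.le (.var 0) (.var 1)) (.le (.var 1) (.var 0))) (fun _ => b)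
    (Or.inl (hM.zero_le b)) (fun c hc => ?_) a
  simp only [AFml.SatIn, ATerm.valIn, scons_zero, scons_one] at hc ⊢
  rcases hc with h | h
  · obtain ⟨x, rfl⟩ := (hM.le_iff _ _).1 h
    rcases hM.eq_zero_or_eq_succ x with rfl | ⟨y, rfl⟩
    · rw [hM.zero_add]
      exact Or.inr (hM.le_succ_self c)
    · exact Or.inl ((hM.le_iff _ _).2 ⟨y, by rw [hM.succ_add, hM.add_succ]⟩)
  · exact Or.inr (hM.le_trans h (hM.le_succ_self c))

theorem exists_least (hM : IsPA M) (φ : AFml) (ρ : ℕ → M) (h : ∃ a, φ.SatIn M (scons a ρ)) :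
    ∃ a, φ.SatIn M (scons a ρ) ∧ ∀ b, φ.SatIn M (scons b ρ) → M.le a b := by
  by_contra! hn
  have none_le :=
    hM.ind (.all (.imp (.le (.var 0) (.var 1)) (.neg (φ.substAll skipOne)))) ρ ?_ ?_
  · obtain ⟨a, ha⟩ := h
    have not_sat := none_le a a (hM.le_refl a)
    simp only [AFml.SatIn, satIn_skipOne] at not_sat
    exact not_sat ha
  all_goals simp only [AFml.SatIn, satIn_skipOne, ATerm.valIn, scons_zero, scons_one]
  · intro b hb hφ
    obtain rfl := hM.eq_zero_of_le_zero hb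
    obtain ⟨c, -, hc⟩ := hn _ hφ
    exact hc (hM.zero_le c)
  · intro a ha b hb hφ
    rcases hM.le_or_eq_of_le_succ hb with hle | rfl
    · exact ha b hle hφ
    · obtain ⟨c, hcφ, hc⟩ := hn _ hφ
      rcases hM.le_or_eq_of_le_succ ((hM.le_total _ c).resolve_left hc) with hca | rfl
      · exact ha c hca hcφ
      · exact hc (hM.le_refl _)

theorem std_add (hM : IsPA M) (a b : ℕ) : M.std (a + b) = M.add (M.std a) (M.std b) := by
  induction b with
  | zero => exact (hM.add_zero _).symm
  | succ b ih => rw [← Nat.add_assoc, AStr.std, AStr.std, hM.add_succ, ih]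

theorem std_mul (hM : IsPA M) (a b : ℕ) : M.std (a * b) = M.mul (M.std a) (M.std b) := by
  induction b with
  | zero => exact (hM.mul_zero _).symm
  | succ b ih => rw [Nat.mul_succ, hM.std_add, AStr.std, hM.mul_succ, ih]

theorem std_injective (hM : IsPA M) : Function.Injective M.std
  | 0, 0, _ => rfl
  | 0, _ + 1, h => absurd h.symm (hM.succ_ne_zero _)
  | _ + 1, 0, h => absurd h (hM.succ_ne_zero _)
  | _ + 1, _ + 1, h => congrArg _ (hM.std_injective (hM.succ_inj h))

theorem exists_std_of_le_std (hM : IsPA M) {x : M} {n : ℕ} (h : M.le x (M.std n)) :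
    ∃ k ≤ n, x = M.std k := by
  induction n with
  | zero => exact ⟨0, Nat.le_refl 0, hM.eq_zero_of_le_zero h⟩
  | succ n ih =>
    rcases hM.le_or_eq_of_le_succ h with hle | heq
    · obtain ⟨k, hk, hx⟩ := ih hle
      exact ⟨k, Nat.le_succ_of_le hk, hx⟩
    · exact ⟨n + 1, Nat.le_refl _, heq⟩

theorem std_le_std_iff (hM : IsPA M) {a b : ℕ} : M.le (M.std a) (M.std b) ↔ a ≤ b := by
  constructor
  · intro h
    obtain ⟨k, hk, hak⟩ := hM.exists_std_of_le_std h
    rwa [hM.std_injective hak]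
  · intro h
    obtain ⟨c, rfl⟩ := Nat.exists_eq_add_of_le' h
    exact (hM.le_iff _ _).2 ⟨M.std c, (hM.std_add c a).symm⟩

theorem exists_le_std_iff (hM : IsPA M) {n : ℕ} {p : M → Prop} :
    (∃ x, M.le x (M.std n) ∧ p x) ↔ ∃ k ≤ n, p (M.std k) := by
  constructor
  · rintro ⟨x, hx, hp⟩
    obtain ⟨k, hk, rfl⟩ := hM.exists_std_of_le_std hx
    exact ⟨k, hk, hp⟩
  · exact fun ⟨k, hk, hp⟩ => ⟨_, hM.std_le_std_iff.2 hk, hp⟩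

theorem forall_le_std_iff (hM : IsPA M) {n : ℕ} {p : M → Prop} :
    (∀ x, M.le x (M.std n) → p x) ↔ ∀ k ≤ n, p (M.std k) := by
  simpa only [not_exists, not_and, not_not] using
    not_congr (hM.exists_le_std_iff (n := n) (p := fun x => ¬ p x))

theorem std_le_of_nonstandard (hM : IsPA M) {x : M} (h : ∀ n, x ≠ M.std n) (n : ℕ) :
    M.le (M.std n) x :=
  (hM.le_total (M.std n) x).resolve_right fun hx =>
    let ⟨k, _, hk⟩ := hM.exists_std_of_le_std hx
    h k hk

theorem valIn_std (hM : IsPA M) (ρ : ℕ → ℕ) (t : ATerm) :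
    t.valIn M (fun i => M.std (ρ i)) = M.std (t.val ρ) := by
  induction t with
  | succ t ih => exact congrArg M.succ ih
  | _ => simp only [ATerm.valIn, ATerm.val, AStr.std, hM.std_add, hM.std_mul, *]

theorem satIn_std_iff (hM : IsPA M) {φ : AFml} (h : IsDelta0 φ) (ρ : ℕ → ℕ) :
    φ.SatIn M (fun i => M.std (ρ i)) ↔ φ.Sat ρ := by
  have val_lift (t : ATerm) (ρ : ℕ → ℕ) (a : ℕ) : (t.lift 0).val (scons a ρ) = t.val ρ := by
    rw [← ATerm.valIn_stdStr, ← ATerm.valIn_stdStr]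
    exact ATerm.valIn_lift_zero stdStr ρ a t
  induction h generalizing ρ with
  | eq t s => simp only [AFml.SatIn, AFml.Sat, hM.valIn_std, hM.std_injective.eq_iff]
  | le t s => simp only [AFml.SatIn, AFml.Sat, hM.valIn_std, hM.std_le_std_iff]
  | ball t _ ih =>
    simp only [AFml.SatIn, AFml.Sat, consEnv_eq_scons, ATerm.valIn_lift_zero, hM.valIn_std,
      val_lift, ATerm.valIn, ATerm.val, scons_zero, hM.forall_le_std_iff, scons_std, ih]
  | bex t _ ih =>
    simp only [AFml.SatIn, AFml.Sat, consEnv_eq_scons, ATerm.valIn_lift_zero, hM.valIn_std,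
      val_lift, ATerm.valIn, ATerm.val, scons_zero, hM.exists_le_std_iff, scons_std, ih]
  | _ => simp only [AFml.SatIn, AFml.Sat, *]

end IsPA

/-- `∃ x ≤ vᵦ, φ`, where `φ` has `x` as its variable `0`. -/
def boundedEx (b : ℕ) (φ : AFml) : AFml := .ex (.and (.le (.var 0) (.var (b + 1))) φ)

/-- `∀ x ≤ vᵦ, φ`, where `φ` has `x` as its variable `0`. -/
def boundedAll (b : ℕ) (φ : AFml) : AFml := .all (.imp (.le (.var 0) (.var (b + 1))) φ)

theorem IsDelta0.boundedEx {b : ℕ} {φ : AFml} (h : IsDelta0 φ) : IsDelta0 (boundedEx b φ) :=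
  .bex (.var b) h

theorem IsDelta0.boundedAll {b : ℕ} {φ : AFml} (h : IsDelta0 φ) : IsDelta0 (boundedAll b φ) :=
  .ball (.var b) h

theorem satIn_boundedEx (M : AStr) (ρ : ℕ → M) (b : ℕ) (φ : AFml) :
    (boundedEx b φ).SatIn M ρ ↔ ∃ a, M.le a (ρ b) ∧ φ.SatIn M (scons a ρ) := Iff.rfl

theorem satIn_boundedAll (M : AStr) (ρ : ℕ → M) (b : ℕ) (φ : AFml) :
    (boundedAll b φ).SatIn M ρ ↔ ∀ a, M.le a (ρ b) → φ.SatIn M (scons a ρ) := Iff.rfl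

theorem ATerm.lift_zero_substAll_liftSub (t : ATerm) (σ : ℕ → ATerm) :
    (t.lift 0).substAll (liftSub σ) = (t.substAll σ).lift 0 := by
  simp only [lift_eq_substAll, substAll_substAll]
  congr 1
  funext i
  simp [liftEnv, substAll, liftSub, lift_eq_substAll]

theorem IsDelta0.substAll {φ : AFml} (h : IsDelta0 φ) (σ : ℕ → ATerm) :
    IsDelta0 (φ.substAll σ) := by
  induction h generalizing σ with
  | eq t s => exact .eq _ _
  | le t s => exact .le _ _
  | neg _ ih => exact .neg (ih σ)
  | and _ _ ih₁ ih₂ => exact .and (ih₁ σ) (ih₂ σ)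
  | or _ _ ih₁ ih₂ => exact .or (ih₁ σ) (ih₂ σ)
  | imp _ _ ih₁ ih₂ => exact .imp (ih₁ σ) (ih₂ σ)
  | ball t _ ih =>
    simp only [AFml.substAll, ATerm.lift_zero_substAll_liftSub]
    exact .ball (t.substAll σ) (ih _)
  | bex t _ ih =>
    simp only [AFml.substAll, ATerm.lift_zero_substAll_liftSub]
    exact .bex (t.substAll σ) (ih _)

/-- `R` is equivalent, in all models of `PA`, to a single unbounded existential quantifier
applied to a `Δ₀` formula. -/
def HasSigma1NormalForm (R : ∀ M : AStr, (ℕ → M) → Prop) : Prop :=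
  ∃ φ, IsDelta0 φ ∧ ∀ M, IsPA M → ∀ ρ, R M ρ ↔ ∃ z, φ.SatIn M (scons z ρ)

namespace HasSigma1NormalForm

variable {R S : ∀ M : AStr, (ℕ → M) → Prop}

theorem congr (hR : HasSigma1NormalForm R) (h : ∀ M ρ, S M ρ ↔ R M ρ) :
    HasSigma1NormalForm S := by
  obtain ⟨φ, hφ, hR⟩ := hR
  exact ⟨φ, hφ, fun M hM ρ => (h M ρ).trans (hR M hM ρ)⟩

theorem delta0 {φ : AFml} (h : IsDelta0 φ) : HasSigma1NormalForm fun M ρ => φ.SatIn M ρ := by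
  refine ⟨φ.lift 0, by rw [AFml.lift_eq_substAll]; exact h.substAll _, fun M _ ρ => ?_⟩
  simp only [AFml.satIn_lift_zero]
  exact ⟨fun h => ⟨M.zero, h⟩, fun ⟨_, h⟩ => h⟩

theorem and (hR : HasSigma1NormalForm R) (hS : HasSigma1NormalForm S) :
    HasSigma1NormalForm fun M ρ => R M ρ ∧ S M ρ := by
  obtain ⟨φ, hφ, hR⟩ := hR
  obtain ⟨ψ, hψ, hS⟩ := hS
  refine ⟨.and (boundedEx 0 (φ.substAll skipOne)) (boundedEx 0 (ψ.substAll skipOne)),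
    .and (hφ.substAll _).boundedEx (hψ.substAll _).boundedEx, fun M hM ρ => ?_⟩
  simp only [hR M hM, hS M hM, AFml.SatIn, satIn_boundedEx, satIn_skipOne, scons_zero]
  constructor
  · rintro ⟨⟨a, ha⟩, b, hb⟩
    rcases hM.le_total a b with h | h
    · exact ⟨b, ⟨a, h, ha⟩, b, hM.le_refl b, hb⟩
    · exact ⟨a, ⟨a, hM.le_refl a, ha⟩, b, h, hb⟩
  · rintro ⟨_, ⟨a, _, ha⟩, b, _, hb⟩
    exact ⟨⟨a, ha⟩, b, hb⟩

theorem or (hR : HasSigma1NormalForm R) (hS : HasSigma1NormalForm S) :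
    HasSigma1NormalForm fun M ρ => R M ρ ∨ S M ρ := by
  obtain ⟨φ, hφ, hR⟩ := hR
  obtain ⟨ψ, hψ, hS⟩ := hS
  refine ⟨.or φ ψ, .or hφ hψ, fun M hM ρ => ?_⟩
  simp only [hR M hM, hS M hM, AFml.SatIn, exists_or]

theorem ex (hR : HasSigma1NormalForm R) :
    HasSigma1NormalForm fun M ρ => ∃ a, R M (scons a ρ) := by
  obtain ⟨φ, hφ, hR⟩ := hR
  refine ⟨boundedEx 0 (boundedEx 1 (φ.substAll skipTwo)),
    (hφ.substAll _).boundedEx.boundedEx, fun M hM ρ => ?_⟩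
  simp only [hR M hM, satIn_boundedEx, satIn_skipTwo, scons_zero, scons_one]
  constructor
  · rintro ⟨a, b, hb⟩
    rcases hM.le_total a b with h | h
    · exact ⟨b, a, h, b, hM.le_refl b, hb⟩
    · exact ⟨a, a, hM.le_refl a, b, h, hb⟩
  · rintro ⟨_, a, _, b, _, hb⟩
    exact ⟨a, b, hb⟩

end HasSigma1NormalForm

mutual

theorem IsSigma1.hasSigma1NormalForm {φ : AFml} :
    IsSigma1 φ → HasSigma1NormalForm fun M ρ => φ.SatIn M ρ
  | .delta0 h => .delta0 h
  | .and hφ hψ => hφ.hasSigma1NormalForm.and hψ.hasSigma1NormalForm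
  | .or hφ hψ => hφ.hasSigma1NormalForm.or hψ.hasSigma1NormalForm
  | .ex h => h.hasSigma1NormalForm.ex
  | .negPi h => h.hasSigma1NormalForm_not
  | .impPiSigma hφ hψ =>
    (hφ.hasSigma1NormalForm_not.or hψ.hasSigma1NormalForm).congr fun _ _ => imp_iff_not_or

theorem IsPi1.hasSigma1NormalForm_not {φ : AFml} :
    IsPi1 φ → HasSigma1NormalForm fun M ρ => ¬ φ.SatIn M ρ
  | .delta0 h => .delta0 (.neg h)
  | .and hφ hψ =>
    (hφ.hasSigma1NormalForm_not.or hψ.hasSigma1NormalForm_not).congr fun _ _ => not_and_or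
  | .or hφ hψ =>
    (hφ.hasSigma1NormalForm_not.and hψ.hasSigma1NormalForm_not).congr fun _ _ => not_or
  | .all h => h.hasSigma1NormalForm_not.ex.congr fun _ _ => not_forall
  | .negSigma h => h.hasSigma1NormalForm.congr fun _ _ => not_not
  | .impSigmaPi hφ hψ =>
    (hφ.hasSigma1NormalForm.and hψ.hasSigma1NormalForm_not).congr fun _ _ => Classical.not_imp

end

/-! ### Definability in the standard model -/

theorem AFml.sat_substAll (φ : AFml) (ρ : ℕ → ℕ) (σ : ℕ → ATerm) :
    (φ.substAll σ).Sat ρ ↔ φ.Sat fun i => (σ i).val ρ := by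
  have h := AFml.satIn_substAll stdStr φ ρ σ
  simp only [ATerm.valIn_stdStr] at h
  exact (AFml.satIn_stdStr _ _).symm.trans (h.trans (AFml.satIn_stdStr _ _))

theorem val_numeral (n : ℕ) (ρ : ℕ → ℕ) : (numeral n).val ρ = n := by
  induction n with
  | zero => rfl
  | succ n ih => exact congrArg (· + 1) ih

theorem sat_boundedEx (ρ : ℕ → ℕ) (b : ℕ) (φ : AFml) :
    (boundedEx b φ).Sat ρ ↔ ∃ a ≤ ρ b, φ.Sat (scons a ρ) := by
  simp only [boundedEx, AFml.Sat, consEnv_eq_scons]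
  rfl

theorem sat_boundedAll (ρ : ℕ → ℕ) (b : ℕ) (φ : AFml) :
    (boundedAll b φ).Sat ρ ↔ ∀ a ≤ ρ b, φ.Sat (scons a ρ) := by
  simp only [boundedAll, AFml.Sat, consEnv_eq_scons]
  rfl

/-- Functions of an environment that are the value of a term. As a class, like the ones that
follow, so that definability is found by instance search. -/
class TermFun (f : (ℕ → ℕ) → ℕ) : Prop where
  exists_term : ∃ t : ATerm, ∀ ρ, t.val ρ = f ρ

/-- Relations on environments defined by a `Δ₀` formula. -/
class Delta0Rel (R : (ℕ → ℕ) → Prop) : Prop where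
  exists_isDelta0 : ∃ φ, IsDelta0 φ ∧ ∀ ρ, φ.Sat ρ ↔ R ρ

/-- Relations on environments defined by a `Σ₁` formula, in normal form. -/
class Sigma1Rel (R : (ℕ → ℕ) → Prop) : Prop where
  exists_isDelta0 : ∃ φ, IsDelta0 φ ∧ ∀ ρ : ℕ → ℕ, R ρ ↔ ∃ a, φ.Sat (scons a ρ)

/-- Functions of an environment with a `Σ₁` graph. -/
class Sigma1Fun (f : (ℕ → ℕ) → ℕ) : Prop where
  sigma1Rel_graph : Sigma1Rel fun ρ => ρ 0 = f fun i => ρ (i + 1)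

namespace TermFun

variable (f g : (ℕ → ℕ) → ℕ) [hf : TermFun f] [hg : TermFun g]

instance var (k : ℕ) : TermFun fun ρ => ρ k := ⟨.var k, fun _ => rfl⟩

instance const (k : ℕ) : TermFun fun _ => k := ⟨numeral k, val_numeral k⟩

instance add : TermFun fun ρ => f ρ + g ρ := by
  obtain ⟨⟨t, ht⟩, s, hs⟩ := hf, hg
  exact ⟨.add t s, fun ρ => by simp only [ATerm.val, ht, hs]⟩

instance mul : TermFun fun ρ => f ρ * g ρ := by
  obtain ⟨⟨t, ht⟩, s, hs⟩ := hf, hg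
  exact ⟨.mul t s, fun ρ => by simp only [ATerm.val, ht, hs]⟩

end TermFun

theorem eq_beta_iff (q i x : ℕ) : x = Nat.beta q i ↔ ∃ a ≤ q, ∃ b ≤ q, ∃ k ≤ q,
    q = Nat.pair a b ∧ a = k * ((i + 1) * b + 1) + x ∧ x < (i + 1) * b + 1 := by
  unfold Nat.beta
  constructor
  · rintro rfl
    exact ⟨q.unpair.1, Nat.unpair_left_le _, q.unpair.2, Nat.unpair_right_le _, _,
      (Nat.div_le_self _ _).trans (Nat.unpair_left_le _), (Nat.pair_unpair q).symm,
      (Nat.div_add_mod' _ _).symm, Nat.mod_lt _ (Nat.succ_pos _)⟩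
  · rintro ⟨a, -, b, -, k, -, rfl, ha, hx⟩
    rw [Nat.unpair_pair, ha, Nat.mul_add_mod', Nat.mod_eq_of_lt hx]

namespace Delta0Rel

section

variable (f g : (ℕ → ℕ) → ℕ) [hf : TermFun f] [hg : TermFun g]

instance eq : Delta0Rel fun ρ => f ρ = g ρ := by
  obtain ⟨⟨t, ht⟩, s, hs⟩ := hf, hg
  exact ⟨.eq t s, .eq _ _, fun ρ => by simp only [AFml.Sat, ht, hs]⟩

instance le : Delta0Rel fun ρ => f ρ ≤ g ρ := by
  obtain ⟨⟨t, ht⟩, s, hs⟩ := hf, hg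
  exact ⟨.le t s, .le _ _, fun ρ => by simp only [AFml.Sat, ht, hs]⟩

instance lt : Delta0Rel fun ρ => f ρ < g ρ := le (fun ρ => f ρ + 1) g

end

section

variable {P Q : (ℕ → ℕ) → Prop}

theorem congr (hP : Delta0Rel P) (h : ∀ ρ, Q ρ ↔ P ρ) : Delta0Rel Q := by
  rwa [show Q = P from funext fun ρ => propext (h ρ)]

variable (P Q) [hP : Delta0Rel P] [hQ : Delta0Rel Q]

instance not : Delta0Rel fun ρ => ¬ P ρ := by
  obtain ⟨φ, hφ, hP⟩ := hP
  exact ⟨.neg φ, .neg hφ, fun ρ => by simp only [AFml.Sat, hP]⟩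

instance and : Delta0Rel fun ρ => P ρ ∧ Q ρ := by
  obtain ⟨⟨φ, hφ, hP⟩, ψ, hψ, hQ⟩ := hP, hQ
  exact ⟨.and φ ψ, .and hφ hψ, fun ρ => by simp only [AFml.Sat, hP, hQ]⟩

instance or : Delta0Rel fun ρ => P ρ ∨ Q ρ := by
  obtain ⟨⟨φ, hφ, hP⟩, ψ, hψ, hQ⟩ := hP, hQ
  exact ⟨.or φ ψ, .or hφ hψ, fun ρ => by simp only [AFml.Sat, hP, hQ]⟩

end

instance boundedEx (k : ℕ) (Q : ℕ → (ℕ → ℕ) → Prop)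
    [hQ : Delta0Rel fun ρ => Q (ρ 0) (fun i => ρ (i + 1))] :
    Delta0Rel fun ρ => ∃ i ≤ ρ k, Q i ρ := by
  obtain ⟨φ, hφ, hQ⟩ := hQ
  refine ⟨PLN.boundedEx k φ, hφ.boundedEx, fun ρ => ?_⟩
  simp only [sat_boundedEx, hQ]
  rfl

instance pair (i j k : ℕ) : Delta0Rel fun ρ => ρ k = Nat.pair (ρ i) (ρ j) := by
  have h : Delta0Rel fun ρ => (ρ i < ρ j ∧ ρ k = ρ j * ρ j + ρ i) ∨
      (ρ j ≤ ρ i ∧ ρ k = ρ i * ρ i + ρ i + ρ j) := inferInstance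
  refine h.congr fun ρ => ?_
  unfold Nat.pair
  split_ifs <;> omega

instance beta (i j k : ℕ) : Delta0Rel fun ρ => ρ k = Nat.beta (ρ i) (ρ j) := by
  simp only [eq_beta_iff]
  infer_instance

end Delta0Rel

namespace Sigma1Rel

variable {P Q : (ℕ → ℕ) → Prop}

theorem congr (hP : Sigma1Rel P) (h : ∀ ρ, Q ρ ↔ P ρ) : Sigma1Rel Q := by
  rwa [show Q = P from funext fun ρ => propext (h ρ)]

theorem of_isSigma1 {φ : AFml} (hφ : IsSigma1 φ) : Sigma1Rel fun ρ => φ.Sat ρ := by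
  obtain ⟨ψ, hψ, h⟩ := hφ.hasSigma1NormalForm
  exact ⟨ψ, hψ, fun ρ => (AFml.satIn_stdStr φ ρ).symm.trans <|
    (h stdStr isPA_stdStr ρ).trans <| exists_congr fun a => AFml.satIn_stdStr ψ _⟩

theorem exists_isSigma1 (hP : Sigma1Rel P) : ∃ φ, IsSigma1 φ ∧ ∀ ρ, P ρ ↔ φ.Sat ρ := by
  obtain ⟨φ, hφ, hP⟩ := hP
  refine ⟨.ex φ, .ex (.delta0 hφ), fun ρ => ?_⟩
  simp only [hP, AFml.Sat, consEnv_eq_scons]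

theorem of_delta0Rel (hP : Delta0Rel P) : Sigma1Rel P := by
  obtain ⟨φ, hφ, hP⟩ := hP
  exact (of_isSigma1 (.delta0 hφ)).congr fun ρ => (hP ρ).symm

theorem rename (hP : Sigma1Rel P) (f : ℕ → ℕ) : Sigma1Rel fun ρ => P fun i => ρ (f i) := by
  obtain ⟨φ, hφ, hP⟩ := hP
  refine (of_isSigma1 (.ex (.delta0 (hφ.substAll (liftSub fun i => .var (f i)))))).congr
    fun ρ => ?_
  rw [hP, AFml.Sat]
  refine exists_congr fun a => ?_
  rw [AFml.sat_substAll, consEnv_eq_scons]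
  refine iff_of_eq (congrArg (AFml.Sat · φ) (funext fun i => ?_))
  cases i <;> rfl

instance and (P Q : (ℕ → ℕ) → Prop) [hP : Sigma1Rel P] [hQ : Sigma1Rel Q] :
    Sigma1Rel fun ρ => P ρ ∧ Q ρ := by
  obtain ⟨⟨φ, hφ, hP⟩, ψ, hψ, hQ⟩ := hP.exists_isSigma1, hQ.exists_isSigma1
  exact (of_isSigma1 (.and hφ hψ)).congr fun ρ => and_congr (hP ρ) (hQ ρ)

instance or (P Q : (ℕ → ℕ) → Prop) [hP : Sigma1Rel P] [hQ : Sigma1Rel Q] :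
    Sigma1Rel fun ρ => P ρ ∨ Q ρ := by
  obtain ⟨⟨φ, hφ, hP⟩, ψ, hψ, hQ⟩ := hP.exists_isSigma1, hQ.exists_isSigma1
  exact (of_isSigma1 (.or hφ hψ)).congr fun ρ => or_congr (hP ρ) (hQ ρ)

instance ex (Q : ℕ → (ℕ → ℕ) → Prop) [hQ : Sigma1Rel fun ρ => Q (ρ 0) (fun i => ρ (i + 1))] :
    Sigma1Rel fun ρ => ∃ i, Q i ρ := by
  obtain ⟨φ, hφ, hQ⟩ := hQ.exists_isSigma1
  refine (of_isSigma1 hφ.ex).congr fun ρ => exists_congr fun a => ?_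
  rw [consEnv_eq_scons]
  exact hQ (scons a ρ)

/-- The collection principle: a single bound works for the witnesses of all `i ≤ n`. -/
theorem boundedAll_var (Q : ℕ → (ℕ → ℕ) → Prop) (k : ℕ)
    (hQ : Sigma1Rel fun ρ => Q (ρ 0) (fun i => ρ (i + 1))) :
    Sigma1Rel fun ρ => ∀ i ≤ ρ k, Q i ρ := by
  obtain ⟨φ, hφ, hQ⟩ := hQ
  refine ⟨boundedAll (k + 1) (boundedEx 1 (φ.substAll skipTwo)),
    (hφ.substAll _).boundedEx.boundedAll, fun ρ => ?_⟩
  have hQ (i : ℕ) : Q i ρ ↔ ∃ a, φ.Sat (scons a (scons i ρ)) := hQ (scons i ρ)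
  have sat_skipTwo (a i w : ℕ) : (φ.substAll skipTwo).Sat (scons a (scons i (scons w ρ))) ↔
      φ.Sat (scons a (scons i ρ)) :=
    (AFml.satIn_stdStr _ _).symm.trans <|
      (satIn_skipTwo stdStr φ a i w ρ).trans (AFml.satIn_stdStr _ _)
  simp only [hQ, sat_boundedAll, sat_boundedEx, scons_zero, scons_succ, sat_skipTwo]
  constructor
  · intro h
    choose! f hf using h
    exact ⟨(Finset.range (ρ k + 1)).sup f, fun i hi =>
      ⟨f i, Finset.le_sup (Finset.mem_range_succ_iff.2 hi), hf i hi⟩⟩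
  · rintro ⟨w, hw⟩ i hi
    obtain ⟨a, -, ha⟩ := hw i hi
    exact ⟨a, ha⟩

theorem comp (t : (ℕ → ℕ) → ℕ) (Q : ℕ → (ℕ → ℕ) → Prop) (ht : Sigma1Fun t)
    (hQ : Sigma1Rel fun ρ => Q (ρ 0) (fun i => ρ (i + 1))) : Sigma1Rel fun ρ => Q (t ρ) ρ := by
  have ht := ht.sigma1Rel_graph
  refine (ex fun a ρ => a = t ρ ∧ Q a ρ).congr fun ρ => ?_
  simp only [exists_eq_left]

end Sigma1Rel

theorem Sigma1Fun.rename {t : (ℕ → ℕ) → ℕ} (ht : Sigma1Fun t) (f : ℕ → ℕ) :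
    Sigma1Fun fun ρ => t fun i => ρ (f i) :=
  ⟨ht.sigma1Rel_graph.rename fun i => Nat.casesOn i 0 fun j => f j + 1⟩

/-- `Σ₁` sets of numbers. -/
abbrev Sigma1Pred (P : ℕ → Prop) : Prop := Sigma1Rel fun ρ => P (ρ 0)

/-- `Σ₁` binary relations. -/
abbrev Sigma1Pred₂ (P : ℕ → ℕ → Prop) : Prop := Sigma1Rel fun ρ => P (ρ 0) (ρ 1)

/-- `Σ₁` ternary relations. -/
abbrev Sigma1Pred₃ (P : ℕ → ℕ → ℕ → Prop) : Prop := Sigma1Rel fun ρ => P (ρ 0) (ρ 1) (ρ 2)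

section

variable (t s r : (ℕ → ℕ) → ℕ) [ht : Sigma1Fun t] [hs : Sigma1Fun s] [hr : Sigma1Fun r]

theorem Sigma1Pred.comp {P : ℕ → Prop} (h : Sigma1Pred P) : Sigma1Rel fun ρ => P (t ρ) :=
  Sigma1Rel.comp t (fun a _ => P a) ht h

theorem Sigma1Pred₂.comp {P : ℕ → ℕ → Prop} (h : Sigma1Pred₂ P) :
    Sigma1Rel fun ρ => P (t ρ) (s ρ) :=
  Sigma1Rel.comp t (fun a ρ => P a (s ρ)) ht <|
    Sigma1Rel.comp (fun ρ => s fun i => ρ (i + 1)) (fun b ρ => P (ρ 0) b) (hs.rename _) <|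
      Sigma1Rel.rename h fun | 0 => 1 | _ => 0

theorem Sigma1Pred₃.comp {P : ℕ → ℕ → ℕ → Prop} (h : Sigma1Pred₃ P) :
    Sigma1Rel fun ρ => P (t ρ) (s ρ) (r ρ) :=
  Sigma1Rel.comp t (fun a ρ => P a (s ρ) (r ρ)) ht <|
    Sigma1Rel.comp (fun ρ => s fun i => ρ (i + 1)) (fun b ρ => P (ρ 0) b (r fun i => ρ (i + 1)))
      (hs.rename _) <|
      Sigma1Rel.comp (fun ρ => r fun i => ρ (i + 2)) (fun c ρ => P (ρ 1) (ρ 0) c) (hr.rename _) <|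
        Sigma1Rel.rename h fun | 0 => 2 | 1 => 1 | _ => 0

end

namespace Sigma1Fun

instance var (k : ℕ) : Sigma1Fun fun ρ => ρ k :=
  ⟨.of_delta0Rel <| .eq (fun ρ => ρ 0) fun ρ => ρ (k + 1)⟩

instance const (k : ℕ) : Sigma1Fun fun _ => k :=
  ⟨.of_delta0Rel <| .eq (fun ρ => ρ 0) fun _ => k⟩

section

variable (t s : (ℕ → ℕ) → ℕ) [ht : Sigma1Fun t] [hs : Sigma1Fun s]

theorem of_graph₂ {F : ℕ → ℕ → ℕ} (h : Sigma1Pred₃ fun a b c => c = F a b) :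
    Sigma1Fun fun ρ => F (t ρ) (s ρ) :=
  have := ht.rename (· + 1)
  have := hs.rename (· + 1)
  ⟨h.comp (fun ρ => t fun i => ρ (i + 1)) (fun ρ => s fun i => ρ (i + 1)) fun ρ => ρ 0⟩

instance add : Sigma1Fun fun ρ => t ρ + s ρ :=
  of_graph₂ t s (F := (· + ·)) <| .of_delta0Rel inferInstance

instance mul : Sigma1Fun fun ρ => t ρ * s ρ :=
  of_graph₂ t s (F := (· * ·)) <| .of_delta0Rel inferInstance

instance pair : Sigma1Fun fun ρ => Nat.pair (t ρ) (s ρ) :=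
  of_graph₂ t s <| .of_delta0Rel inferInstance

instance beta : Sigma1Fun fun ρ => Nat.beta (t ρ) (s ρ) :=
  of_graph₂ t s <| .of_delta0Rel inferInstance

end

end Sigma1Fun

namespace Sigma1Rel

variable (t s : (ℕ → ℕ) → ℕ) [ht : Sigma1Fun t] [hs : Sigma1Fun s]

instance eq : Sigma1Rel fun ρ => t ρ = s ρ :=
  comp t (fun a ρ => a = s ρ) ht hs.sigma1Rel_graph

instance le : Sigma1Rel fun ρ => t ρ ≤ s ρ :=
  Sigma1Pred₂.comp t s <| of_delta0Rel <| .le (fun ρ => ρ 0) fun ρ => ρ 1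

instance lt : Sigma1Rel fun ρ => t ρ < s ρ :=
  Sigma1Pred₂.comp t s <| of_delta0Rel <| .lt (fun ρ => ρ 0) fun ρ => ρ 1

instance ne : Sigma1Rel fun ρ => t ρ ≠ s ρ :=
  Sigma1Pred₂.comp t s <| of_delta0Rel <| .not fun ρ => ρ 0 = ρ 1

instance boundedAll (Q : ℕ → (ℕ → ℕ) → Prop)
    [hQ : Sigma1Rel fun ρ => Q (ρ 0) (fun i => ρ (i + 1))] :
    Sigma1Rel fun ρ => ∀ i, i < t ρ → Q i ρ := by
  have : Sigma1Rel fun ρ => Q (ρ 0) fun i => ρ (i + 2) := hQ.rename fun | 0 => 0 | j + 1 => j + 2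
  refine comp t (fun b ρ => ∀ i, i < b → Q i ρ) ht <|
    (boundedAll_var (fun i ρ => ρ 0 ≤ i ∨ Q i fun j => ρ (j + 1)) 0 inferInstance).congr
      fun ρ => forall_congr' fun i => ?_
  grind

end Sigma1Rel

/-! ### Finite sequences -/

theorem exists_beta (n : ℕ) (f : ℕ → ℕ) : ∃ q, ∀ i < n, Nat.beta q i = f i :=
  ⟨Nat.unbeta ((List.range n).map f), fun i hi => by
    simpa using Nat.beta_unbeta_coe ((List.range n).map f) ⟨i, by simpa using hi⟩⟩

/-- Membership of `x` in the finite set of numbers coded by `g`. -/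
def MemCode (g x : ℕ) : Prop := ∃ i < g.unpair.1, Nat.beta g.unpair.2 i = x

theorem memCode_iff (g x : ℕ) : MemCode g x ↔
    ∃ n ≤ g, ∃ q ≤ g, g = Nat.pair n q ∧ ∃ i ≤ n, i < n ∧ x = Nat.beta q i := by
  constructor
  · rintro ⟨i, hi, hx⟩
    exact ⟨_, Nat.unpair_left_le g, _, Nat.unpair_right_le g, (Nat.pair_unpair g).symm, i, hi.le,
      hi, hx.symm⟩
  · rintro ⟨n, -, q, -, rfl, i, -, hi, rfl⟩
    exact ⟨i, by rwa [Nat.unpair_pair], by rw [Nat.unpair_pair]⟩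

instance Delta0Rel.memCode (i j : ℕ) : Delta0Rel fun ρ => MemCode (ρ i) (ρ j) := by
  simp only [memCode_iff]
  infer_instance

section

variable (t s : (ℕ → ℕ) → ℕ) [Sigma1Fun t] [Sigma1Fun s]

instance Sigma1Rel.memCode : Sigma1Rel fun ρ => MemCode (t ρ) (s ρ) :=
  Sigma1Pred₂.comp t s <| .of_delta0Rel inferInstance

instance Sigma1Rel.not_memCode : Sigma1Rel fun ρ => ¬ MemCode (t ρ) (s ρ) :=
  Sigma1Pred₂.comp (P := fun g x => ¬ MemCode g x) t s <| .of_delta0Rel inferInstance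

end

theorem exists_memCode (F : Finset ℕ) : ∃ g, ∀ x, MemCode g x ↔ x ∈ F := by
  obtain ⟨q, hq⟩ := exists_beta F.toList.length fun i => F.toList.getD i 0
  refine ⟨Nat.pair F.toList.length q, fun x => ?_⟩
  rw [MemCode, Nat.unpair_pair, ← Finset.mem_toList, List.mem_iff_getElem]
  exact exists_congr fun i => by grind

/-- The closure of the axioms `A` under the rules deriving `x` from `y` and `z` if `R x y z`. -/
inductive DerivClosure (A : ℕ → Prop) (R : ℕ → ℕ → ℕ → Prop) : ℕ → Prop
  | ax {x} : A x → DerivClosure A R x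
  | rule {x y z} : R x y z → DerivClosure A R y → DerivClosure A R z → DerivClosure A R x

/-- The first `n` values of `f` form a derivation from the axioms `A` by the rules `R`. -/
def IsDerivSeq (A : ℕ → Prop) (R : ℕ → ℕ → ℕ → Prop) (n : ℕ) (f : ℕ → ℕ) : Prop :=
  ∀ i < n, A (f i) ∨ ∃ j < i, ∃ k < i, R (f i) (f j) (f k)

section

variable {A : ℕ → Prop} {R : ℕ → ℕ → ℕ → Prop}

theorem IsDerivSeq.congr {n : ℕ} {f g : ℕ → ℕ} (h : IsDerivSeq A R n f) (hfg : ∀ i < n, g i = f i) :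
    IsDerivSeq A R n g := by
  unfold IsDerivSeq at *
  grind

theorem IsDerivSeq.derivClosure {n : ℕ} {f : ℕ → ℕ} (h : IsDerivSeq A R n f) {i : ℕ}
    (hi : i < n) : DerivClosure A R (f i) := by
  induction i using Nat.strong_induction_on with
  | _ i ih =>
    obtain h | ⟨j, hj, k, hk, h⟩ := h i hi
    · exact .ax h
    · exact .rule h (ih j hj (hj.trans hi)) (ih k hk (hk.trans hi))

theorem IsDerivSeq.append {n m : ℕ} {f g : ℕ → ℕ} (hf : IsDerivSeq A R n f)
    (hg : IsDerivSeq A R m g) :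
    IsDerivSeq A R (n + m) fun i => if i < n then f i else g (i - n) := by
  intro i hi
  rcases lt_or_ge i n with hin | hin
  · obtain h | ⟨j, hj, k, hk, h⟩ := hf i hin
    · exact .inl (by simpa only [if_pos hin] using h)
    · exact .inr ⟨j, hj, k, hk, by simpa only [hin, hj.trans hin, hk.trans hin, if_true] using h⟩
  · obtain h | ⟨j, hj, k, hk, h⟩ := hg (i - n) (by omega)
    · exact .inl (by simpa only [if_neg hin.not_gt] using h)
    · exact .inr ⟨n + j, by omega, n + k, by omega, by simpa [hin.not_gt] using h⟩

theorem IsDerivSeq.update {n x j k : ℕ} {f : ℕ → ℕ} (hf : IsDerivSeq A R n f) (hj : j < n)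
    (hk : k < n) (h : R x (f j) (f k)) : IsDerivSeq A R (n + 1) (Function.update f n x) := by
  intro i hi
  obtain hin | rfl := Nat.lt_succ_iff_lt_or_eq.1 hi
  · exact (hf.congr fun l hl => Function.update_of_ne hl.ne _ _) i hin
  · exact .inr ⟨j, hj, k, hk, by simpa [Function.update_of_ne, hj.ne, hk.ne] using h⟩

theorem DerivClosure.exists_isDerivSeq {x : ℕ} (h : DerivClosure A R x) :
    ∃ n f, IsDerivSeq A R n f ∧ ∃ i < n, f i = x := by
  induction h with
  | @ax x h => exact ⟨1, fun _ => x, fun i _ => .inl h, 0, one_pos, rfl⟩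
  | @rule x y z h _ _ ihy ihz =>
    obtain ⟨n, f, hf, i, hi, rfl⟩ := ihy
    obtain ⟨m, g, hg, j, hj, rfl⟩ := ihz
    exact ⟨n + m + 1, _, (hf.append hg).update (j := i) (k := n + j) (x := x) (by omega) (by omega)
      (by simpa [hi] using h), n + m, by omega, Function.update_self ..⟩

theorem derivClosure_iff_exists_beta {x : ℕ} : DerivClosure A R x ↔
    ∃ n q, (∃ i, i < n ∧ Nat.beta q i = x) ∧ IsDerivSeq A R n (Nat.beta q) := by
  constructor
  · intro h
    obtain ⟨n, f, hf, i, hi, rfl⟩ := h.exists_isDerivSeq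
    obtain ⟨q, hq⟩ := exists_beta n f
    exact ⟨n, q, ⟨i, hi, hq i hi⟩, hf.congr hq⟩
  · rintro ⟨n, q, ⟨i, hi, rfl⟩, h⟩
    exact h.derivClosure hi

theorem Sigma1Pred.derivClosure (hA : Sigma1Pred A) (hR : Sigma1Pred₃ R) :
    Sigma1Pred (DerivClosure A R) := by
  have (t) [Sigma1Fun t] : Sigma1Rel fun ρ => A (t ρ) := hA.comp t
  have (t s r) [Sigma1Fun t] [Sigma1Fun s] [Sigma1Fun r] :
    Sigma1Rel fun ρ => R (t ρ) (s ρ) (r ρ) := hR.comp t s r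
  simp only [Sigma1Pred, derivClosure_iff_exists_beta, IsDerivSeq]
  infer_instance

end

/-! ### Primitive recursive functions and recursively enumerable sets -/

/-- Functions with a `Σ₁` graph. -/
abbrev Sigma1Graph (f : ℕ → ℕ) : Prop := Sigma1Pred₂ fun x y => y = f x

theorem Sigma1Graph.comp {f : ℕ → ℕ} (h : Sigma1Graph f) (t : (ℕ → ℕ) → ℕ) [ht : Sigma1Fun t] :
    Sigma1Fun fun ρ => f (t ρ) :=
  have := ht.rename (· + 1)
  ⟨Sigma1Pred₂.comp (fun ρ => t fun i => ρ (i + 1)) (fun ρ => ρ 0) h⟩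

theorem Sigma1Fun.sigma1Graph {f : ℕ → ℕ} (h : Sigma1Fun fun ρ => f (ρ 0)) : Sigma1Graph f :=
  h.sigma1Rel_graph.rename fun | 0 => 1 | _ => 0

section

variable (b h : ℕ → ℕ)

/-- The function defined by primitive recursion from the base `b` and the step `h`. -/
def natRec (z n : ℕ) : ℕ := n.rec (b z) fun k y => h (Nat.pair z (Nat.pair k y))

theorem derivClosure_natRec_iff (z n y : ℕ) :
    DerivClosure (fun w => ∃ z, w = Nat.pair z (Nat.pair 0 (b z)))
      (fun w w' _ => ∃ z k y, w' = Nat.pair z (Nat.pair k y) ∧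
        w = Nat.pair z (Nat.pair (k + 1) (h (Nat.pair z (Nat.pair k y)))))
      (Nat.pair z (Nat.pair n y)) ↔ y = natRec b h z n := by
  constructor
  · generalize hw : Nat.pair z (Nat.pair n y) = w
    intro hc
    induction hc generalizing z n y with
    | ax hA =>
      obtain ⟨_, rfl⟩ := hA
      simp only [Nat.pair_eq_pair] at hw
      obtain ⟨rfl, rfl, rfl⟩ := hw
      rfl
    | rule hR _ _ ih _ =>
      obtain ⟨z, k, y, rfl, rfl⟩ := hR
      simp only [Nat.pair_eq_pair] at hw
      obtain ⟨rfl, rfl, rfl⟩ := hw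
      rw [ih _ _ _ rfl]
      rfl
  · rintro rfl
    induction n with
    | zero => exact .ax ⟨z, rfl⟩
    | succ n ih => exact .rule ⟨z, n, _, rfl, rfl⟩ ih ih

variable {b h}

theorem Sigma1Graph.natRec (hb : Sigma1Graph b) (hh : Sigma1Graph h) :
    Sigma1Pred₃ fun z n y => y = natRec b h z n := by
  have (t) [Sigma1Fun t] : Sigma1Fun fun ρ => b (t ρ) := hb.comp t
  have (t) [Sigma1Fun t] : Sigma1Fun fun ρ => h (t ρ) := hh.comp t
  refine Sigma1Rel.congr ?_ fun ρ => (derivClosure_natRec_iff b h (ρ 0) (ρ 1) (ρ 2)).symm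
  exact Sigma1Pred.comp (fun ρ => Nat.pair (ρ 0) (Nat.pair (ρ 1) (ρ 2))) <|
    Sigma1Pred.derivClosure (by unfold Sigma1Pred; infer_instance)
      (by unfold Sigma1Pred₃; infer_instance)

end

theorem Sigma1Graph.unpair_fst : Sigma1Graph fun x => x.unpair.1 := by
  refine (inferInstance : Sigma1Pred₂ fun x y => ∃ b, x = Nat.pair y b).congr fun ρ =>
    ⟨fun h => ⟨(ρ 0).unpair.2, ?_⟩, fun ⟨b, hb⟩ => ?_⟩
  · rw [h, Nat.pair_unpair]
  · simp only [hb, Nat.unpair_pair]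

theorem Sigma1Graph.unpair_snd : Sigma1Graph fun x => x.unpair.2 := by
  refine (inferInstance : Sigma1Pred₂ fun x y => ∃ b, x = Nat.pair b y).congr fun ρ =>
    ⟨fun h => ⟨(ρ 0).unpair.1, ?_⟩, fun ⟨b, hb⟩ => ?_⟩
  · rw [h, Nat.pair_unpair]
  · simp only [hb, Nat.unpair_pair]

namespace Sigma1Fun

variable (t s : (ℕ → ℕ) → ℕ) [Sigma1Fun t] [Sigma1Fun s]

instance unpair_fst : Sigma1Fun fun ρ => (t ρ).unpair.1 := Sigma1Graph.unpair_fst.comp t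

instance unpair_snd : Sigma1Fun fun ρ => (t ρ).unpair.2 := Sigma1Graph.unpair_snd.comp t

end Sigma1Fun

theorem Sigma1Graph.of_primrec {f : ℕ → ℕ} (hf : Nat.Primrec f) : Sigma1Graph f := by
  induction hf with
  | zero => exact (Sigma1Fun.const 0).sigma1Graph
  | succ => exact Sigma1Fun.sigma1Graph (.add (fun ρ => ρ 0) fun _ => 1)
  | left => exact unpair_fst
  | right => exact unpair_snd
  | @pair f g _ _ ihf ihg =>
    have := ihf.comp fun ρ => ρ 0
    have := ihg.comp fun ρ => ρ 0
    exact Sigma1Fun.sigma1Graph inferInstance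
  | @comp f g _ _ ihf ihg =>
    have := ihg.comp fun ρ => ρ 0
    exact Sigma1Fun.sigma1Graph (ihf.comp fun ρ => g (ρ 0))
  | @prec f g _ _ ihf ihg =>
    exact (Sigma1Pred₃.comp (fun ρ => (ρ 0).unpair.1) (fun ρ => (ρ 0).unpair.2) (fun ρ => ρ 1)
      (ihf.natRec ihg))

theorem Sigma1Pred.of_rePred {p : ℕ → Prop} (hp : REPred p) : Sigma1Pred p := by
  obtain ⟨c, hc⟩ := Nat.Partrec.Code.exists_code.1 hp
  have dom_iff (n : ℕ) : p n ↔ (c.eval n).Dom := by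
    rw [hc]
    simp [Part.assert]
  have hf : Nat.Primrec fun w => Encodable.encode (c.evaln w.unpair.1 w.unpair.2) :=
    Primrec.nat_iff.1 <| Primrec.encode.comp <| Nat.Partrec.Code.primrec_evaln.comp <|
      .pair (.pair (Primrec.fst.comp .unpair) (.const c)) (Primrec.snd.comp .unpair)
  have := (Sigma1Graph.of_primrec hf).comp fun ρ => Nat.pair (ρ 0) (ρ 1)
  have : Sigma1Pred fun n => ∃ k,
      Encodable.encode (c.evaln (Nat.pair k n).unpair.1 (Nat.pair k n).unpair.2) ≠ 0 :=
    inferInstance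
  refine this.congr fun ρ => ?_
  rw [dom_iff, Part.dom_iff_mem]
  simp only [Nat.Partrec.Code.evaln_complete, Nat.unpair_pair]
  rw [exists_comm]
  refine exists_congr fun k => ?_
  cases c.evaln k (ρ 0) <;> simp

/-! ### Arithmetized syntax: substitution -/

/-- Coded triples. -/
def triple (a b c : ℕ) : ℕ := Nat.pair a (Nat.pair b c)

theorem triple_inj {a b c a' b' c' : ℕ} :
    triple a b c = triple a' b' c' ↔ a = a' ∧ b = b' ∧ c = c' := by
  simp only [triple, Nat.pair_eq_pair]

instance Sigma1Fun.triple (t s r : (ℕ → ℕ) → ℕ) [Sigma1Fun t] [Sigma1Fun s] [Sigma1Fun r] :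
    Sigma1Fun fun ρ => triple (t ρ) (s ρ) (r ρ) := by
  unfold PLN.triple
  infer_instance

section

variable (VarR : ℕ → ℕ → ℕ → Prop) (UpR : ℕ → ℕ → Prop)

/-- The triples `(e, ⌜t⌝, ⌜t[σ]⌝)` for the variables and the constant `t`, where `VarR e n y` says
that the substitution `σ` coded by `e` sends the variable `n` to the term coded by `y`. The
condition on `e` in the second case only says that `e` codes a substitution. -/
def TermSubstBase (w : ℕ) : Prop :=
  ∃ e x y, w = triple e x y ∧ ((∃ n, VarR e n y ∧ x = Nat.pair 0 n) ∨
    ∃ z, VarR e 0 z ∧ x = Nat.pair 1 0 ∧ y = Nat.pair 1 0)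

/-- The rules passing from triples `(e, ⌜t⌝, ⌜t[σ]⌝)` to those of compound terms. -/
def TermSubstStep (w w₁ w₂ : ℕ) : Prop :=
  ∃ e x₁ y₁, w₁ = triple e x₁ y₁ ∧
    (w = triple e (Nat.pair 2 x₁) (Nat.pair 2 y₁) ∨ ∃ x₂ y₂, w₂ = triple e x₂ y₂ ∧
      (w = triple e (Nat.pair 3 (Nat.pair x₁ x₂)) (Nat.pair 3 (Nat.pair y₁ y₂)) ∨
       w = triple e (Nat.pair 4 (Nat.pair x₁ x₂)) (Nat.pair 4 (Nat.pair y₁ y₂))))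

/-- The graph of substitution in terms, on codes. -/
def TermSubstGraph (e x y : ℕ) : Prop :=
  DerivClosure (TermSubstBase VarR) TermSubstStep (triple e x y)

/-- The triples `(e, ⌜φ⌝, ⌜φ[σ]⌝)` for the atomic formulas `φ`. -/
def FmlSubstBase (w : ℕ) : Prop :=
  ∃ e x₁ y₁ x₂ y₂, TermSubstGraph VarR e x₁ y₁ ∧ TermSubstGraph VarR e x₂ y₂ ∧
    (w = triple e (Nat.pair 0 (Nat.pair x₁ x₂)) (Nat.pair 0 (Nat.pair y₁ y₂)) ∨
     w = triple e (Nat.pair 1 (Nat.pair x₁ x₂)) (Nat.pair 1 (Nat.pair y₁ y₂)))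

/-- The rules passing from triples `(e, ⌜φ⌝, ⌜φ[σ]⌝)` to those of compound formulas; `UpR e e'`
says that `e'` codes the result of pushing the substitution coded by `e` under a binder. -/
def FmlSubstStep (w w₁ w₂ : ℕ) : Prop :=
  ∃ e x₁ y₁, w₁ = triple e x₁ y₁ ∧
    (w = triple e (Nat.pair 2 x₁) (Nat.pair 2 y₁) ∨
     (∃ e₀, UpR e₀ e ∧ (w = triple e₀ (Nat.pair 6 x₁) (Nat.pair 6 y₁) ∨
       w = triple e₀ (Nat.pair 7 x₁) (Nat.pair 7 y₁))) ∨
     ∃ x₂ y₂, w₂ = triple e x₂ y₂ ∧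
      (w = triple e (Nat.pair 3 (Nat.pair x₁ x₂)) (Nat.pair 3 (Nat.pair y₁ y₂)) ∨
       w = triple e (Nat.pair 4 (Nat.pair x₁ x₂)) (Nat.pair 4 (Nat.pair y₁ y₂)) ∨
       w = triple e (Nat.pair 5 (Nat.pair x₁ x₂)) (Nat.pair 5 (Nat.pair y₁ y₂))))

/-- The graph of substitution in formulas, on codes. -/
def FmlSubstGraph (e x y : ℕ) : Prop :=
  DerivClosure (FmlSubstBase VarR) (FmlSubstStep UpR) (triple e x y)

variable {VarR UpR}

theorem sigma1_termSubstGraph (hV : Sigma1Pred₃ VarR) : Sigma1Pred₃ (TermSubstGraph VarR) := by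
  have (t s r) [Sigma1Fun t] [Sigma1Fun s] [Sigma1Fun r] :
    Sigma1Rel fun ρ => VarR (t ρ) (s ρ) (r ρ) := hV.comp t s r
  exact (Sigma1Pred.derivClosure (by unfold Sigma1Pred TermSubstBase; infer_instance)
    (by unfold Sigma1Pred₃ TermSubstStep; infer_instance)).comp _

theorem sigma1_fmlSubstGraph (hV : Sigma1Pred₃ VarR) (hU : Sigma1Pred₂ UpR) :
    Sigma1Pred₃ (FmlSubstGraph VarR UpR) := by
  have (t s r) [Sigma1Fun t] [Sigma1Fun s] [Sigma1Fun r] :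
    Sigma1Rel fun ρ => TermSubstGraph VarR (t ρ) (s ρ) (r ρ) :=
      (sigma1_termSubstGraph hV).comp t s r
  have (t s) [Sigma1Fun t] [Sigma1Fun s] : Sigma1Rel fun ρ => UpR (t ρ) (s ρ) := hU.comp t s
  exact (Sigma1Pred.derivClosure (by unfold Sigma1Pred FmlSubstBase; infer_instance)
    (by unfold Sigma1Pred₃ FmlSubstStep; infer_instance)).comp _

variable {α : Type*} {enc : α → ℕ} {env : α → ℕ → ATerm} {up : α → α}

theorem exists_term_of_derivClosure (hE : Function.Injective enc)
    (hV : ∀ e n y, VarR e n y → ∃ a, e = enc a ∧ y = (env a n).code) {w : ℕ}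
    (hw : DerivClosure (TermSubstBase VarR) TermSubstStep w) :
    ∃ a t, w = triple (enc a) (ATerm.code t) (t.substAll (env a)).code := by
  induction hw with
  | ax h =>
    obtain ⟨e, x, y, rfl, ⟨n, h, rfl⟩ | ⟨z, h, rfl, rfl⟩⟩ := h
    · obtain ⟨a, rfl, rfl⟩ := hV _ _ _ h
      exact ⟨a, .var n, rfl⟩
    · obtain ⟨a, rfl, rfl⟩ := hV _ _ _ h
      exact ⟨a, .zero, rfl⟩
  | rule h _ _ ih₁ ih₂ =>
    obtain ⟨e, x₁, y₁, rfl, h⟩ := h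
    obtain ⟨a, t, ht⟩ := ih₁
    obtain ⟨rfl, rfl, rfl⟩ := triple_inj.1 ht
    obtain rfl | ⟨x₂, y₂, rfl, h⟩ := h
    · exact ⟨a, .succ t, rfl⟩
    · obtain ⟨a', s, hs⟩ := ih₂
      obtain ⟨ha, rfl, rfl⟩ := triple_inj.1 hs
      obtain rfl := hE ha
      obtain rfl | rfl := h
      · exact ⟨a, .add t s, rfl⟩
      · exact ⟨a, .mul t s, rfl⟩

theorem termSubstGraph_substAll {a : α} (hV : ∀ n, VarR (enc a) n (env a n).code) (t : ATerm) :
    TermSubstGraph VarR (enc a) t.code (t.substAll (env a)).code := by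
  unfold TermSubstGraph
  induction t with
  | var n => exact .ax ⟨_, _, _, rfl, .inl ⟨n, hV n, rfl⟩⟩
  | zero => exact .ax ⟨_, _, _, rfl, .inr ⟨_, hV 0, rfl, rfl⟩⟩
  | succ t ih => exact .rule ⟨_, _, _, rfl, .inl rfl⟩ ih ih
  | add t s iht ihs => exact .rule ⟨_, _, _, rfl, .inr ⟨_, _, rfl, .inl rfl⟩⟩ iht ihs
  | mul t s iht ihs => exact .rule ⟨_, _, _, rfl, .inr ⟨_, _, rfl, .inr rfl⟩⟩ iht ihs

theorem termSubstGraph_iff (hE : Function.Injective enc)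
    (hV : ∀ e n y, VarR e n y ↔ ∃ a, e = enc a ∧ y = (env a n).code) (e x y : ℕ) :
    TermSubstGraph VarR e x y ↔
      ∃ a t, e = enc a ∧ x = ATerm.code t ∧ y = (t.substAll (env a)).code := by
  constructor
  · intro h
    obtain ⟨a, t, ht⟩ := exists_term_of_derivClosure hE (fun e n y => (hV e n y).1) h
    exact ⟨a, t, triple_inj.1 ht⟩
  · rintro ⟨a, t, rfl, rfl, rfl⟩
    exact termSubstGraph_substAll (fun n => (hV _ _ _).2 ⟨a, rfl, rfl⟩) t

theorem exists_fml_of_derivClosure (hE : Function.Injective enc)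
    (hV : ∀ e n y, VarR e n y ↔ ∃ a, e = enc a ∧ y = (env a n).code)
    (hU : ∀ e e', UpR e e' → ∃ a, e = enc a ∧ e' = enc (up a))
    (hup : ∀ a, liftSub (env a) = env (up a)) {w : ℕ}
    (hw : DerivClosure (FmlSubstBase VarR) (FmlSubstStep UpR) w) :
    ∃ a φ, w = triple (enc a) (AFml.code φ) (φ.substAll (env a)).code := by
  induction hw with
  | ax h =>
    obtain ⟨e, x₁, y₁, x₂, y₂, h₁, h₂, h⟩ := h
    obtain ⟨a, t, rfl, rfl, rfl⟩ := (termSubstGraph_iff hE hV _ _ _).1 h₁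
    obtain ⟨a', s, ha, rfl, rfl⟩ := (termSubstGraph_iff hE hV _ _ _).1 h₂
    obtain rfl := hE ha
    obtain rfl | rfl := h
    · exact ⟨a, .eq t s, rfl⟩
    · exact ⟨a, .le t s, rfl⟩
  | rule h _ _ ih₁ ih₂ =>
    obtain ⟨e, x₁, y₁, rfl, h⟩ := h
    obtain ⟨a, φ, hφ⟩ := ih₁
    obtain ⟨rfl, rfl, rfl⟩ := triple_inj.1 hφ
    obtain rfl | ⟨e₀, h, h'⟩ | ⟨x₂, y₂, rfl, h⟩ := h
    · exact ⟨a, .neg φ, rfl⟩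
    · obtain ⟨a₀, rfl, ha⟩ := hU _ _ h
      obtain rfl := hE ha
      rw [← hup] at h'
      obtain rfl | rfl := h'
      · exact ⟨a₀, .all φ, rfl⟩
      · exact ⟨a₀, .ex φ, rfl⟩
    · obtain ⟨a', ψ, hψ⟩ := ih₂
      obtain ⟨ha, rfl, rfl⟩ := triple_inj.1 hψ
      obtain rfl := hE ha
      obtain rfl | rfl | rfl := h
      · exact ⟨a, .and φ ψ, rfl⟩
      · exact ⟨a, .or φ ψ, rfl⟩
      · exact ⟨a, .imp φ ψ, rfl⟩

theorem fmlSubstGraph_substAll (hV : ∀ a n, VarR (enc a) n (env a n).code)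
    (hU : ∀ a, UpR (enc a) (enc (up a))) (hup : ∀ a, liftSub (env a) = env (up a))
    (a : α) (φ : AFml) : FmlSubstGraph VarR UpR (enc a) φ.code (φ.substAll (env a)).code := by
  unfold FmlSubstGraph
  induction φ generalizing a with
  | eq t s =>
    exact .ax ⟨_, _, _, _, _, termSubstGraph_substAll (hV a) t, termSubstGraph_substAll (hV a) s,
      .inl rfl⟩
  | le t s =>
    exact .ax ⟨_, _, _, _, _, termSubstGraph_substAll (hV a) t, termSubstGraph_substAll (hV a) s,
      .inr rfl⟩
  | neg φ ih => exact .rule ⟨_, _, _, rfl, .inl rfl⟩ (ih a) (ih a)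
  | and φ ψ ihφ ihψ =>
    exact .rule ⟨_, _, _, rfl, .inr (.inr ⟨_, _, rfl, .inl rfl⟩)⟩ (ihφ a) (ihψ a)
  | or φ ψ ihφ ihψ =>
    exact .rule ⟨_, _, _, rfl, .inr (.inr ⟨_, _, rfl, .inr (.inl rfl)⟩)⟩ (ihφ a) (ihψ a)
  | imp φ ψ ihφ ihψ =>
    exact .rule ⟨_, _, _, rfl, .inr (.inr ⟨_, _, rfl, .inr (.inr rfl)⟩)⟩ (ihφ a) (ihψ a)
  | all φ ih =>
    rw [AFml.substAll, hup]
    exact .rule ⟨_, _, _, rfl, .inr (.inl ⟨_, hU a, .inl rfl⟩)⟩ (ih (up a)) (ih (up a))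
  | ex φ ih =>
    rw [AFml.substAll, hup]
    exact .rule ⟨_, _, _, rfl, .inr (.inl ⟨_, hU a, .inr rfl⟩)⟩ (ih (up a)) (ih (up a))

theorem fmlSubstGraph_iff (hE : Function.Injective enc)
    (hV : ∀ e n y, VarR e n y ↔ ∃ a, e = enc a ∧ y = (env a n).code)
    (hU : ∀ e e', UpR e e' ↔ ∃ a, e = enc a ∧ e' = enc (up a))
    (hup : ∀ a, liftSub (env a) = env (up a)) (e x y : ℕ) :
    FmlSubstGraph VarR UpR e x y ↔
      ∃ a φ, e = enc a ∧ x = AFml.code φ ∧ y = (φ.substAll (env a)).code := by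
  constructor
  · intro h
    obtain ⟨a, φ, hφ⟩ := exists_fml_of_derivClosure hE hV (fun e e' => (hU e e').1) hup h
    exact ⟨a, φ, triple_inj.1 hφ⟩
  · rintro ⟨a, φ, rfl, rfl, rfl⟩
    exact fmlSubstGraph_substAll (fun a n => (hV _ _ _).2 ⟨a, rfl, rfl⟩)
      (fun a => (hU _ _).2 ⟨a, rfl, rfl⟩) hup a φ

end

/-- The values of `liftEnv c`, on codes. -/
def LiftVarCode (c n y : ℕ) : Prop :=
  (n < c ∧ y = Nat.pair 0 n) ∨ (c ≤ n ∧ y = Nat.pair 0 (n + 1))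

theorem liftVarCode_iff (e n y : ℕ) :
    LiftVarCode e n y ↔ ∃ c, e = id c ∧ y = (liftEnv c n).code := by
  simp only [LiftVarCode, liftEnv, id, exists_eq_left', ATerm.code, apply_ite (Nat.pair 0)]
  split_ifs <;> simp only [*, true_and, false_and, false_or] <;> grind

/-- The graph of lifting for terms, on codes. -/
def TermLiftCode (c x y : ℕ) : Prop := TermSubstGraph LiftVarCode c x y

/-- The graph of lifting for formulas, on codes. -/
def FmlLiftCode (c x y : ℕ) : Prop := FmlSubstGraph LiftVarCode (fun c d => d = c + 1) c x y

theorem termLiftCode_iff (c x y : ℕ) :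
    TermLiftCode c x y ↔ ∃ t, x = ATerm.code t ∧ y = (t.lift c).code := by
  rw [TermLiftCode, termSubstGraph_iff Function.injective_id liftVarCode_iff]
  simp only [id, exists_and_left, exists_eq_left', ATerm.lift_eq_substAll]

theorem fmlLiftCode_iff (c x y : ℕ) :
    FmlLiftCode c x y ↔ ∃ φ, x = AFml.code φ ∧ y = (φ.lift c).code := by
  rw [FmlLiftCode, fmlSubstGraph_iff (up := (· + 1)) Function.injective_id liftVarCode_iff
    (by simp) liftSub_liftEnv]
  simp only [id, exists_and_left, exists_eq_left', AFml.lift_eq_substAll]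

/-- The codes of terms. -/
def IsTermCode (x : ℕ) : Prop := ∃ y, TermLiftCode 0 x y

/-- The codes of formulas. -/
def IsFmlCode (x : ℕ) : Prop := ∃ y, FmlLiftCode 0 x y

theorem isTermCode_iff (x : ℕ) : IsTermCode x ↔ ∃ t, x = ATerm.code t := by
  simp only [IsTermCode, termLiftCode_iff]
  exact ⟨fun ⟨_, t, h, _⟩ => ⟨t, h⟩, fun ⟨t, h⟩ => ⟨_, t, h, rfl⟩⟩

theorem isFmlCode_iff (x : ℕ) : IsFmlCode x ↔ ∃ φ, x = AFml.code φ := by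
  simp only [IsFmlCode, fmlLiftCode_iff]
  exact ⟨fun ⟨_, φ, h, _⟩ => ⟨φ, h⟩, fun ⟨φ, h⟩ => ⟨_, φ, h, rfl⟩⟩

section

variable (t s r : (ℕ → ℕ) → ℕ) [Sigma1Fun t] [Sigma1Fun s] [Sigma1Fun r]

theorem sigma1_liftVarCode : Sigma1Pred₃ LiftVarCode := by
  unfold Sigma1Pred₃ LiftVarCode
  infer_instance

instance Sigma1Rel.termLiftCode : Sigma1Rel fun ρ => TermLiftCode (t ρ) (s ρ) (r ρ) :=
  (sigma1_termSubstGraph sigma1_liftVarCode).comp t s r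

instance Sigma1Rel.fmlLiftCode : Sigma1Rel fun ρ => FmlLiftCode (t ρ) (s ρ) (r ρ) :=
  (sigma1_fmlSubstGraph sigma1_liftVarCode
    (by unfold Sigma1Pred₂; infer_instance)).comp t s r

instance Sigma1Rel.isTermCode : Sigma1Rel fun ρ => IsTermCode (t ρ) :=
  Sigma1Pred.comp t (by unfold Sigma1Pred IsTermCode; infer_instance)

instance Sigma1Rel.isFmlCode : Sigma1Rel fun ρ => IsFmlCode (t ρ) :=
  Sigma1Pred.comp t (by unfold Sigma1Pred IsFmlCode; infer_instance)

end

/-- The substitution of the term `p.2` for the variable `p.1`, which closes the gap in the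
numbering of the variables; `singleEnv (0, t)` is `subst0Env t`. -/
def singleEnv (p : ℕ × ATerm) (n : ℕ) : ATerm :=
  if n < p.1 then .var n else if n = p.1 then p.2 else .var (n - 1)

/-- The parameter of `liftSub (singleEnv p)`. -/
def singleUp (p : ℕ × ATerm) : ℕ × ATerm := (p.1 + 1, p.2.lift 0)

/-- The code of the parameter of `singleEnv`. -/
def singleCode (p : ℕ × ATerm) : ℕ := Nat.pair p.1 p.2.code

theorem singleCode_injective : Function.Injective singleCode := by
  rintro ⟨c, t⟩ ⟨d, s⟩ h
  obtain ⟨hc, ht⟩ := Nat.pair_eq_pair.1 h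
  exact Prod.ext hc (ATerm.code_injective ht)

theorem liftSub_singleEnv (p : ℕ × ATerm) : liftSub (singleEnv p) = singleEnv (singleUp p) := by
  obtain ⟨c, t⟩ := p
  funext i
  cases i with
  | zero => simp [liftSub, singleEnv, singleUp]
  | succ i =>
    simp only [liftSub, singleEnv, singleUp, add_lt_add_iff_right, add_left_inj]
    split_ifs with hlt heq
    · simp [ATerm.lift]
    · rfl
    · simp only [ATerm.lift, not_lt_zero, if_false, ATerm.var.injEq]
      omega

theorem singleEnv_zero (t : ATerm) : singleEnv (0, t) = subst0Env t := by
  funext i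
  cases i <;> simp [singleEnv, subst0Env]

/-- The values of `singleEnv`, on codes. -/
def SingleVarCode (e n y : ℕ) : Prop :=
  ∃ c t, e = Nat.pair c t ∧ IsTermCode t ∧ ((n < c ∧ y = Nat.pair 0 n) ∨ (n = c ∧ y = t) ∨
    ∃ k, n = k + 1 ∧ c ≤ k ∧ y = Nat.pair 0 k)

/-- The graph of `singleUp`, on codes. -/
def SingleUpCode (e d : ℕ) : Prop :=
  ∃ c t t', e = Nat.pair c t ∧ TermLiftCode 0 t t' ∧ d = Nat.pair (c + 1) t'

theorem code_singleEnv_iff (c n y : ℕ) (t : ATerm) : y = (singleEnv (c, t) n).code ↔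
    (n < c ∧ y = Nat.pair 0 n) ∨ (n = c ∧ y = t.code) ∨
      ∃ k, n = k + 1 ∧ c ≤ k ∧ y = Nat.pair 0 k := by
  rw [singleEnv]
  split_ifs with hlt heq
  · grind [ATerm.code]
  · grind
  · obtain ⟨k, rfl⟩ : ∃ k, n = k + 1 := ⟨n - 1, by omega⟩
    simp only [ATerm.code, Nat.add_sub_cancel]
    grind

theorem singleVarCode_iff (e n y : ℕ) :
    SingleVarCode e n y ↔ ∃ p, e = singleCode p ∧ y = (singleEnv p n).code := by
  simp only [SingleVarCode, isTermCode_iff, Prod.exists, code_singleEnv_iff, singleCode]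
  constructor
  · rintro ⟨c, _, rfl, ⟨t, rfl⟩, h⟩
    exact ⟨c, t, rfl, h⟩
  · rintro ⟨c, t, rfl, h⟩
    exact ⟨c, _, rfl, ⟨t, rfl⟩, h⟩

theorem singleUpCode_iff (e d : ℕ) :
    SingleUpCode e d ↔ ∃ p, e = singleCode p ∧ d = singleCode (singleUp p) := by
  simp only [SingleUpCode, termLiftCode_iff]
  constructor
  · rintro ⟨c, _, _, rfl, ⟨t, rfl, rfl⟩, rfl⟩
    exact ⟨(c, t), rfl, rfl⟩
  · rintro ⟨⟨c, t⟩, rfl, rfl⟩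
    exact ⟨c, _, _, rfl, ⟨t, rfl, rfl⟩, rfl⟩

/-- The graph of the substitution `(t, φ) ↦ φ.subst0 t`, on codes. -/
def Subst0Code (s x y : ℕ) : Prop := FmlSubstGraph SingleVarCode SingleUpCode (Nat.pair 0 s) x y

instance Sigma1Rel.subst0Code (t s r : (ℕ → ℕ) → ℕ) [Sigma1Fun t] [Sigma1Fun s] [Sigma1Fun r] :
    Sigma1Rel fun ρ => Subst0Code (t ρ) (s ρ) (r ρ) :=
  (sigma1_fmlSubstGraph (by unfold Sigma1Pred₃ SingleVarCode; infer_instance)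
    (by unfold Sigma1Pred₂ SingleUpCode; infer_instance)).comp (fun ρ => Nat.pair 0 (t ρ)) s r

theorem subst0Code_iff (s x y : ℕ) : Subst0Code s x y ↔
    ∃ t φ, s = ATerm.code t ∧ x = AFml.code φ ∧ y = (φ.subst0 t).code := by
  rw [Subst0Code,
    fmlSubstGraph_iff singleCode_injective singleVarCode_iff singleUpCode_iff liftSub_singleEnv]
  constructor
  · rintro ⟨⟨c, t⟩, φ, h, rfl, rfl⟩
    obtain ⟨rfl, rfl⟩ := Nat.pair_eq_pair.1 h
    exact ⟨t, φ, rfl, rfl, by rw [singleEnv_zero, AFml.subst0]⟩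
  · rintro ⟨t, φ, rfl, rfl, rfl⟩
    exact ⟨(0, t), φ, rfl, rfl, by rw [singleEnv_zero, AFml.subst0]⟩

theorem Sigma1Graph.of_succ {f g : ℕ → ℕ} (hg : Sigma1Graph g)
    (hf : ∀ n, f (n + 1) = g (f n)) : Sigma1Graph f := by
  have hstep := hg.comp fun ρ => (ρ 0).unpair.2.unpair.2
  have hrec (n : ℕ) : f n = PLN.natRec (fun _ => f 0) (fun w => g w.unpair.2.unpair.2) 0 n := by
    induction n with
    | zero => rfl
    | succ n ih => rw [hf, ih]; simp only [PLN.natRec, Nat.unpair_pair]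
  have hbase : Sigma1Graph fun _ : ℕ => f 0 := Sigma1Fun.sigma1Graph (.const (f 0))
  refine ((hbase.natRec (h := fun w => g w.unpair.2.unpair.2) hstep.sigma1Graph).comp
    (fun _ => 0) (fun ρ => ρ 0) fun ρ => ρ 1).congr fun ρ => ?_
  rw [← hrec (ρ 0)]

namespace Sigma1Fun

variable (t s : (ℕ → ℕ) → ℕ) [Sigma1Fun t] [Sigma1Fun s]

instance sub : Sigma1Fun fun ρ => t ρ - s ρ := by
  have : Sigma1Pred₃ fun a b c => a = c + b ∨ (a < b ∧ c = 0) := by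
    unfold Sigma1Pred₃; infer_instance
  exact of_graph₂ t s (this.congr fun ρ => by omega)

instance min : Sigma1Fun fun ρ => min (t ρ) (s ρ) := by
  have : Sigma1Pred₃ fun a b c => (a ≤ b ∧ c = a) ∨ (b ≤ a ∧ c = b) := by
    unfold Sigma1Pred₃; infer_instance
  exact of_graph₂ t s (this.congr fun ρ => by omega)

instance max : Sigma1Fun fun ρ => max (t ρ) (s ρ) := by
  have : Sigma1Pred₃ fun a b c => (a ≤ b ∧ c = b) ∨ (b ≤ a ∧ c = a) := by
    unfold Sigma1Pred₃; infer_instance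
  exact of_graph₂ t s (this.congr fun ρ => by omega)

instance two_pow : Sigma1Fun fun ρ => 2 ^ t ρ :=
  Sigma1Graph.comp (f := (2 ^ ·)) (.of_succ (g := (2 * ·))
    (sigma1Graph (.mul (fun _ => 2) fun ρ => ρ 0)) fun n => pow_succ' 2 n) t

instance code_numeral : Sigma1Fun fun ρ => (numeral (t ρ)).code :=
  Sigma1Graph.comp (f := fun n => (numeral n).code)
    (.of_succ (g := Nat.pair 2) (sigma1Graph inferInstance) fun _ => rfl) t

end Sigma1Fun

/-! ### Three-valued evaluation and tautologies -/

/-- The formulas that are atomic for propositional logic. -/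
def AFml.IsPropAtom : AFml → Prop
  | .eq _ _ | .le _ _ | .all _ | .ex _ => True
  | _ => False

/-- The strong Kleene evaluation with truth values `0` (false), `1` (undetermined), `2` (true). -/
def kleeneValue (atm : AFml → ℕ) : AFml → ℕ
  | .neg φ => 2 - kleeneValue atm φ
  | .and φ ψ => min (kleeneValue atm φ) (kleeneValue atm ψ)
  | .or φ ψ => max (kleeneValue atm φ) (kleeneValue atm ψ)
  | .imp φ ψ => max (2 - kleeneValue atm φ) (kleeneValue atm ψ)
  | φ => atm φ

theorem kleeneValue_of_isPropAtom {atm : AFml → ℕ} {φ : AFml} (h : φ.IsPropAtom) :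
    kleeneValue atm φ = atm φ := by
  cases φ <;> first | rfl | exact h.elim

theorem left_le_pair_pair (k m n : ℕ) : m ≤ Nat.pair k (Nat.pair m n) :=
  (Nat.left_le_pair _ _).trans (Nat.right_le_pair _ _)

theorem right_le_pair_pair (k m n : ℕ) : n ≤ Nat.pair k (Nat.pair m n) :=
  (Nat.right_le_pair _ _).trans (Nat.right_le_pair _ _)

theorem kleeneValue_congr {a b : AFml → ℕ} (φ : AFml)
    (h : ∀ ψ : AFml, ψ.code ≤ φ.code → a ψ = b ψ) : kleeneValue a φ = kleeneValue b φ := by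
  induction φ with
  | eq | le | all | ex => exact h _ le_rfl
  | neg φ ih => rw [kleeneValue, kleeneValue, ih fun ψ hψ => h ψ (hψ.trans (Nat.right_le_pair _ _))]
  | and φ ψ ihφ ihψ | or φ ψ ihφ ihψ | imp φ ψ ihφ ihψ =>
    rw [kleeneValue, kleeneValue, ihφ fun χ hχ => h χ (hχ.trans (left_le_pair_pair _ _ _)),
      ihψ fun χ hχ => h χ (hχ.trans (right_le_pair_pair _ _ _))]

theorem evalProp_of_kleeneValue {a : AFml → ℕ} {v : AFml → Prop} (φ : AFml)
    (h : ∀ ψ : AFml, ψ.code ≤ φ.code → (a ψ = 0 → ¬ v ψ) ∧ (2 ≤ a ψ → v ψ)) :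
    (kleeneValue a φ = 0 → ¬ φ.evalProp v) ∧ (2 ≤ kleeneValue a φ → φ.evalProp v) := by
  induction φ with
  | eq | le | all | ex => exact h _ le_rfl
  | neg φ ih =>
    have := ih fun ψ hψ => h ψ (hψ.trans (Nat.right_le_pair _ _))
    simp only [kleeneValue, AFml.evalProp]
    grind
  | and φ ψ ihφ ihψ | or φ ψ ihφ ihψ | imp φ ψ ihφ ihψ =>
    have := ihφ fun χ hχ => h χ (hχ.trans (left_le_pair_pair _ _ _))
    have := ihψ fun χ hχ => h χ (hχ.trans (right_le_pair_pair _ _ _))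
    simp only [kleeneValue, AFml.evalProp]
    grind

open Classical in
theorem kleeneValue_two (v : AFml → Prop) [DecidablePred v] (φ : AFml) :
    kleeneValue (fun ψ => if v ψ then 2 else 0) φ = if φ.evalProp v then 2 else 0 := by
  induction φ with
  | eq | le | all | ex => exact if_congr Iff.rfl rfl rfl
  | neg φ ih =>
    simp only [kleeneValue, AFml.evalProp, ih]
    by_cases hφ : φ.evalProp v <;> simp [hφ]
  | and φ ψ ihφ ihψ | or φ ψ ihφ ihψ | imp φ ψ ihφ ihψ =>
    simp only [kleeneValue, AFml.evalProp, ihφ, ihψ]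
    by_cases hφ : φ.evalProp v <;> by_cases hψ : ψ.evalProp v <;> simp [hφ, hψ]

/-- The rules passing from triples `(e, ⌜φ⌝, r)`, where `r` is the Kleene value of `φ` under the
assignment to the atoms coded by `e`, to those of propositional combinations. -/
def KleeneStep (w w₁ w₂ : ℕ) : Prop :=
  ∃ e x₁ r₁, w₁ = triple e x₁ r₁ ∧
    (w = triple e (Nat.pair 2 x₁) (2 - r₁) ∨ ∃ x₂ r₂, w₂ = triple e x₂ r₂ ∧
     (w = triple e (Nat.pair 3 (Nat.pair x₁ x₂)) (min r₁ r₂) ∨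
      w = triple e (Nat.pair 4 (Nat.pair x₁ x₂)) (max r₁ r₂) ∨
      w = triple e (Nat.pair 5 (Nat.pair x₁ x₂)) (max (2 - r₁) r₂)))

section

variable (AtomR : ℕ → ℕ → ℕ → Prop)

/-- The triples `(e, ⌜φ⌝, r)` for the propositional atoms `φ`. -/
def KleeneBase (w : ℕ) : Prop := ∃ e x r, w = triple e x r ∧ AtomR e x r

/-- The graph of the Kleene evaluation on codes, where `AtomR e x r` says that the assignment coded
by `e` gives the value `r` to the propositional atom coded by `x`. -/
def KleeneGraph (e x r : ℕ) : Prop :=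
  DerivClosure (KleeneBase AtomR) KleeneStep (triple e x r)

variable {AtomR}

theorem sigma1_kleeneGraph (h : Sigma1Pred₃ AtomR) : Sigma1Pred₃ (KleeneGraph AtomR) := by
  have (t s r) [Sigma1Fun t] [Sigma1Fun s] [Sigma1Fun r] :
    Sigma1Rel fun ρ => AtomR (t ρ) (s ρ) (r ρ) := h.comp t s r
  exact (Sigma1Pred.derivClosure (by unfold Sigma1Pred KleeneBase; infer_instance)
    (by unfold Sigma1Pred₃ KleeneStep; infer_instance)).comp _

variable {α : Type*} {enc : α → ℕ} {atm : α → AFml → ℕ}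

theorem exists_kleeneValue_of_derivClosure (hE : Function.Injective enc)
    (hA : ∀ e x r, AtomR e x r → ∃ a φ, e = enc a ∧ φ.IsPropAtom ∧ x = φ.code ∧ r = atm a φ)
    {w : ℕ} (hw : DerivClosure (KleeneBase AtomR) KleeneStep w) :
    ∃ a φ, w = triple (enc a) (AFml.code φ) (kleeneValue (atm a) φ) := by
  induction hw with
  | ax h =>
    obtain ⟨e, x, r, rfl, h⟩ := h
    obtain ⟨a, φ, rfl, hφ, rfl, rfl⟩ := hA _ _ _ h
    exact ⟨a, φ, by rw [kleeneValue_of_isPropAtom hφ]⟩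
  | rule h _ _ ih₁ ih₂ =>
    obtain ⟨e, x₁, y₁, rfl, h⟩ := h
    obtain ⟨a, φ, hφ⟩ := ih₁
    obtain ⟨rfl, rfl, rfl⟩ := triple_inj.1 hφ
    obtain rfl | ⟨x₂, y₂, rfl, h⟩ := h
    · exact ⟨a, .neg φ, rfl⟩
    · obtain ⟨a', ψ, hψ⟩ := ih₂
      obtain ⟨ha, rfl, rfl⟩ := triple_inj.1 hψ
      obtain rfl := hE ha
      obtain rfl | rfl | rfl := h
      · exact ⟨a, .and φ ψ, rfl⟩
      · exact ⟨a, .or φ ψ, rfl⟩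
      · exact ⟨a, .imp φ ψ, rfl⟩

theorem kleeneGraph_kleeneValue {a : α}
    (hA : ∀ φ, φ.IsPropAtom → AtomR (enc a) φ.code (atm a φ)) (φ : AFml) :
    KleeneGraph AtomR (enc a) φ.code (kleeneValue (atm a) φ) := by
  unfold KleeneGraph
  induction φ with
  | eq | le | all | ex => exact .ax ⟨_, _, _, rfl, hA _ trivial⟩
  | neg φ ih => exact .rule ⟨_, _, _, rfl, .inl rfl⟩ ih ih
  | and φ ψ ihφ ihψ => exact .rule ⟨_, _, _, rfl, .inr ⟨_, _, rfl, .inl rfl⟩⟩ ihφ ihψ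
  | or φ ψ ihφ ihψ => exact .rule ⟨_, _, _, rfl, .inr ⟨_, _, rfl, .inr (.inl rfl)⟩⟩ ihφ ihψ
  | imp φ ψ ihφ ihψ => exact .rule ⟨_, _, _, rfl, .inr ⟨_, _, rfl, .inr (.inr rfl)⟩⟩ ihφ ihψ

theorem kleeneGraph_iff (hE : Function.Injective enc)
    (hA : ∀ e x r, AtomR e x r ↔ ∃ a φ, e = enc a ∧ φ.IsPropAtom ∧ x = φ.code ∧ r = atm a φ)
    (e x r : ℕ) : KleeneGraph AtomR e x r ↔
      ∃ a φ, e = enc a ∧ x = AFml.code φ ∧ r = kleeneValue (atm a) φ := by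
  constructor
  · intro h
    obtain ⟨a, φ, hφ⟩ := exists_kleeneValue_of_derivClosure hE (fun e x r => (hA e x r).1) h
    exact ⟨a, φ, triple_inj.1 hφ⟩
  · rintro ⟨a, φ, rfl, rfl, rfl⟩
    exact kleeneGraph_kleeneValue (fun φ hφ => (hA _ _ _).2 ⟨a, φ, rfl, hφ, rfl, rfl⟩) φ

end

/-- The codes of formulas that are atomic for propositional logic. -/
def IsPropAtomCode (x : ℕ) : Prop :=
  IsFmlCode x ∧ ∃ y, x = Nat.pair 0 y ∨ x = Nat.pair 1 y ∨ x = Nat.pair 6 y ∨ x = Nat.pair 7 y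

instance Sigma1Rel.isPropAtomCode (t : (ℕ → ℕ) → ℕ) [Sigma1Fun t] :
    Sigma1Rel fun ρ => IsPropAtomCode (t ρ) :=
  Sigma1Pred.comp t (by unfold Sigma1Pred IsPropAtomCode; infer_instance)

theorem isPropAtomCode_iff (x : ℕ) :
    IsPropAtomCode x ↔ ∃ φ : AFml, φ.IsPropAtom ∧ x = φ.code := by
  have (φ : AFml) : (∃ y, φ.code = Nat.pair 0 y ∨ φ.code = Nat.pair 1 y ∨ φ.code = Nat.pair 6 y ∨
      φ.code = Nat.pair 7 y) ↔ φ.IsPropAtom := by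
    cases φ <;> simp [AFml.code, AFml.IsPropAtom, Nat.pair_eq_pair]
  rw [IsPropAtomCode, isFmlCode_iff]
  constructor
  · rintro ⟨⟨φ, rfl⟩, h⟩
    exact ⟨φ, (this φ).1 h, rfl⟩
  · rintro ⟨φ, h, rfl⟩
    exact ⟨⟨φ, rfl⟩, (this φ).2 h⟩

/-- The two-valued assignment to the atoms given by the binary digits of `w`, on codes. -/
def BitAtomCode (w x r : ℕ) : Prop := IsPropAtomCode x ∧
  ∃ a b, b < 2 ^ x ∧ ((w = (2 * a + 1) * 2 ^ x + b ∧ r = 2) ∨ (w = (2 * a) * 2 ^ x + b ∧ r = 0))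

theorem eq_ite_testBit_iff (w x r : ℕ) : r = (if w.testBit x then 2 else 0) ↔ ∃ a b, b < 2 ^ x ∧
    ((w = (2 * a + 1) * 2 ^ x + b ∧ r = 2) ∨ (w = (2 * a) * 2 ^ x + b ∧ r = 0)) := by
  have hdiv (c b : ℕ) (hb : b < 2 ^ x) : (c * 2 ^ x + b) / 2 ^ x = c := by
    rw [mul_comm, Nat.mul_add_div (Nat.two_pow_pos x), Nat.div_eq_of_lt hb, add_zero]
  rw [Nat.testBit_eq_decide_div_mod_eq]
  constructor
  · rintro rfl
    refine ⟨w / 2 ^ x / 2, w % 2 ^ x, Nat.mod_lt _ (Nat.two_pow_pos x), ?_⟩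
    have hw := Nat.div_add_mod' w (2 ^ x)
    rcases Nat.mod_two_eq_zero_or_one (w / 2 ^ x) with h | h
    · exact .inr ⟨by rw [Nat.mul_div_cancel' (Nat.dvd_of_mod_eq_zero h), hw], by simp [h]⟩
    · refine .inl ⟨?_, by simp [h]⟩
      rw [show 2 * (w / 2 ^ x / 2) + 1 = w / 2 ^ x by omega, hw]
  · rintro ⟨a, b, hb, ⟨rfl, rfl⟩ | ⟨rfl, rfl⟩⟩ <;> simp [hdiv _ b hb]

theorem bitAtomCode_iff (e x r : ℕ) : BitAtomCode e x r ↔ ∃ (w : ℕ) (φ : AFml), e = id w ∧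
    φ.IsPropAtom ∧ x = φ.code ∧ r = if Nat.testBit w φ.code then 2 else 0 := by
  rw [BitAtomCode, isPropAtomCode_iff, ← eq_ite_testBit_iff]
  constructor
  · rintro ⟨⟨φ, hφ, rfl⟩, hr⟩
    exact ⟨e, φ, rfl, hφ, rfl, hr⟩
  · rintro ⟨_, φ, rfl, hφ, rfl, hr⟩
    exact ⟨⟨φ, hφ, rfl⟩, hr⟩

/-- The codes of tautologies. The propositional atoms of the formula coded by `x` have codes
`≤ x`, so that all relevant assignments are given by numbers `w < 2 ^ (x + 1)`. -/
def TautCode (x : ℕ) : Prop := IsFmlCode x ∧ ∀ w, w < 2 ^ (x + 1) → KleeneGraph BitAtomCode w x 2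

instance Sigma1Rel.tautCode (t : (ℕ → ℕ) → ℕ) [Sigma1Fun t] :
    Sigma1Rel fun ρ => TautCode (t ρ) := by
  have (t s r) [Sigma1Fun t] [Sigma1Fun s] [Sigma1Fun r] :
    Sigma1Rel fun ρ => KleeneGraph BitAtomCode (t ρ) (s ρ) (r ρ) :=
      (sigma1_kleeneGraph (by unfold Sigma1Pred₃ BitAtomCode; infer_instance)).comp t s r
  exact Sigma1Pred.comp t (by unfold Sigma1Pred TautCode; infer_instance)

theorem aTaut_iff_kleeneValue_testBit (φ : AFml) : ATaut φ ↔ ∀ w, w < 2 ^ (φ.code + 1) →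
    kleeneValue (fun ψ => if Nat.testBit w ψ.code then 2 else 0) φ = 2 := by
  classical
  constructor
  · intro h w _
    simpa only [h _, if_true] using kleeneValue_two (fun ψ => w.testBit ψ.code) φ
  · intro h v
    let f : Fin (φ.code + 1) → Bool := fun i => decide (∃ ψ : AFml, ψ.code = i ∧ v ψ)
    have hbit (ψ : AFml) (hψ : ψ.code ≤ φ.code) : (Nat.ofBits f).testBit ψ.code = decide (v ψ) := by
      rw [Nat.testBit_ofBits_lt f _ (Nat.lt_succ_of_le hψ)]
      simp only [f, AFml.code_injective.eq_iff, exists_eq_left]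
    have hval := h (Nat.ofBits f) (Nat.ofBits_lt_two_pow f)
    rw [kleeneValue_congr (b := fun ψ => if v ψ then 2 else 0) φ
      fun ψ hψ => by simp only [hbit ψ hψ, decide_eq_true_eq], kleeneValue_two] at hval
    by_contra hφ
    simp only [hφ, if_false, OfNat.zero_ne_ofNat] at hval

theorem tautCode_iff (x : ℕ) : TautCode x ↔ ∃ φ, x = AFml.code φ ∧ ATaut φ := by
  simp only [TautCode, isFmlCode_iff, aTaut_iff_kleeneValue_testBit,
    kleeneGraph_iff Function.injective_id bitAtomCode_iff]
  constructor
  · rintro ⟨⟨φ, rfl⟩, h⟩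
    refine ⟨φ, rfl, fun w hw => ?_⟩
    obtain ⟨_, _, rfl, hφ, hr⟩ := h w hw
    rw [AFml.code_injective hφ]; exact hr.symm
  · rintro ⟨φ, rfl, h⟩
    exact ⟨⟨φ, rfl⟩, fun w hw => ⟨w, φ, rfl, rfl, (h w hw).symm⟩⟩

/-! ### Theorem codes -/

/-- The codes of the quantifier axioms. -/
def QuantAxiomCode (x : ℕ) : Prop :=
  (∃ t f y, Subst0Code t f y ∧ x = Nat.pair 5 (Nat.pair (Nat.pair 6 f) y)) ∨
  (∃ t f y, Subst0Code t f y ∧ x = Nat.pair 5 (Nat.pair y (Nat.pair 7 f))) ∨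
  (∃ f g, IsFmlCode f ∧ IsFmlCode g ∧ x = Nat.pair 5 (Nat.pair
    (Nat.pair 6 (Nat.pair 5 (Nat.pair f g))) (Nat.pair 5 (Nat.pair (Nat.pair 6 f) (Nat.pair 6 g)))))

/-- The codes of the axioms for vacuous quantification and the definition of `∃`. -/
def VacAxiomCode (x : ℕ) : Prop :=
  (∃ f y, FmlLiftCode 0 f y ∧ x = Nat.pair 5 (Nat.pair f (Nat.pair 6 y))) ∨
  (∃ f, IsFmlCode f ∧ ∃ a b, a = Nat.pair 7 f ∧ b = Nat.pair 2 (Nat.pair 6 (Nat.pair 2 f)) ∧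
    x = Nat.pair 3 (Nat.pair (Nat.pair 5 (Nat.pair a b)) (Nat.pair 5 (Nat.pair b a))))

/-- The codes of the equality axioms. -/
def EqAxiomCode (x : ℕ) : Prop :=
  (∃ t, IsTermCode t ∧ x = Nat.pair 0 (Nat.pair t t)) ∨
  (∃ t s f y z, Subst0Code t f y ∧ Subst0Code s f z ∧
    x = Nat.pair 5 (Nat.pair (Nat.pair 0 (Nat.pair t s)) (Nat.pair 5 (Nat.pair y z))))

/-- The codes of the axioms of the calculus, where `p` recognizes the codes of the nonlogical
axioms. -/
def AxiomCode (p : ℕ → Prop) (x : ℕ) : Prop :=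
  (IsFmlCode x ∧ p x) ∨ TautCode x ∨ QuantAxiomCode x ∨ VacAxiomCode x ∨ EqAxiomCode x

/-- Modus ponens and generalization on codes. -/
def RuleCode (x x₁ x₂ : ℕ) : Prop := x₁ = Nat.pair 5 (Nat.pair x₂ x) ∨ x = Nat.pair 6 x₁

/-- The codes of the theorems of the theory `Γ`. -/
def TheoremCode (Γ : Set AFml) (x : ℕ) : Prop := ∃ φ, x = AFml.code φ ∧ Proves Γ φ

theorem theoremCode_code {Γ : Set AFml} {φ : AFml} : TheoremCode Γ φ.code ↔ Proves Γ φ := by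
  simp only [TheoremCode, AFml.code_injective.eq_iff, exists_eq_left']

theorem sigma1Pred_axiomCode {p : ℕ → Prop} (hp : Sigma1Pred p) : Sigma1Pred (AxiomCode p) := by
  have (t) [Sigma1Fun t] : Sigma1Rel fun ρ => p (t ρ) := hp.comp t
  have (t) [Sigma1Fun t] : Sigma1Rel fun ρ => QuantAxiomCode (t ρ) :=
    Sigma1Pred.comp t (by unfold Sigma1Pred QuantAxiomCode; infer_instance)
  have (t) [Sigma1Fun t] : Sigma1Rel fun ρ => VacAxiomCode (t ρ) :=
    Sigma1Pred.comp t (by unfold Sigma1Pred VacAxiomCode; infer_instance)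
  have (t) [Sigma1Fun t] : Sigma1Rel fun ρ => EqAxiomCode (t ρ) :=
    Sigma1Pred.comp t (by unfold Sigma1Pred EqAxiomCode; infer_instance)
  unfold Sigma1Pred AxiomCode
  infer_instance

section

variable {Γ : Set AFml} {p : ℕ → Prop} {x : ℕ}

theorem QuantAxiomCode.theoremCode (h : QuantAxiomCode x) : TheoremCode Γ x := by
  simp only [QuantAxiomCode, subst0Code_iff, isFmlCode_iff] at h
  rcases h with ⟨_, _, _, ⟨t, φ, rfl, rfl, rfl⟩, rfl⟩ | ⟨_, _, _, ⟨t, φ, rfl, rfl, rfl⟩, rfl⟩ |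
    ⟨_, _, ⟨φ, rfl⟩, ⟨ψ, rfl⟩, rfl⟩
  · exact ⟨_, rfl, .allE φ t⟩
  · exact ⟨_, rfl, .exI φ t⟩
  · exact ⟨_, rfl, .allImp φ ψ⟩

theorem VacAxiomCode.theoremCode (h : VacAxiomCode x) : TheoremCode Γ x := by
  simp only [VacAxiomCode, fmlLiftCode_iff, isFmlCode_iff] at h
  rcases h with ⟨_, _, ⟨φ, rfl, rfl⟩, rfl⟩ | ⟨_, ⟨φ, rfl⟩, _, _, rfl, rfl, rfl⟩
  · exact ⟨_, rfl, .vacAll φ⟩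
  · exact ⟨_, rfl, .exDef φ⟩

theorem EqAxiomCode.theoremCode (h : EqAxiomCode x) : TheoremCode Γ x := by
  simp only [EqAxiomCode, subst0Code_iff, isTermCode_iff] at h
  rcases h with ⟨_, ⟨t, rfl⟩, rfl⟩ |
    ⟨_, _, _, _, _, ⟨t, φ, rfl, rfl, rfl⟩, ⟨s, ψ, rfl, hφψ, rfl⟩, rfl⟩
  · exact ⟨_, rfl, .eqRefl t⟩
  · obtain rfl := AFml.code_injective hφψ
    exact ⟨_, rfl, .eqSubst φ t s⟩

theorem AxiomCode.theoremCode (hp : ∀ φ : AFml, φ ∈ Γ ↔ p φ.code) (h : AxiomCode p x) :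
    TheoremCode Γ x := by
  rcases h with ⟨hx, h⟩ | h | h | h | h
  · obtain ⟨φ, rfl⟩ := (isFmlCode_iff x).1 hx
    exact ⟨φ, rfl, .ax ((hp φ).2 h)⟩
  · obtain ⟨φ, rfl, hφ⟩ := (tautCode_iff x).1 h
    exact ⟨φ, rfl, .taut hφ⟩
  · exact h.theoremCode
  · exact h.theoremCode
  · exact h.theoremCode

theorem RuleCode.theoremCode {x₁ x₂ : ℕ} (h : RuleCode x x₁ x₂) (h₁ : TheoremCode Γ x₁)
    (h₂ : TheoremCode Γ x₂) : TheoremCode Γ x := by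
  obtain ⟨φ, rfl, hφ⟩ := h₁
  obtain ⟨ψ, rfl, hψ⟩ := h₂
  obtain h | rfl := h
  · cases φ with
    | imp φ χ =>
      simp only [AFml.code, Nat.pair_eq_pair, true_and] at h
      obtain rfl := AFml.code_injective h.1
      exact ⟨χ, h.2.symm, .mp hφ hψ⟩
    | _ => simp [AFml.code, Nat.pair_eq_pair] at h
  · exact ⟨_, rfl, .gen hφ⟩

theorem theoremCode_iff_derivClosure (hp : ∀ φ : AFml, φ ∈ Γ ↔ p φ.code) :
    TheoremCode Γ x ↔ DerivClosure (AxiomCode p) RuleCode x := by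
  constructor
  · have fml (φ : AFml) := (isFmlCode_iff φ.code).2 ⟨φ, rfl⟩
    have subst (φ : AFml) (t : ATerm) := (subst0Code_iff t.code φ.code _).2 ⟨t, φ, rfl, rfl, rfl⟩
    have quant {y : ℕ} (h : QuantAxiomCode y) : AxiomCode p y := .inr (.inr (.inl h))
    have vac {y : ℕ} (h : VacAxiomCode y) : AxiomCode p y := .inr (.inr (.inr (.inl h)))
    have eq {y : ℕ} (h : EqAxiomCode y) : AxiomCode p y := .inr (.inr (.inr (.inr h)))
    rintro ⟨φ, rfl, h⟩
    induction h with
    | ax h => exact .ax (.inl ⟨fml _, (hp _).1 h⟩)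
    | taut h => exact .ax (.inr (.inl ((tautCode_iff _).2 ⟨_, rfl, h⟩)))
    | mp _ _ ih₁ ih₂ => exact .rule (.inl rfl) ih₁ ih₂
    | allE φ t => exact .ax (quant (.inl ⟨_, _, _, subst φ t, rfl⟩))
    | exI φ t => exact .ax (quant (.inr (.inl ⟨_, _, _, subst φ t, rfl⟩)))
    | allImp φ ψ => exact .ax (quant (.inr (.inr ⟨_, _, fml φ, fml ψ, rfl⟩)))
    | vacAll φ => exact .ax (vac (.inl ⟨_, _, (fmlLiftCode_iff _ _ _).2 ⟨φ, rfl, rfl⟩, rfl⟩))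
    | exDef φ => exact .ax (vac (.inr ⟨_, fml φ, _, _, rfl, rfl, rfl⟩))
    | gen _ ih => exact .rule (.inr rfl) ih ih
    | eqRefl t => exact .ax (eq (.inl ⟨_, (isTermCode_iff _).2 ⟨t, rfl⟩, rfl⟩))
    | eqSubst φ t s => exact .ax (eq (.inr ⟨_, _, _, _, _, subst φ t, subst φ s, rfl⟩))
  · intro h
    induction h with
    | ax h => exact h.theoremCode hp
    | rule h _ _ ih₁ ih₂ => exact h.theoremCode ih₁ ih₂

theorem sigma1Pred_theoremCode (h : Sigma1Pred p) (hp : ∀ φ : AFml, φ ∈ Γ ↔ p φ.code) :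
    Sigma1Pred (TheoremCode Γ) :=
  (Sigma1Pred.derivClosure (sigma1Pred_axiomCode h)
    (by unfold Sigma1Pred₃ RuleCode; infer_instance)).congr
    fun _ => theoremCode_iff_derivClosure hp

end

/-! ### Patterns -/

/-- `Q(⌜Q⌝, n)`: the instance at `n` of the diagonalization of `Q`. -/
def selfApp (Q : AFml) (n : ℕ) : AFml := (Q.subst0 (gnum Q)).subst0 (numeral n)

/-- The graph of `selfApp` on codes. -/
def SelfAppCode (e n z : ℕ) : Prop :=
  ∃ y, Subst0Code (numeral e).code e y ∧ Subst0Code (numeral n).code y z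

instance Sigma1Rel.selfAppCode (t s r : (ℕ → ℕ) → ℕ) [Sigma1Fun t] [Sigma1Fun s] [Sigma1Fun r] :
    Sigma1Rel fun ρ => SelfAppCode (t ρ) (s ρ) (r ρ) :=
  Sigma1Pred₃.comp t s r (by unfold Sigma1Pred₃ SelfAppCode; infer_instance)

theorem selfAppCode_iff (Q : AFml) (n z : ℕ) :
    SelfAppCode Q.code n z ↔ z = (selfApp Q n).code := by
  simp only [SelfAppCode, subst0Code_iff]
  constructor
  · rintro ⟨_, ⟨_, _, h₁, h₂, rfl⟩, _, _, h₃, h₄, rfl⟩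
    rw [← AFml.code_injective h₄, ← AFml.code_injective h₂, ← ATerm.code_injective h₃,
      ← ATerm.code_injective h₁]
    rfl
  · rintro rfl
    exact ⟨_, ⟨_, Q, rfl, rfl, rfl⟩, _, _, rfl, rfl, rfl⟩

/-- The graph of the `k`-fold iteration of `selfApp` on codes. -/
def IterCode : ℕ → ℕ → ℕ → ℕ → Prop
  | 0, _, n, z => z = n
  | k + 1, e, n, z => ∃ y, IterCode k e n y ∧ SelfAppCode e y z

theorem sigma1_iterCode (k : ℕ) : Sigma1Pred₃ (IterCode k) := by
  induction k with
  | zero => unfold Sigma1Pred₃ IterCode; infer_instance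
  | succ k ih =>
    have (t s r) [Sigma1Fun t] [Sigma1Fun s] [Sigma1Fun r] :
      Sigma1Rel fun ρ => IterCode k (t ρ) (s ρ) (r ρ) := ih.comp t s r
    unfold Sigma1Pred₃ IterCode
    infer_instance

theorem iterCode_iff (k : ℕ) (Q φ : AFml) (z : ℕ) :
    IterCode k Q.code φ.code z ↔ z = (iterPred (Q.subst0 (gnum Q)) k φ).code := by
  induction k generalizing z with
  | zero => rfl
  | succ k ih =>
    simp only [IterCode, ih, selfAppCode_iff, exists_eq_left]
    rfl

open Classical in
/-- The three-valued assignment to atoms given by the pattern (code of a finite set) `g`, which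
declares `Q(⌜Q⌝, n)` false for `n ∈ g` and true for `n ∉ g`. The atom `0 = 1` is false, and all
others are undetermined. The bound on `n` makes the assignment decidable. -/
noncomputable def patternAtom (Q : AFml) (g : ℕ) (φ : AFml) : ℕ :=
  if φ = botFml ∨ ∃ n < φ.code + 1, φ = selfApp Q n ∧ MemCode g n then 0
  else if ∃ n < φ.code + 1, φ = selfApp Q n then 2 else 1

theorem patternAtom_botFml (Q : AFml) (g : ℕ) : patternAtom Q g botFml = 0 := by simp [patternAtom]

theorem patternAtom_eq_one {Q φ : AFml} {g : ℕ} (hbot : φ ≠ botFml) (h : ∀ n, φ ≠ selfApp Q n) :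
    patternAtom Q g φ = 1 := by simp [patternAtom, hbot, h]

/-- The clauses defining `patternAtom`, on codes. -/
def PatternAtomClauses (e g x r : ℕ) : Prop :=
  (x = botFml.code ∨ ∃ n, n < x + 1 ∧ SelfAppCode e n x ∧ MemCode g n) ∧ r = 0 ∨
    (x ≠ botFml.code ∧ ∀ n, n < x + 1 → (∃ z, SelfAppCode e n z ∧ x ≠ z) ∨ ¬ MemCode g n) ∧
      ((∃ n, n < x + 1 ∧ SelfAppCode e n x) ∧ r = 2 ∨
        (∀ n, n < x + 1 → ∃ z, SelfAppCode e n z ∧ x ≠ z) ∧ r = 1)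

theorem patternAtomClauses_iff (Q φ : AFml) (g r : ℕ) :
    PatternAtomClauses Q.code g φ.code r ↔ r = patternAtom Q g φ := by
  classical
  rw [patternAtom, eq_ite_iff, eq_ite_iff]
  simp only [PatternAtomClauses, selfAppCode_iff, exists_eq_left, AFml.code_injective.eq_iff,
    AFml.code_injective.ne_iff]
  push Not
  simp only [imp_iff_not_or (b := ¬ MemCode _ _), ne_eq]

/-- The graph of `patternAtom` on codes. -/
def PatternAtomCode (w x r : ℕ) : Prop :=
  ∃ e g, w = Nat.pair e g ∧ IsFmlCode e ∧ IsPropAtomCode x ∧ PatternAtomClauses e g x r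

theorem sigma1_patternAtomCode : Sigma1Pred₃ PatternAtomCode := by
  unfold Sigma1Pred₃ PatternAtomCode PatternAtomClauses
  infer_instance

theorem patternAtomCode_iff (w x r : ℕ) : PatternAtomCode w x r ↔
    ∃ (a : AFml × ℕ) (φ : AFml), w = Nat.pair a.1.code a.2 ∧ φ.IsPropAtom ∧ x = φ.code ∧
      r = patternAtom a.1 a.2 φ := by
  simp only [PatternAtomCode, isFmlCode_iff, isPropAtomCode_iff]
  constructor
  · rintro ⟨_, g, rfl, ⟨Q, rfl⟩, ⟨φ, hφ, rfl⟩, h⟩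
    exact ⟨(Q, g), φ, rfl, hφ, rfl, (patternAtomClauses_iff Q φ g r).1 h⟩
  · rintro ⟨⟨Q, g⟩, φ, rfl, hφ, rfl, h⟩
    exact ⟨_, g, rfl, ⟨Q, rfl⟩, ⟨φ, hφ, rfl⟩, (patternAtomClauses_iff Q φ g r).2 h⟩

/-- The truth values of formulas under the pattern `g`, on codes. -/
def PatternGraph (e g x r : ℕ) : Prop := KleeneGraph PatternAtomCode (Nat.pair e g) x r

theorem patternGraph_iff (Q : AFml) (g x r : ℕ) : PatternGraph Q.code g x r ↔
    ∃ φ, x = AFml.code φ ∧ r = kleeneValue (patternAtom Q g) φ := by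
  have hinj : Function.Injective fun a : AFml × ℕ => Nat.pair a.1.code a.2 := by
    rintro ⟨Q, g⟩ ⟨Q', g'⟩ h
    simpa only [Nat.pair_eq_pair, AFml.code_injective.eq_iff, Prod.mk.injEq] using h
  rw [PatternGraph, kleeneGraph_iff (atm := fun a => patternAtom a.1 a.2) hinj patternAtomCode_iff]
  constructor
  · rintro ⟨a, φ, h, rfl, rfl⟩
    obtain rfl : (Q, g) = a := hinj h
    exact ⟨φ, rfl, rfl⟩
  · rintro ⟨φ, rfl, rfl⟩
    exact ⟨(Q, g), φ, rfl, rfl, rfl⟩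

instance Sigma1Rel.patternGraph (t s r q : (ℕ → ℕ) → ℕ) [Sigma1Fun t] [Sigma1Fun s]
    [Sigma1Fun r] [Sigma1Fun q] : Sigma1Rel fun ρ => PatternGraph (t ρ) (s ρ) (r ρ) (q ρ) :=
  (sigma1_kleeneGraph sigma1_patternAtomCode).comp (fun ρ => Nat.pair (t ρ) (s ρ)) r q

/-- The pattern `p = ⟨k, g⟩` makes some element of `P` false. -/
def Refutes (P : ℕ → Prop) (p e : ℕ) : Prop := ∃ x, P x ∧ PatternGraph e p.unpair.2 x 0

/-- The pattern `p = ⟨k, g⟩` violates an instance of the accessibility axiom `A → □ᵐ⁺¹A` below `k`: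
it makes some `□ᵐ⁺¹A` false without making `A` false. -/
def BadPattern (m p e : ℕ) : Prop :=
  ∃ n x r, n ≤ p.unpair.1 ∧ x ≤ p.unpair.1 ∧ IterCode m e n x ∧ MemCode p.unpair.2 x ∧
    PatternGraph e p.unpair.2 n r ∧ r ≠ 0

theorem sigma1_refutes {P : ℕ → Prop} (h : Sigma1Pred P) : Sigma1Pred₂ (Refutes P) := by
  have (t) [Sigma1Fun t] : Sigma1Rel fun ρ => P (t ρ) := h.comp t
  unfold Sigma1Pred₂ Refutes
  infer_instance

theorem sigma1_badPattern (m : ℕ) : Sigma1Pred₂ (BadPattern m) := by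
  have (t s r) [Sigma1Fun t] [Sigma1Fun s] [Sigma1Fun r] :
    Sigma1Rel fun ρ => IterCode m (t ρ) (s ρ) (r ρ) := (sigma1_iterCode m).comp t s r
  unfold Sigma1Pred₂ BadPattern
  infer_instance

/-! ### The provability predicate -/

/-- `φ(vᵢ, vⱼ)`, for a formula `φ` in the variables `0` and `1`. -/
def AFml.inst₂ (φ : AFml) (i j : ℕ) : AFml := φ.substAll fun n => .var (if n = 0 then i else j)

/-- The binary relation defined by `φ` in `M`. -/
def AFml.Rel (M : AStr) (φ : AFml) (a b : M) : Prop := φ.SatIn M (scons a fun _ => b)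

theorem satIn_inst₂ (M : AStr) (φ : AFml) (i j : ℕ) (ρ : ℕ → M) :
    (φ.inst₂ i j).SatIn M ρ ↔ φ.Rel M (ρ i) (ρ j) := by
  have henv : (fun n => (ATerm.var (if n = 0 then i else j)).valIn M ρ) =
      scons (ρ i) fun _ => ρ j := by
    funext n; cases n <;> rfl
  rw [AFml.inst₂, AFml.satIn_substAll, henv, AFml.Rel]

theorem IsDelta0.inst₂ {φ : AFml} (h : IsDelta0 φ) (i j : ℕ) : IsDelta0 (φ.inst₂ i j) :=
  h.substAll _

theorem freeLt_inst₂ (φ : AFml) {i j K : ℕ} (hi : i < K) (hj : j < K) : (φ.inst₂ i j).FreeLt K :=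
  φ.freeLt_substAll fun n => by change (if n = 0 then i else j) < K; split_ifs <;> assumption

theorem IsPA.rel_std_iff {M : AStr} (hM : IsPA M) {φ : AFml} (h : IsDelta0 φ) (a b : ℕ) :
    φ.Rel M (M.std a) (M.std b) ↔ φ.Rel stdStr a b := by
  rw [AFml.Rel, scons_std M a fun _ => b, hM.satIn_std_iff h, ← AFml.satIn_stdStr]
  rfl

/-- A `Δ₀` formula. -/
abbrev Delta0Fml : Type := {φ : AFml // IsDelta0 φ}

/-- The `Δ₀` matrices of the `Σ₁` relations from which the provability predicate is built.
A candidate trigger is a pair `y = ⟨p, t⟩` of a pattern `p = ⟨k, g⟩` and a witness `t` of the fact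
that `p` refutes a theorem. -/
structure Pieces where
  /-- `t` is a proof of `x` -/
  proof : Delta0Fml
  /-- `x ∈ g` where `y = ⟨⟨k, g⟩, t⟩` -/
  mem : Delta0Fml
  /-- `y = ⟨p, t⟩` where `t` witnesses that the pattern `p` refutes a theorem -/
  refutes : Delta0Fml
  /-- `b = ⟨p, t⟩` where `t` witnesses that the pattern `p` is bad -/
  bad : Delta0Fml
  /-- `x ≤ k` where `b = ⟨⟨k, g⟩, t⟩` -/
  below : Delta0Fml
  /-- `z` witnesses a fixed `Σ₁` sentence -/
  wit : Delta0Fml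

namespace Pieces

variable (S : Pieces)

/-- `vₓ` has a proof below `vᵤ`. -/
def boundedProof (u x : ℕ) : AFml :=
  .and (.le (.var x) (.var u)) (boundedEx u (S.proof.1.inst₂ 0 (x + 1)))

/-- `v_y` is a trigger: its pattern refutes a theorem, contains no code that has a proof below
`v_y`, and disagrees with each bad pattern below `v_y` somewhere in the range in which the latter
is bad. -/
def trigger (y e : ℕ) : AFml := .and (S.refutes.1.inst₂ y e) (.and
  (boundedAll y (.imp (S.mem.1.inst₂ 0 (y + 1)) (.neg (S.boundedProof (y + 1) 0))))
  (boundedAll y (.imp (S.bad.1.inst₂ 0 (e + 1)) (boundedEx 0 (.and (S.below.1.inst₂ 0 1)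
    (.neg (iffF (S.mem.1.inst₂ 0 (y + 2)) (S.mem.1.inst₂ 0 1))))))))

/-- The matrix of the predicate: `v₂` is provable on account of `v₀`, where `v₁` is the code of
the template. The first conjunct is a dummy that makes the argument visible in the formula. -/
def matrix : AFml := .and (.eq (.var 2) (.var 2)) (.or
  (.and (S.trigger 0 1) (.and (boundedAll 0 (.imp (S.wit.1.inst₂ 0 0) (.eq (.var 0) (.var 1))))
    (.and (boundedAll 0 (.imp (S.trigger 0 2) (.eq (.var 0) (.var 1))))
      (.neg (S.mem.1.inst₂ 2 0)))))
  (.or (.and (S.wit.1.inst₂ 0 0) (boundedAll 0 (.neg (S.trigger 0 2))))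
    (.and (S.boundedProof 0 2) (.and (boundedAll 0 (.neg (S.wit.1.inst₂ 0 0)))
      (boundedAll 0 (.neg (S.trigger 0 2)))))))

/-- The predicate with a parameter for the code of this template itself. -/
def template : AFml := .ex S.matrix

/-- The provability predicate. -/
def provPred : AFml := S.template.subst0 (gnum S.template)

section Semantics

variable (M : AStr)

/-- The relation defined by `boundedProof`. -/
def HasProof (u x : M) : Prop := M.le x u ∧ ∃ t, M.le t u ∧ S.proof.1.Rel M t x

/-- The relation defined by `trigger`. -/
def IsTrigger (y e : M) : Prop := S.refutes.1.Rel M y e ∧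
  (∀ x, M.le x y → S.mem.1.Rel M x y → ¬ S.HasProof M y x) ∧
  ∀ b, M.le b y → S.bad.1.Rel M b e →
    ∃ x, M.le x b ∧ S.below.1.Rel M x b ∧ ¬ (S.mem.1.Rel M x y ↔ S.mem.1.Rel M x b)

/-- The relation defined by `matrix`. -/
def Certifies (u e x : M) : Prop :=
  (S.IsTrigger M u e ∧ (∀ z, M.le z u → S.wit.1.Rel M z z → z = u) ∧
    (∀ y, M.le y u → S.IsTrigger M y e → y = u) ∧ ¬ S.mem.1.Rel M x u) ∨
  (S.wit.1.Rel M u u ∧ ∀ y, M.le y u → ¬ S.IsTrigger M y e) ∨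
  (S.HasProof M u x ∧ (∀ z, M.le z u → ¬ S.wit.1.Rel M z z) ∧
    ∀ y, M.le y u → ¬ S.IsTrigger M y e)

theorem satIn_boundedProof (u x : ℕ) (ρ : ℕ → M) :
    (S.boundedProof u x).SatIn M ρ ↔ S.HasProof M (ρ u) (ρ x) := by
  simp only [boundedProof, AFml.SatIn, satIn_boundedEx, satIn_inst₂]
  rfl

theorem satIn_trigger (y e : ℕ) (ρ : ℕ → M) :
    (S.trigger y e).SatIn M ρ ↔ S.IsTrigger M (ρ y) (ρ e) := by
  simp only [trigger, AFml.SatIn, satIn_boundedEx, satIn_boundedAll, satIn_inst₂,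
    satIn_boundedProof, iffF, IsTrigger, ← iff_def]
  rfl

theorem satIn_matrix (ρ : ℕ → M) : S.matrix.SatIn M ρ ↔ S.Certifies M (ρ 0) (ρ 1) (ρ 2) := by
  simp only [matrix, AFml.SatIn, satIn_boundedAll, satIn_inst₂, satIn_boundedProof, satIn_trigger,
    Certifies, true_and]
  rfl

theorem satIn_selfApp_template (ρ : ℕ → M) (n : ℕ) : (selfApp S.template n).SatIn M ρ ↔
    ∃ u, S.Certifies M u (M.std S.template.code) (M.std n) := by
  rw [selfApp, AFml.satIn_subst0, AFml.satIn_subst0, valIn_numeral, gnum, valIn_numeral]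
  generalize S.template.code = e
  exact exists_congr fun u => S.satIn_matrix M _

end Semantics

theorem isDelta0_boundedProof (u x : ℕ) : IsDelta0 (S.boundedProof u x) :=
  .and (.le _ _) (S.proof.2.inst₂ _ _).boundedEx

theorem isDelta0_trigger (y e : ℕ) : IsDelta0 (S.trigger y e) :=
  have mem (i j) : IsDelta0 (S.mem.1.inst₂ i j) := S.mem.2.inst₂ i j
  .and (S.refutes.2.inst₂ _ _) (.and
    (IsDelta0.imp (mem _ _) (S.isDelta0_boundedProof _ _).neg).boundedAll
    (IsDelta0.imp (S.bad.2.inst₂ _ _) (IsDelta0.and (S.below.2.inst₂ _ _)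
      (IsDelta0.and (.imp (mem _ _) (mem _ _))
        (.imp (mem _ _) (mem _ _))).neg).boundedEx).boundedAll)

theorem isDelta0_matrix : IsDelta0 S.matrix :=
  have trig (e) : IsDelta0 (S.trigger 0 e) := S.isDelta0_trigger 0 e
  have wit : IsDelta0 (S.wit.1.inst₂ 0 0) := S.wit.2.inst₂ 0 0
  .and (.eq _ _) (.or
    (.and (trig _) (.and (IsDelta0.imp wit (.eq _ _)).boundedAll
      (.and (IsDelta0.imp (trig _) (.eq _ _)).boundedAll (S.mem.2.inst₂ _ _).neg)))
    (.or (.and wit (trig _).neg.boundedAll)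
      (.and (S.isDelta0_boundedProof _ _) (.and wit.neg.boundedAll (trig _).neg.boundedAll))))

theorem isSigma1_provPred : IsSigma1 S.provPred := .ex (.delta0 (S.isDelta0_matrix.substAll _))

theorem freeLt_template : S.template.FreeLt 2 := by
  simp [template, matrix, trigger, boundedProof, boundedAll, boundedEx, iffF, AFml.FreeLt,
    ATerm.FreeLt, freeLt_inst₂]

theorem freeLt_provPred : S.provPred.FreeLt 1 := by
  unfold provPred gnum
  generalize S.template.code = e
  exact S.freeLt_template.subst0 (freeLt_numeral _ _)

theorem freeLt_selfApp_template (n : ℕ) : (selfApp S.template n).FreeLt 0 :=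
  S.freeLt_provPred.subst0 (freeLt_numeral _ _)

end Pieces

/-! ### Recovering the argument of the predicate -/

theorem lift_numeral (c : ℕ) : ∀ n, (numeral n).lift c = numeral n
  | 0 => rfl
  | n + 1 => congrArg ATerm.succ (lift_numeral c n)

theorem numeral_injective : Function.Injective numeral
  | 0, 0, _ => rfl
  | _ + 1, _ + 1, h => congrArg _ (numeral_injective (ATerm.succ.inj h))

theorem le_code_numeral : ∀ n, n ≤ (numeral n).code
  | 0 => Nat.zero_le _
  | n + 1 => by
    have := le_code_numeral n
    have := Nat.add_le_pair 2 (numeral n).code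
    simp only [numeral, ATerm.code]
    lia

namespace Pieces

variable (S : Pieces)

theorem exists_selfApp_template_eq (n : ℕ) :
    ∃ φ, selfApp S.template n = .ex (.and (.eq (numeral n) (numeral n)) φ) := by
  unfold selfApp gnum
  generalize S.template.code = e
  obtain ⟨R, hR⟩ : ∃ R, S.template = .ex (.and (.eq (.var 2) (.var 2)) R) := ⟨_, rfl⟩
  have h₁ : liftSub (subst0Env (numeral n)) 1 = numeral n := lift_numeral 0 n
  have h₂ : liftSub (subst0Env (numeral e)) 2 = .var 1 := rfl
  simp only [hR, AFml.subst0, AFml.substAll, ATerm.substAll, h₁, h₂]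
  exact ⟨_, rfl⟩

theorem selfApp_template_injective : Function.Injective (selfApp S.template) := by
  intro a b h
  obtain ⟨φ, hφ⟩ := S.exists_selfApp_template_eq a
  obtain ⟨ψ, hψ⟩ := S.exists_selfApp_template_eq b
  rw [hφ, hψ] at h
  simp only [AFml.ex.injEq, AFml.and.injEq, AFml.eq.injEq] at h
  exact numeral_injective h.1.1

theorem le_code_selfApp_template (n : ℕ) : n ≤ (selfApp S.template n).code := by
  obtain ⟨φ, hφ⟩ := S.exists_selfApp_template_eq n
  calc
    n ≤ (numeral n).code := le_code_numeral n
    _ ≤ Nat.pair (numeral n).code (numeral n).code := Nat.left_le_pair _ _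
    _ ≤ (AFml.eq (numeral n) (numeral n)).code := Nat.right_le_pair _ _
    _ ≤ Nat.pair (AFml.eq (numeral n) (numeral n)).code φ.code := Nat.left_le_pair _ _
    _ ≤ (AFml.and (.eq (numeral n) (numeral n)) φ).code := Nat.right_le_pair _ _
    _ ≤ (AFml.ex (.and (.eq (numeral n) (numeral n)) φ)).code := Nat.right_le_pair _ _
    _ = (selfApp S.template n).code := by rw [hφ]

theorem selfApp_template_ne_botFml (n : ℕ) : selfApp S.template n ≠ botFml := by
  obtain ⟨φ, hφ⟩ := S.exists_selfApp_template_eq n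
  simp [hφ, botFml]

open Classical in
theorem patternAtom_selfApp_template (g n : ℕ) :
    patternAtom S.template g (selfApp S.template n) = if MemCode g n then 0 else 2 := by
  simp [patternAtom, S.selfApp_template_ne_botFml, S.selfApp_template_injective.eq_iff,
    S.le_code_selfApp_template n]

theorem satIn_of_kleeneValue_pattern {M : AStr} (hM : IsPA M) {g : ℕ} {ρ : ℕ → M} (φ : AFml)
    (h : ∀ n ≤ φ.code, MemCode g n ↔ ¬ (selfApp S.template n).SatIn M ρ) :
    (kleeneValue (patternAtom S.template g) φ = 0 → ¬ φ.SatIn M ρ) ∧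
      (2 ≤ kleeneValue (patternAtom S.template g) φ → φ.SatIn M ρ) := by
  rw [← AFml.evalProp_satIn]
  refine evalProp_of_kleeneValue φ fun ψ hψ => ?_
  by_cases hbot : ψ = botFml
  · subst hbot
    simpa [patternAtom_botFml] using fun h : botFml.SatIn M ρ => hM.succ_ne_zero _ h.symm
  by_cases happ : ∃ n, ψ = selfApp S.template n
  · obtain ⟨n, rfl⟩ := happ
    have := h n ((S.le_code_selfApp_template n).trans hψ)
    rw [patternAtom_selfApp_template]
    split_ifs <;> simp_all
  · rw [patternAtom_eq_one hbot (not_exists.1 happ)]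
    simp

/-! ### The two possibilities in a model of arithmetic -/

variable {M : AStr}

theorem least_trigger_or_wit (hM : IsPA M) (hwit : ∃ z, S.wit.1.Rel M z z) (e : M) :
    (∃ z, S.wit.1.Rel M z z ∧ ∀ y, M.le y z → ¬ S.IsTrigger M y e) ∨
      ∃ u, S.IsTrigger M u e ∧ (∀ y, S.IsTrigger M y e → M.le u y) ∧
        ∀ z, S.wit.1.Rel M z z → M.le u z := by
  obtain ⟨z, hz, z_le⟩ := hM.exists_least (S.wit.1.inst₂ 0 0) (fun _ => e)
    (by simpa only [satIn_inst₂, scons_zero] using hwit)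
  simp only [satIn_inst₂, scons_zero] at hz z_le
  refine or_iff_not_imp_left.2 fun hno => ?_
  push Not at hno
  obtain ⟨y, hyz, hy⟩ := hno z hz
  obtain ⟨u, hu, u_le⟩ := hM.exists_least (S.trigger 0 1) (fun _ => e)
    ⟨y, (S.satIn_trigger M _ _ _).2 hy⟩
  simp only [satIn_trigger, scons_zero, scons_one] at hu u_le
  exact ⟨u, hu, u_le, fun w hw => hM.le_trans (u_le y hy) (hM.le_trans hyz (z_le w hw))⟩

theorem exists_certifies_iff (hM : IsPA M) {u e : M} (hu : S.IsTrigger M u e)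
    (u_le : ∀ y, S.IsTrigger M y e → M.le u y) (u_le_wit : ∀ z, S.wit.1.Rel M z z → M.le u z)
    (x : M) : (∃ w, S.Certifies M w e x) ↔ ¬ S.mem.1.Rel M x u := by
  constructor
  · rintro ⟨w, ⟨hw, -, hmin, hx⟩ | ⟨hw, hno⟩ | ⟨⟨hxw, t, htw, ht⟩, -, hno⟩⟩ hmem
    · exact hx (hmin u (u_le w hw) hu ▸ hmem)
    · exact hno u (u_le_wit w hw) hu
    · have hwu : M.le w u := (hM.le_total w u).resolve_right fun h => hno u h hu
      exact hu.2.1 x (hM.le_trans hxw hwu) hmem ⟨hM.le_trans hxw hwu, t, hM.le_trans htw hwu, ht⟩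
  · exact fun hx => ⟨u, .inl ⟨hu, fun z hzu hz => hM.le_antisymm hzu (u_le_wit z hz),
      fun y hyu hy => hM.le_antisymm hyu (u_le y hy), hx⟩⟩

end Pieces

/-! ### Choosing the pieces -/

theorem exists_delta0Fml (R : ℕ → ℕ → Prop) [h : Delta0Rel fun ρ => R (ρ 0) (ρ 1)] :
    ∃ φ : Delta0Fml, ∀ a b : ℕ, φ.1.Rel stdStr a b ↔ R a b := by
  obtain ⟨φ, hφ, h⟩ := h.exists_isDelta0
  exact ⟨⟨φ, hφ⟩, fun a b => (AFml.satIn_stdStr φ _).trans (h _)⟩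

theorem IsDelta0.delta0Rel {φ : AFml} (h : IsDelta0 φ) (f : ℕ → ℕ) :
    Delta0Rel fun ρ => φ.Sat fun n => ρ (f n) :=
  ⟨_, h.substAll fun n => .var (f n), fun ρ => φ.sat_substAll ρ _⟩

theorem exists_pair_eq_and_iff {y : ℕ} {Q : ℕ → ℕ → Prop} :
    (∃ p ≤ y, ∃ t ≤ y, y = Nat.pair p t ∧ Q p t) ↔ Q y.unpair.1 y.unpair.2 := by
  constructor
  · rintro ⟨p, -, t, -, rfl, h⟩
    simpa using h
  · exact fun h => ⟨_, Nat.unpair_left_le _, _, Nat.unpair_right_le _, by simp, h⟩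

theorem Sigma1Pred.exists_delta0Fml {P : ℕ → Prop} (h : Sigma1Pred P) :
    ∃ φ : Delta0Fml, ∀ x, P x ↔ ∃ t : ℕ, φ.1.Rel stdStr t x := by
  obtain ⟨φ, hφ, h⟩ := h.exists_isDelta0
  exact ⟨⟨φ, hφ⟩, fun x => (h fun _ => x).trans <|
    exists_congr fun _ => (AFml.satIn_stdStr φ _).symm⟩

theorem Sigma1Pred₂.exists_delta0Fml {P : ℕ → ℕ → Prop} (h : Sigma1Pred₂ P) :
    ∃ φ : Delta0Fml, ∀ p e, P p e ↔ ∃ t : ℕ, φ.1.Rel stdStr (Nat.pair p t) e := by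
  obtain ⟨φ, hφ, h⟩ := h.exists_isDelta0
  have : Delta0Rel fun ρ => φ.Sat (scons (ρ 0) (scons (ρ 1) fun _ => ρ 3)) := by
    refine (hφ.delta0Rel (scons 0 (scons 1 fun _ => 3))).congr fun ρ => iff_of_eq ?_
    congr 1
    funext n
    rcases n with _ | _ | n <;> rfl
  obtain ⟨ψ, hψ⟩ := PLN.exists_delta0Fml fun y e =>
    ∃ p ≤ y, ∃ t ≤ y, y = Nat.pair p t ∧ φ.Sat (scons t (scons p fun _ => e))
  refine ⟨ψ, fun p e => (h (scons p fun _ => e)).trans <| exists_congr fun t => ?_⟩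
  rw [hψ, exists_pair_eq_and_iff (Q := fun p t => φ.Sat (scons t (scons p fun _ => e))),
    Nat.unpair_pair]

theorem exists_delta0Fml_unpair_unpair (R : ℕ → ℕ → ℕ → Prop)
    [Delta0Rel fun ρ => R (ρ 1) (ρ 0) (ρ 4)] :
    ∃ φ : Delta0Fml, ∀ x y : ℕ,
      φ.1.Rel stdStr x y ↔ R y.unpair.1.unpair.1 y.unpair.1.unpair.2 x := by
  obtain ⟨φ, h⟩ := exists_delta0Fml fun x y => ∃ p ≤ y, ∃ t ≤ y, y = Nat.pair p t ∧
    ∃ k ≤ p, ∃ g ≤ p, p = Nat.pair k g ∧ R k g x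
  refine ⟨φ, fun x y => ?_⟩
  rw [h, exists_pair_eq_and_iff (Q := fun p _ => ∃ k ≤ p, ∃ g ≤ p, p = Nat.pair k g ∧ R k g x),
    exists_pair_eq_and_iff (Q := fun k g => R k g x)]

theorem exists_delta0Fml_wit {Γ : Set AFml} (hPA : PA ⊆ Γ) (hill : ¬ Sigma1Sound Γ) :
    ∃ φ : Delta0Fml, (∀ z : ℕ, ¬ φ.1.Rel stdStr z z) ∧
      ∀ M, IsModel M Γ → ∃ z, φ.1.Rel M z z := by
  unfold Sigma1Sound at hill
  push Not at hill
  obtain ⟨σ, hσ, -, hprov, hfalse⟩ := hill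
  obtain ⟨φ, hφ, hσφ⟩ := hσ.hasSigma1NormalForm
  let ψ := φ.substAll fun n => if n = 0 then .var 0 else .zero
  have hψ (M : AStr) (a b : M) : ψ.Rel M a b ↔ φ.SatIn M (scons a fun _ => M.zero) := by
    rw [AFml.Rel, AFml.satIn_substAll]
    refine iff_of_eq (congrArg (AFml.SatIn M · φ) (funext fun n => ?_))
    cases n <;> rfl
  refine ⟨⟨ψ, hφ.substAll _⟩, fun z hz => hfalse ?_, fun M hM => ?_⟩
  · exact (AFml.satIn_stdStr _ _).1 ((hσφ _ isPA_stdStr fun _ => 0).2 ⟨z, (hψ _ _ _).1 hz⟩)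
  · obtain ⟨z, hz⟩ := (hσφ M (fun φ h => hM φ (hPA h)) fun _ => M.zero).1 (hprov.satIn hM _)
    exact ⟨z, (hψ M z z).2 hz⟩

namespace Pieces

/-- The pieces are as intended for the theory `Γ`, a consistent extension of `PA`, and for the
axiom `A → □ᵐ⁺¹A`; the fixed `Σ₁` sentence is false but provable. -/
structure IsAdequate (S : Pieces) (Γ : Set AFml) (m : ℕ) : Prop where
  subset : PA ⊆ Γ
  not_proves_botFml : ¬ Proves Γ botFml
  proof (x : ℕ) : TheoremCode Γ x ↔ ∃ t : ℕ, S.proof.1.Rel stdStr t x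
  mem (x y : ℕ) : S.mem.1.Rel stdStr x y ↔ MemCode y.unpair.1.unpair.2 x
  refutes (p e : ℕ) :
    Refutes (TheoremCode Γ) p e ↔ ∃ t : ℕ, S.refutes.1.Rel stdStr (Nat.pair p t) e
  bad (p e : ℕ) : BadPattern m p e ↔ ∃ t : ℕ, S.bad.1.Rel stdStr (Nat.pair p t) e
  below (x b : ℕ) : S.below.1.Rel stdStr x b ↔ x ≤ b.unpair.1.unpair.1
  not_wit (z : ℕ) : ¬ S.wit.1.Rel stdStr z z
  exists_wit (M : AStr) (hM : IsModel M Γ) : ∃ z, S.wit.1.Rel M z z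

theorem exists_isAdequate {Γ : Set AFml} (hPA : PA ⊆ Γ) (hcons : ¬ Proves Γ botFml)
    (hre : Sigma1Pred (TheoremCode Γ)) (hill : ¬ Sigma1Sound Γ) (m : ℕ) :
    ∃ S : Pieces, S.IsAdequate Γ m := by
  obtain ⟨proof, hproof⟩ := hre.exists_delta0Fml
  obtain ⟨mem, hmem⟩ := exists_delta0Fml_unpair_unpair fun _ g x => MemCode g x
  obtain ⟨refutes, hrefutes⟩ := (sigma1_refutes hre).exists_delta0Fml
  obtain ⟨bad, hbad⟩ := (sigma1_badPattern m).exists_delta0Fml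
  obtain ⟨below, hbelow⟩ := exists_delta0Fml_unpair_unpair fun k _ x => x ≤ k
  obtain ⟨wit, hnowit, hwit⟩ := exists_delta0Fml_wit hPA hill
  exact ⟨⟨proof, mem, refutes, bad, below, wit⟩,
    hPA, hcons, hproof, hmem, hrefutes, hbad, hbelow, hnowit, hwit⟩

/-! ### The predicate defines provability and satisfies accessibility -/

section Transfer

variable (S : Pieces) {M : AStr}

theorem isTrigger_std_iff (hM : IsPA M) (y e : ℕ) :
    S.IsTrigger M (M.std y) (M.std e) ↔ S.IsTrigger stdStr y e := by
  have hstd := S.satIn_trigger stdStr 0 1 (scons y fun _ => e)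
  have hM := hM.satIn_std_iff (S.isDelta0_trigger 0 1) (scons y fun _ => e)
  rw [satIn_trigger] at hM
  exact hM.trans ((AFml.satIn_stdStr _ _).symm.trans hstd)

theorem certifies_std_iff (hM : IsPA M) (u e x : ℕ) :
    S.Certifies M (M.std u) (M.std e) (M.std x) ↔ S.Certifies stdStr u e x := by
  have hstd := S.satIn_matrix stdStr (scons u (scons e fun _ => x))
  have hM := hM.satIn_std_iff S.isDelta0_matrix (scons u (scons e fun _ => x))
  rw [satIn_matrix] at hM
  exact hM.trans ((AFml.satIn_stdStr _ _).symm.trans hstd)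

end Transfer

namespace IsAdequate

variable {S : Pieces} {Γ : Set AFml} {m : ℕ} {M : AStr}

theorem isPA (hS : S.IsAdequate Γ m) (hM : IsModel M Γ) : IsPA M :=
  fun φ hφ => hM φ (hS.subset hφ)

theorem mem_std_iff (hS : S.IsAdequate Γ m) (hM : IsModel M Γ) (x y : ℕ) :
    S.mem.1.Rel M (M.std x) (M.std y) ↔ MemCode y.unpair.1.unpair.2 x :=
  ((hS.isPA hM).rel_std_iff S.mem.2 x y).trans (hS.mem x y)

theorem not_wit_std (hS : S.IsAdequate Γ m) (hM : IsModel M Γ) (z : ℕ) :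
    ¬ S.wit.1.Rel M (M.std z) (M.std z) :=
  fun h => hS.not_wit z (((hS.isPA hM).rel_std_iff S.wit.2 z z).1 h)

theorem not_isTrigger_stdStr (hS : S.IsAdequate Γ m) (y : ℕ) :
    ¬ S.IsTrigger stdStr y S.template.code := by
  intro hy
  obtain ⟨M, hM, ρ, -⟩ := exists_isModel_not_satIn hS.not_proves_botFml
  have hPA := hS.isPA hM
  rw [← S.isTrigger_std_iff hPA] at hy
  obtain ⟨z, hz, hno⟩ | ⟨u, hu, u_le, u_le_wit⟩ := S.least_trigger_or_wit hPA (hS.exists_wit M hM) _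
  · have hzstd (n) : z ≠ M.std n := by
      rintro rfl
      exact hS.not_wit_std hM n hz
    exact hno _ (hPA.std_le_of_nonstandard hzstd y) hy
  obtain ⟨u, -, rfl⟩ := hPA.exists_std_of_le_std (u_le _ hy)
  have hu' := (S.isTrigger_std_iff hPA _ _).1 hu
  obtain ⟨_, ⟨φ, rfl, hφ⟩, hpat⟩ : Refutes (TheoremCode Γ) u.unpair.1 S.template.code :=
    (hS.refutes _ _).2 ⟨u.unpair.2, by simpa only [Nat.pair_unpair] using hu'.1⟩
  obtain ⟨ψ, hψ, h0⟩ := (patternGraph_iff _ _ _ _).1 hpat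
  obtain rfl := AFml.code_injective hψ
  refine (S.satIn_of_kleeneValue_pattern hPA φ fun n _ => ?_).1 h0.symm (hφ.satIn hM ρ)
  rw [satIn_selfApp_template, S.exists_certifies_iff hPA hu u_le u_le_wit, hS.mem_std_iff hM,
    not_not]

theorem exists_certifies_stdStr_iff (hS : S.IsAdequate Γ m) (n : ℕ) :
    (∃ u : ℕ, S.Certifies stdStr u S.template.code n) ↔ TheoremCode Γ n := by
  rw [hS.proof]
  constructor
  · rintro ⟨u, ⟨hu, -⟩ | ⟨hu, -⟩ | ⟨⟨-, t, -, ht⟩, -⟩⟩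
    · exact absurd hu (hS.not_isTrigger_stdStr u)
    · exact absurd hu (hS.not_wit u)
    · exact ⟨t, ht⟩
  · rintro ⟨t, ht⟩
    exact ⟨max n t, .inr (.inr ⟨⟨le_max_left n t, t, le_max_right n t, ht⟩,
      fun z _ => hS.not_wit z, fun y _ => hS.not_isTrigger_stdStr y⟩)⟩

theorem isProvPred (hS : S.IsAdequate Γ m) : IsProvPred Γ S.provPred := by
  refine ⟨S.freeLt_provPred, fun φ => ?_⟩
  change _ ↔ Proves PA (selfApp S.template φ.code)
  rw [← theoremCode_code, ← hS.exists_certifies_stdStr_iff]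
  constructor
  · rintro ⟨u, hu⟩
    refine completeness fun M hM ρ => (S.satIn_selfApp_template M ρ _).2 ?_
    exact ⟨M.std u, (S.certifies_std_iff hM _ _ _).2 hu⟩
  · intro h
    have := (S.satIn_selfApp_template stdStr (fun _ => 0) _).1 (h.satIn isPA_stdStr _)
    simpa only [std_stdStr] using this

/-- The trigger avoids bad patterns because it is nonstandard: every standard pattern that agrees
with it on the standard range in question would have to differ from it. -/
theorem not_badPattern (hS : S.IsAdequate Γ m) (hM : IsModel M Γ) {u : M}
    (hu : S.IsTrigger M u (M.std S.template.code)) {k g : ℕ}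
    (hg : ∀ x ≤ k, MemCode g x ↔ S.mem.1.Rel M (M.std x) u) :
    ¬ BadPattern m (Nat.pair k g) S.template.code := by
  intro hbad
  have hPA := hS.isPA hM
  have hustd (n) : u ≠ M.std n := by
    rintro rfl
    exact hS.not_isTrigger_stdStr n ((S.isTrigger_std_iff hPA _ _).1 hu)
  obtain ⟨t, ht⟩ := (hS.bad _ _).1 hbad
  obtain ⟨x, hxb, hxk, hx⟩ := hu.2.2 _ (hPA.std_le_of_nonstandard hustd _)
    ((hPA.rel_std_iff S.bad.2 _ _).2 ht)
  obtain ⟨x, -, rfl⟩ := hPA.exists_std_of_le_std hxb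
  rw [hPA.rel_std_iff S.below.2, hS.below] at hxk
  simp only [Nat.unpair_pair] at hxk
  refine hx ?_
  rw [hS.mem_std_iff hM]
  simpa only [Nat.unpair_pair] using (hg x hxk).symm

theorem satIn_iterPred (hS : S.IsAdequate Γ m) (hM : IsModel M Γ) {φ : AFml} {ρ : ℕ → M}
    (h : φ.SatIn M ρ) : (iterPred S.provPred (m + 1) φ).SatIn M ρ := by
  classical
  have hPA := hS.isPA hM
  set x := (iterPred S.provPred m φ).code with hx
  change (selfApp S.template x).SatIn M ρ
  rw [satIn_selfApp_template]
  obtain ⟨z, hz, hno⟩ | ⟨u, hu, u_le, u_le_wit⟩ := S.least_trigger_or_wit hPA (hS.exists_wit M hM)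
    (M.std S.template.code)
  · exact ⟨z, .inr (.inl ⟨hz, hno⟩)⟩
  have hcert := S.exists_certifies_iff hPA hu u_le u_le_wit
  rw [hcert]
  intro hxu
  set k := max φ.code x
  obtain ⟨g, hg⟩ := exists_memCode {z ∈ Finset.range (k + 1) | S.mem.1.Rel M (M.std z) u}
  have hg (z) (hz : z ≤ k) : MemCode g z ↔ S.mem.1.Rel M (M.std z) u := by
    simp [hg, Nat.lt_succ_of_le hz]
  refine hS.not_badPattern hM hu hg ⟨φ.code, x, kleeneValue (patternAtom S.template g) φ, ?_⟩
  simp only [Nat.unpair_pair, iterCode_iff, patternGraph_iff]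
  refine ⟨le_max_left _ _, le_max_right _ _, hx, (hg x (le_max_right _ _)).2 hxu, ⟨φ, rfl, rfl⟩,
    fun h0 => (S.satIn_of_kleeneValue_pattern hPA φ fun n hn => ?_).1 h0 h⟩
  rw [satIn_selfApp_template, hcert, not_not]
  exact hg n (hn.trans (le_max_left _ _))

end IsAdequate

end Pieces

/-! ### Propositional semantics of the modal logic -/

theorem IsInterp.evalTC_iff {P : AFml} {f : MFml → AFml} (hf : IsInterp P f) {M : AStr}
    (hM : IsPA M) (ρ : ℕ → M) (A : MFml) :
    A.evalTC (fun B => (f B).SatIn M ρ) ↔ (f A).SatIn M ρ := by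
  obtain ⟨-, hbot, hneg, hand, hor, himp, -⟩ := hf
  induction A with
  | var | box => rfl
  | bot => exact hbot ▸ ⟨False.elim, fun h => hM.succ_ne_zero _ (Eq.symm h)⟩
  | neg A ih => exact hneg A ▸ not_congr ih
  | and A B ihA ihB => exact hand A B ▸ and_congr ihA ihB
  | or A B ihA ihB => exact hor A B ▸ or_congr ihA ihB
  | imp A B ihA ihB => exact himp A B ▸ imp_congr ihA ihB

theorem IsInterp.boxIter {P : AFml} {f : MFml → AFml} (hf : IsInterp P f) (k : ℕ) (A : MFml) :
    f (boxIter k A) = iterPred P k (f A) := by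
  obtain ⟨-, -, -, -, -, -, hbox⟩ := hf
  induction k with
  | zero => rfl
  | succ k ih => rw [PLN.boxIter, hbox, ih, iterPred]

theorem NAProves.evalTC_box {m n : ℕ} {A : MFml} (h : NAProves (m + 1) n A) :
    A.evalTC fun B => ∃ C, B = .box C := by
  induction h with
  | taut h => exact h _
  | acc A => exact fun _ => ⟨_, rfl⟩
  | mp _ _ ih₁ ih₂ => exact ih₁ ih₂
  | nec => exact ⟨_, rfl⟩
  | ros _ ih => exact absurd ⟨_, rfl⟩ ih

theorem isClopen_setOf_evalTC (A : MFml) :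
    IsClopen {v : MFml → Bool | A.evalTC fun B => v B = true} := by
  have atom (B : MFml) : IsClopen {v : MFml → Bool | v B = true} :=
    (isClopen_discrete {true}).preimage (continuous_apply B)
  induction A with
  | var i => exact atom (.var i)
  | box B => exact atom (.box B)
  | bot => exact isClopen_empty
  | neg A ih => exact ih.compl
  | and A B ihA ihB => exact ihA.inter ihB
  | or A B ihA ihB => exact ihA.union ihB
  | imp A B ihA ihB =>
    convert ihA.compl.union ihB using 1
    ext v
    exact imp_iff_not_or

theorem exists_valuation {m n : ℕ} {A : MFml} (hA : ¬ NAProves m n A) :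
    ∃ v : MFml → Prop, (∀ B, NAProves m n B → B.evalTC v) ∧ ¬ A.evalTC v := by
  classical
  let models (B : {B // NAProves m n B}) : Set (MFml → Bool) :=
    {v | B.1.evalTC fun C => v C = true} ∩ {v | A.evalTC fun C => v C = true}ᶜ
  have clopen (B) : IsClopen (models B) :=
    (isClopen_setOf_evalTC B.1).inter (isClopen_setOf_evalTC A).compl
  have : Nonempty {B // NAProves m n B} := ⟨⟨.imp .bot .bot, .taut fun _ => id⟩⟩
  have directed : Directed (· ⊇ ·) models := fun ⟨B, hB⟩ ⟨C, hC⟩ =>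
    ⟨⟨.and B C, .mp (.mp (.taut fun _ h₁ h₂ => ⟨h₁, h₂⟩) hB) hC⟩,
      fun _ h => ⟨h.1.1, h.2⟩, fun _ h => ⟨h.1.2, h.2⟩⟩
  have nonempty (B) : (models B).Nonempty := by
    by_contra hempty
    refine hA (.mp (.taut fun v hBv => ?_) B.2)
    by_contra hAv
    exact hempty ⟨fun C => decide (v C), by simp [models, hBv, hAv]⟩
  obtain ⟨v, hv⟩ := IsCompact.nonempty_iInter_of_directed_nonempty_isCompact_isClosed models
    directed nonempty (fun B => (clopen B).1.isCompact) fun B => (clopen B).1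
  rw [Set.mem_iInter] at hv
  exact ⟨fun C => v C = true, fun B hB => (hv ⟨B, hB⟩).1, (hv (Classical.arbitrary _)).2⟩

/-! ### Subformulas -/

theorem IsSub.trans {A B C : MFml} (h₁ : IsSub A B) (h₂ : IsSub B C) : IsSub A C := by
  induction h₂ with
  | refl => exact h₁
  | neg _ ih => exact ih.neg
  | andL _ ih => exact ih.andL
  | andR _ ih => exact ih.andR
  | orL _ ih => exact ih.orL
  | orR _ ih => exact ih.orR
  | impL _ ih => exact ih.impL
  | impR _ ih => exact ih.impR
  | box _ ih => exact ih.box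

theorem isSub_boxIter (k : ℕ) (A : MFml) : IsSub A (boxIter k A) := by
  induction k with
  | zero => exact .refl A
  | succ k ih => exact ih.box

theorem IsSub.sizeOf_le {A B : MFml} (h : IsSub A B) : sizeOf A ≤ sizeOf B := by
  induction h with
  | refl => exact le_rfl
  | _ _ ih => exact ih.trans (by simp +arith)

theorem finite_setOf_isSub (A : MFml) : {B | IsSub B A}.Finite := by
  induction A with
  | var i => exact (Set.finite_singleton (.var i)).subset fun B hB => by cases hB; rfl
  | bot => exact (Set.finite_singleton .bot).subset fun B hB => by cases hB; rfl
  | neg A ih => exact (ih.insert (.neg A)).subset fun B hB => by cases hB <;> simp_all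
  | box A ih => exact (ih.insert (.box A)).subset fun B hB => by cases hB <;> simp_all
  | and A C ihA ihC =>
    exact ((ihA.union ihC).insert (.and A C)).subset fun B hB => by cases hB <;> simp_all
  | or A C ihA ihC =>
    exact ((ihA.union ihC).insert (.or A C)).subset fun B hB => by cases hB <;> simp_all
  | imp A C ihA ihC =>
    exact ((ihA.union ihC).insert (.imp A C)).subset fun B hB => by cases hB <;> simp_all

/-! ### The exact interpretation -/

theorem AFml.code_ne_pair_eight (φ : AFml) (i : ℕ) : φ.code ≠ Nat.pair 8 i := by
  cases φ <;> simp [AFml.code]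

namespace Pieces

variable {S : Pieces}

/-- The arithmetical interpretation for which the modal logic is complete. It treats the variables
as if they were boxed: `⟨8, i⟩` is not the code of a formula, so the instances of the predicate
that interpret variables differ from those that interpret boxed formulas. -/
def exactInterp (S : Pieces) : MFml → AFml
  | .var i => selfApp S.template (Nat.pair 8 i)
  | .bot => botFml
  | .neg A => .neg (S.exactInterp A)
  | .and A B => .and (S.exactInterp A) (S.exactInterp B)
  | .or A B => .or (S.exactInterp A) (S.exactInterp B)
  | .imp A B => .imp (S.exactInterp A) (S.exactInterp B)
  | .box A => selfApp S.template (S.exactInterp A).code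

theorem isInterp_exactInterp (S : Pieces) : IsInterp S.provPred S.exactInterp :=
  ⟨fun _ => S.freeLt_selfApp_template _, rfl, fun _ => rfl, fun _ _ => rfl, fun _ _ => rfl,
    fun _ _ => rfl, fun _ => rfl⟩

theorem exactInterp_injective : Function.Injective S.exactInterp := by
  choose body hbody using S.exists_selfApp_template_eq
  intro A B h
  have var_ne_box (i : ℕ) (φ : AFml) : Nat.pair 8 i ≠ φ.code := (φ.code_ne_pair_eight i).symm
  induction A generalizing B <;> cases B <;>
    simp [exactInterp, botFml, hbody, numeral_injective.eq_iff, AFml.code_injective.eq_iff,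
      AFml.code_ne_pair_eight, var_ne_box] at h ⊢ <;>
    grind

theorem exactInterp_eq_selfApp {B : MFml} {φ : AFml}
    (h : S.exactInterp B = selfApp S.template φ.code) : ∃ C, B = .box C ∧ S.exactInterp C = φ := by
  obtain ⟨ψ, hψ⟩ := S.exists_selfApp_template_eq φ.code
  cases B with
  | var i => exact absurd (S.selfApp_template_injective h).symm (φ.code_ne_pair_eight i)
  | box C => exact ⟨C, rfl, AFml.code_injective (S.selfApp_template_injective h)⟩
  | bot | neg | and | or | imp => simp [exactInterp, botFml, hψ] at h

theorem exactInterp_eq_iterPred {k : ℕ} {B : MFml} {φ : AFml}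
    (h : S.exactInterp B = iterPred S.provPred k φ) :
    ∃ C, B = boxIter k C ∧ S.exactInterp C = φ := by
  induction k generalizing B with
  | zero => exact ⟨B, rfl, h⟩
  | succ k ih =>
    obtain ⟨C, rfl, hC⟩ := exactInterp_eq_selfApp h
    obtain ⟨D, rfl, hD⟩ := ih hC
    exact ⟨D, rfl, hD⟩

/-! ### Patterns of valuations -/

/-- The pattern `g` makes an instance of the predicate false if and only if it interprets a
subformula of `A` that is false under the valuation `v`. -/
def IsPatternOf (S : Pieces) (A : MFml) (v : MFml → Prop) (g : ℕ) : Prop :=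
  ∀ x, MemCode g x ↔ ∃ B, IsSub B A ∧ ¬ B.evalTC v ∧ S.exactInterp B = selfApp S.template x

theorem exists_isPatternOf (S : Pieces) (A : MFml) (v : MFml → Prop) :
    ∃ g, S.IsPatternOf A v g := by
  have hfin : (selfApp S.template ⁻¹' (S.exactInterp '' {B | IsSub B A ∧ ¬ B.evalTC v})).Finite :=
    (((finite_setOf_isSub A).subset fun _ => And.left).image _).preimage
      S.selfApp_template_injective.injOn
  obtain ⟨g, hg⟩ := exists_memCode hfin.toFinset
  exact ⟨g, fun x => by simp [hg, and_assoc]⟩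

theorem kleeneValue_selfApp_template (S : Pieces) (g n : ℕ) [Decidable (MemCode g n)] :
    kleeneValue (patternAtom S.template g) (selfApp S.template n) =
      if MemCode g n then 0 else 2 := by
  have isAtom : (selfApp S.template n).IsPropAtom := by
    obtain ⟨φ, hφ⟩ := S.exists_selfApp_template_eq n
    simp [hφ, AFml.IsPropAtom]
  rw [kleeneValue_of_isPropAtom isAtom, patternAtom_selfApp_template]
  congr

theorem kleeneValue_patternAtom_congr {Q : AFml} {g g' k : ℕ}
    (h : ∀ x ≤ k, MemCode g x ↔ MemCode g' x) {φ : AFml} (hφ : φ.code ≤ k) :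
    kleeneValue (patternAtom Q g) φ = kleeneValue (patternAtom Q g') φ := by
  refine kleeneValue_congr φ fun ψ hψ => ?_
  have : (∃ n < ψ.code + 1, ψ = selfApp Q n ∧ MemCode g n) ↔
      ∃ n < ψ.code + 1, ψ = selfApp Q n ∧ MemCode g' n :=
    exists_congr fun n => and_congr_right fun hn => and_congr_right fun _ => h n (by lia)
  classical
  rw [patternAtom, patternAtom]
  exact if_congr (or_congr_right this) rfl rfl

namespace IsPatternOf

variable {A : MFml} {v : MFml → Prop} {g : ℕ}

theorem memCode_iff (hg : S.IsPatternOf A v g) {B : MFml} (hB : IsSub B A) {x : ℕ}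
    (hx : S.exactInterp B = selfApp S.template x) : MemCode g x ↔ ¬ B.evalTC v := by
  rw [hg, ← hx]
  constructor
  · rintro ⟨C, -, hCv, hCB⟩
    rwa [← exactInterp_injective hCB]
  · exact fun hBv => ⟨B, hB, hBv, rfl⟩

open Classical in
theorem kleeneValue_exactInterp (hg : S.IsPatternOf A v g) {B : MFml} (hB : IsSub B A) :
    kleeneValue (patternAtom S.template g) (S.exactInterp B) = if B.evalTC v then 2 else 0 := by
  have atom {B x} (hB : IsSub B A) (hx : S.exactInterp B = selfApp S.template x) :
      kleeneValue (patternAtom S.template g) (S.exactInterp B) = if B.evalTC v then 2 else 0 := by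
    simp only [hx, kleeneValue_selfApp_template, hg.memCode_iff hB hx, ite_not]
  induction B with
  | var i => exact atom hB rfl
  | box B => exact atom hB rfl
  | bot => simp [exactInterp, MFml.evalTC, kleeneValue_of_isPropAtom (φ := botFml) trivial,
      patternAtom_botFml]
  | neg B ih =>
    simp only [exactInterp, kleeneValue, ih ((IsSub.refl B).neg.trans hB), MFml.evalTC]
    split_ifs <;> simp_all
  | and B C ihB ihC =>
    simp only [exactInterp, kleeneValue, ihB ((IsSub.refl B).andL.trans hB),
      ihC ((IsSub.refl C).andR.trans hB), MFml.evalTC]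
    split_ifs <;> simp_all
  | or B C ihB ihC =>
    simp only [exactInterp, kleeneValue, ihB ((IsSub.refl B).orL.trans hB),
      ihC ((IsSub.refl C).orR.trans hB), MFml.evalTC]
    split_ifs <;> simp_all
  | imp B C ihB ihC =>
    simp only [exactInterp, kleeneValue, ihB ((IsSub.refl B).impL.trans hB),
      ihC ((IsSub.refl C).impR.trans hB), MFml.evalTC]
    split_ifs <;> simp_all

theorem not_badPattern (hg : S.IsPatternOf A v g) {m p : ℕ}
    (hv : ∀ C, C.evalTC v → (boxIter (m + 1) C).evalTC v)
    (hp : ∀ x ≤ p.unpair.1, MemCode g x ↔ MemCode p.unpair.2 x) :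
    ¬ BadPattern m p S.template.code := by
  classical
  rintro ⟨_, x, _, hφp, hxp, hx, hmem, hr, hr0⟩
  obtain ⟨φ, rfl, rfl⟩ := (patternGraph_iff _ _ _ _).1 hr
  obtain rfl := (iterCode_iff _ _ _ _).1 hx
  obtain ⟨B, hBA, hBv, hB⟩ := (hg _).1 ((hp _ hxp).2 hmem)
  obtain ⟨C, rfl, rfl⟩ := exactInterp_eq_iterPred (k := m + 1) hB
  rw [← kleeneValue_patternAtom_congr hp hφp,
    hg.kleeneValue_exactInterp ((isSub_boxIter _ C).trans hBA)] at hr0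
  exact hBv (hv C (by simpa using hr0))

end IsPatternOf

/-! ### Soundness and completeness -/

namespace IsAdequate

variable {Γ : Set AFml} {m : ℕ} {A : MFml}

theorem proves_of_naProves (hS : S.IsAdequate Γ m) {f : MFml → AFml} (hf : IsInterp S.provPred f)
    (h : NAProves (m + 1) 0 A) : Proves Γ (f A) := by
  have ⟨_, _, _, _, _, himp, hbox⟩ := hf
  induction h with
  | taut h => exact completeness fun M hM ρ => (hf.evalTC_iff (hS.isPA hM) ρ _).1 (h _)
  | acc A =>
    rw [himp, hf.boxIter, hf.boxIter]
    exact completeness fun M hM ρ => hS.satIn_iterPred hM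
  | mp _ _ ih₁ ih₂ => exact .mp (himp _ _ ▸ ih₁) ih₂
  | nec _ ih =>
    rw [hbox]
    exact completeness fun M hM => ((hS.isProvPred.2 _).1 ih).satIn (hS.isPA hM)
  | ros h => exact absurd ⟨_, rfl⟩ h.evalTC_box

theorem naProves_of_proves (hS : S.IsAdequate Γ m) (A : MFml) (hA : Proves Γ (S.exactInterp A)) :
    NAProves (m + 1) 0 A := by
  by_contra hnot
  obtain ⟨v, hv, hvA⟩ := exists_valuation hnot
  obtain ⟨g, hg⟩ := S.exists_isPatternOf A v
  have not_theorem {x : ℕ} (hx : MemCode g x) : ¬ TheoremCode Γ x := by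
    rintro ⟨φ, rfl, hφ⟩
    obtain ⟨B, hBA, hBv, hB⟩ := (hg _).1 hx
    obtain ⟨C, rfl, rfl⟩ := exactInterp_eq_selfApp hB
    have : sizeOf C < sizeOf A := lt_of_lt_of_le (by simp) hBA.sizeOf_le
    exact hBv (hv _ (.nec (hS.naProves_of_proves C hφ)))
  have refutes : Refutes (TheoremCode Γ) (Nat.pair 0 g) S.template.code := by
    refine ⟨_, theoremCode_code.2 hA, (patternGraph_iff _ _ _ _).2 ⟨_, rfl, ?_⟩⟩
    rw [Nat.unpair_pair, hg.kleeneValue_exactInterp (.refl A), if_neg hvA]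
  obtain ⟨t, ht⟩ := (hS.refutes _ _).1 refutes
  refine hS.not_isTrigger_stdStr (Nat.pair (Nat.pair 0 g) t)
    ⟨ht, fun x _ hx ⟨_, s, _, hs⟩ => ?_, fun b _ hb => ?_⟩
  · rw [hS.mem, Nat.unpair_pair, Nat.unpair_pair] at hx
    exact not_theorem hx ((hS.proof x).2 ⟨s, hs⟩)
  · by_contra! hagree
    refine hg.not_badPattern (fun C => hv _ (.acc C)) (fun x hx => ?_)
      ((hS.bad b.unpair.1 _).2 ⟨b.unpair.2, by rwa [Nat.pair_unpair]⟩)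
    have hxb : x ≤ b := hx.trans ((Nat.unpair_left_le _).trans (Nat.unpair_left_le _))
    simpa only [hS.mem, Nat.unpair_pair] using hagree x hxb ((hS.below _ _).2 hx)
termination_by sizeOf A

end IsAdequate

end Pieces

theorem statement_11_general {Γ : Set AFml} (hext : PA ⊆ Γ) (hcons : ¬ Proves Γ botFml)
    {p : ℕ → Prop} (hp : REPred p) (hΓ : ∀ φ : AFml, φ ∈ Γ ↔ p φ.code) (hill : ¬ Sigma1Sound Γ)
    {m : ℕ} (hm : 1 ≤ m) :
    ∃ P : AFml, IsSigma1 P ∧ IsProvPred Γ P ∧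
      (∀ (A : MFml) (f : MFml → AFml), IsInterp P f → NAProves m 0 A → Proves Γ (f A)) ∧
      (∃ f : MFml → AFml, IsInterp P f ∧ ∀ A : MFml, NAProves m 0 A ↔ Proves Γ (f A)) := by
  obtain ⟨m, rfl⟩ := Nat.exists_eq_add_of_le' hm
  obtain ⟨S, hS⟩ := Pieces.exists_isAdequate hext hcons
    (sigma1Pred_theoremCode (.of_rePred hp) hΓ) hill m
  have hf := S.isInterp_exactInterp
  exact ⟨S.provPred, S.isSigma1_provPred, hS.isProvPred, fun _ _ => hS.proves_of_naProves,
    S.exactInterp, hf, fun A => ⟨hS.proves_of_naProves hf, hS.naProves_of_proves A⟩⟩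

/-- Theorem 4.7: Suppose `T` is `Σ₁`-ill and `m ≥ 1`. Then
there is a `Σ₁` provability predicate `PR_T(x)` of `T` such that (1) `N⁺A_{m,0}` is sound for
every arithmetical interpretation based on `PR_T(x)`, and (2) some arithmetical interpretation
based on `PR_T(x)` is exact for `N⁺A_{m,0}`. -/
theorem statement_11 (Tax : Set AFml) (hext : PA ⊆ Tax)
    (hcons : ¬ Proves Tax botFml) (hpr : PrAxiomatized Tax)
    (hill : ¬ Sigma1Sound Tax)
    (m : ℕ) (hm : 1 ≤ m) :
    ∃ P : AFml, IsSigma1 P ∧ IsProvPred Tax P ∧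
      (∀ (A : MFml) (f : MFml → AFml), IsInterp P f → NAProves m 0 A → Proves Tax (f A)) ∧
      (∃ f : MFml → AFml, IsInterp P f ∧ ∀ A : MFml, NAProves m 0 A ↔ Proves Tax (f A)) := by
  obtain ⟨p, hp, hTax⟩ := hpr
  exact statement_11_general hext hcons
    (ComputablePred.computable_iff.2 ⟨p, hp.to_comp, rfl⟩).to_re hTax hill hm

end PLN
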